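/- For every natural number m ≥ 2 there exists a constant C > 0 such that for every finite field F of odd order q, writing G = Sp_{2m}(F), there exists a subset A ⊆ G with |A| ≤ 2 if m is even and |A| ≤ 3 if m is odd, such that the number of y ∈ G for which some x ∈ A makes {x, y} invariably generate G is at least (1 − C/q) · |G|. -/

import Mathlib

/-- `{x, y}` invariably generates `G`: for all `g, h`, the conjugates
`g * x * g⁻¹` and `h * y * h⁻¹` generate `G`. -/
def InvGen {G : Type*} [Group G] (x y : G) : Prop :=
  ∀ g h : G, Subgroup.closure {g * x * g⁻¹, h * y * h⁻¹} = ⊤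

open Matrix

/-- index type -/
abbrev Ix (m : ℕ) := Fin m ⊕ Fin m
/-- square matrices -/
abbrev Mt (m : ℕ) (F : Type) := Matrix (Ix m) (Ix m) F

section basics
variable {m : ℕ} {F : Type} [Field F]

/-- the symplectic form -/
def SB (u v : Ix m → F) : F := u ⬝ᵥ (J (Fin m) F *ᵥ v)

lemma SB_add_left (u v w : Ix m → F) : SB (u + v) w = SB u w + SB v w := by
  simp [SB, add_dotProduct]
lemma SB_add_right (u v w : Ix m → F) : SB u (v + w) = SB u v + SB u w := by
  simp [SB, mulVec_add]
lemma SB_smul_left (a : F) (u w : Ix m → F) : SB (a • u) w = a * SB u w := by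
  simp [SB]
lemma SB_smul_right (a : F) (u w : Ix m → F) : SB u (a • w) = a * SB u w := by
  simp [SB, mulVec_smul]
lemma SB_sub_left (u v w : Ix m → F) : SB (u - v) w = SB u w - SB v w := by
  simp [SB, sub_dotProduct]
lemma SB_sub_right (u v w : Ix m → F) : SB u (v - w) = SB u v - SB u w := by
  simp [SB, mulVec_sub]

lemma SB_eq (u v : Ix m → F) :
    SB u v = ∑ i, (u (Sum.inr i) * v (Sum.inl i) - u (Sum.inl i) * v (Sum.inr i)) := by
  simp only [SB, J, dotProduct, fromBlocks_mulVec, Fintype.sum_sum_type]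
  simp [Matrix.neg_mulVec, Finset.sum_sub_distrib]
  ring

lemma SB_swap (u v : Ix m → F) : SB u v = - SB v u := by
  rw [SB_eq, SB_eq, ← Finset.sum_neg_distrib]
  refine Finset.sum_congr rfl fun i _ => by ring

lemma SB_self (u : Ix m → F) : SB u u = 0 := by
  rw [SB_eq]; exact Finset.sum_eq_zero fun i _ => by ring

lemma SB_single_inl (u : Ix m → F) (i : Fin m) : SB u (Pi.single (Sum.inl i) 1) = u (Sum.inr i) := by
  rw [SB_eq]; simp [Pi.single_apply]
lemma SB_single_inr (u : Ix m → F) (i : Fin m) : SB u (Pi.single (Sum.inr i) 1) = - u (Sum.inl i) := by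
  rw [SB_eq]; simp [Pi.single_apply]

lemma SB_nondeg (u : Ix m → F) (h : ∀ v, SB u v = 0) : u = 0 := by
  ext i
  rcases i with i | i
  · have := h (Pi.single (Sum.inr i) 1)
    rw [SB_single_inr] at this; simpa using this
  · have := h (Pi.single (Sum.inl i) 1)
    rw [SB_single_inl] at this; simpa using this

lemma SB_mulVec (A C : Mt m F) (u v : Ix m → F) :
    SB (A *ᵥ u) (C *ᵥ v) = u ⬝ᵥ ((Aᵀ * J (Fin m) F * C) *ᵥ v) := by
  simp only [SB, ← mulVec_mulVec, Matrix.mul_assoc]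
  rw [dotProduct_mulVec u, vecMul_transpose]

lemma mem_Sp_iff (A : Mt m F) : A ∈ symplecticGroup (Fin m) F ↔
    ∀ u v, SB (A *ᵥ u) (A *ᵥ v) = SB u v := by
  rw [SymplecticGroup.mem_iff']
  constructor
  · intro h u v
    rw [SB_mulVec, h]; rfl
  · intro h
    ext i j
    have := h (Pi.single i 1) (Pi.single j 1)
    rw [SB_mulVec] at this
    simpa [SB] using this

lemma SB_Sp (g : symplecticGroup (Fin m) F) (u v : Ix m → F) :
    SB ((g : Mt m F) *ᵥ u) ((g : Mt m F) *ᵥ v) = SB u v := (mem_Sp_iff _).1 g.2 u v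

/-- transvection matrix -/
def tvM {R : Type*} [CommRing R] (v : Ix m → R) (s : R) : Matrix (Ix m) (Ix m) R :=
  1 + s • vecMulVec v (v ᵥ* J (Fin m) R)

lemma tvM_mulVec (v : Ix m → F) (s : F) (x : Ix m → F) :
    tvM v s *ᵥ x = x + (s * SB v x) • v := by
  simp only [tvM, add_mulVec, one_mulVec, smul_mulVec]
  congr 1
  rw [vecMulVec_mulVec, ← dotProduct_mulVec]
  ext i; simp [SB]; ring

lemma tvM_mem (v : Ix m → F) (s : F) : tvM v s ∈ symplecticGroup (Fin m) F := by
  rw [mem_Sp_iff]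
  intro x y
  simp only [tvM_mulVec, SB_add_left, SB_add_right, SB_smul_left, SB_smul_right, SB_self]
  rw [SB_swap x v]; ring

/-- transvection -/
def tv (v : Ix m → F) (s : F) : symplecticGroup (Fin m) F := ⟨tvM v s, tvM_mem v s⟩

lemma tv_mulVec (v : Ix m → F) (s : F) (x : Ix m → F) :
    (tv v s : Mt m F) *ᵥ x = x + (s * SB v x) • v := tvM_mulVec v s x

lemma tv_zero (v : Ix m → F) : tv v 0 = 1 := by
  apply Subtype.ext; simp [tv, tvM]

lemma Sp_ext {g h : symplecticGroup (Fin m) F} (H : ∀ x, (g : Mt m F) *ᵥ x = (h : Mt m F) *ᵥ x) : g = h := by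
  apply Subtype.ext
  exact Matrix.ext_of_mulVec_single fun i => H _

lemma tv_mul (v : Ix m → F) (s t : F) : tv v s * tv v t = tv v (s + t) := by
  apply Sp_ext
  intro x
  rw [Submonoid.coe_mul, ← mulVec_mulVec, tv_mulVec, tv_mulVec, tv_mulVec, SB_add_right,
    SB_smul_right, SB_self]
  simp [add_mul, add_smul]
  abel

lemma tv_conj (g : symplecticGroup (Fin m) F) (v : Ix m → F) (s : F) :
    g * tv v s * g⁻¹ = tv ((g : Mt m F) *ᵥ v) s := by
  rw [mul_inv_eq_iff_eq_mul]
  apply Sp_ext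
  intro x
  simp only [Submonoid.coe_mul, ← mulVec_mulVec, tv_mulVec, mulVec_add, mulVec_smul, SB_Sp]

lemma tv_smul (v : Ix m → F) (a s : F) : tv (a • v) s = tv v (a ^ 2 * s) := by
  apply Sp_ext
  intro x
  rw [tv_mulVec, tv_mulVec, SB_smul_left, smul_smul]
  ring_nf

/-- one transvection moving a to b -/
lemma tv_move (a b : Ix m → F) (h : SB a b ≠ 0) :
    (tv (b - a) (SB b a)⁻¹ : Mt m F) *ᵥ a = b := by
  have : SB b a ≠ 0 := by rw [SB_swap]; simpa using h
  rw [tv_mulVec, SB_sub_left, SB_self]; simp [this]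

end basics

section gen
variable {m : ℕ} {F : Type} [Field F]

/-- coordinates below `k` vanish -/
def Perp (k : ℕ) (v : Ix m → F) : Prop := ∀ i : Fin m, i.1 < k → v (Sum.inl i) = 0 ∧ v (Sum.inr i) = 0

lemma Perp.add {k : ℕ} {v w : Ix m → F} (hv : Perp k v) (hw : Perp k w) : Perp k (v + w) := by
  intro i hi; simp [hv i hi, hw i hi]
lemma Perp.sub {k : ℕ} {v w : Ix m → F} (hv : Perp k v) (hw : Perp k w) : Perp k (v - w) := by
  intro i hi; simp [hv i hi, hw i hi]
lemma Perp.single_inl {k : ℕ} {i : Fin m} (h : k ≤ i.1) : Perp k (Pi.single (Sum.inl i) (1:F)) := by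
  intro j hj
  have : j ≠ i := by rintro rfl; omega
  simp [Pi.single_apply, this]
lemma Perp.single_inr {k : ℕ} {i : Fin m} (h : k ≤ i.1) : Perp k (Pi.single (Sum.inr i) (1:F)) := by
  intro j hj
  have : j ≠ i := by rintro rfl; omega
  simp [Pi.single_apply, this]

lemma Perp.exists_ne {k : ℕ} {a : Ix m → F} (ha : Perp k a) (h0 : a ≠ 0) :
    ∃ c, Perp k c ∧ SB a c ≠ 0 := by
  obtain ⟨i, hi⟩ := Function.ne_iff.1 h0
  rcases i with i | i
  · have hk : k ≤ i.1 := by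
      by_contra h; exact hi (ha i (by omega)).1
    exact ⟨_, Perp.single_inr hk, by rw [SB_single_inr]; simpa using hi⟩
  · have hk : k ≤ i.1 := by
      by_contra h; exact hi (ha i (by omega)).2
    exact ⟨_, Perp.single_inl hk, by rw [SB_single_inl]; simpa using hi⟩

lemma exists_mid {k : ℕ} {a b : Ix m → F} (ha : Perp k a) (hb : Perp k b) (ha0 : a ≠ 0)
    (hb0 : b ≠ 0) : ∃ c, Perp k c ∧ SB a c ≠ 0 ∧ SB c b ≠ 0 := by
  obtain ⟨c, hc, hac⟩ := ha.exists_ne ha0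
  obtain ⟨d, hd, hbd⟩ := hb.exists_ne hb0
  by_cases h1 : SB c b = 0
  · by_cases h2 : SB a d = 0
    · refine ⟨c + d, hc.add hd, ?_, ?_⟩
      · rw [SB_add_right, h2]; simpa using hac
      · rw [SB_add_left, h1, SB_swap]; simpa using hbd
    · exact ⟨d, hd, h2, by rw [SB_swap]; simpa using hbd⟩
  · exact ⟨c, hc, hac, h1⟩

lemma move_two {k : ℕ} {a b : Ix m → F} (ha : Perp k a) (hb : Perp k b) (ha0 : a ≠ 0)
    (hb0 : b ≠ 0) : ∃ v w : Ix m → F, ∃ s t : F, Perp k v ∧ Perp k w ∧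
      ((tv v s * tv w t : symplecticGroup (Fin m) F) : Mt m F) *ᵥ a = b := by
  obtain ⟨c, hc, h1, h2⟩ := exists_mid ha hb ha0 hb0
  refine ⟨b - c, c - a, (SB b c)⁻¹, (SB c a)⁻¹, hb.sub hc, hc.sub ha, ?_⟩
  rw [Submonoid.coe_mul, ← mulVec_mulVec, tv_move a c h1, tv_move c b h2]

/-- fixes the first k hyperbolic pairs -/
def Fixk (k : ℕ) (g : symplecticGroup (Fin m) F) : Prop :=
  ∀ i : Fin m, i.1 < k → (g : Mt m F) *ᵥ Pi.single (Sum.inl i) 1 = Pi.single (Sum.inl i) 1 ∧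
    (g : Mt m F) *ᵥ Pi.single (Sum.inr i) 1 = Pi.single (Sum.inr i) 1

lemma Fixk.tv {k : ℕ} {v : Ix m → F} (hv : Perp k v) (s : F) : Fixk k (tv v s) := by
  intro i hi
  rw [tv_mulVec, tv_mulVec, SB_single_inl, SB_single_inr, (hv i hi).1, (hv i hi).2]; simp

lemma Fixk.mul {k : ℕ} {g h : symplecticGroup (Fin m) F} (hg : Fixk k g) (hh : Fixk k h) :
    Fixk k (g * h) := by
  intro i hi
  rw [Submonoid.coe_mul, ← mulVec_mulVec, ← mulVec_mulVec, (hh i hi).1, (hh i hi).2]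
  exact hg i hi

lemma Fixk.perp {k : ℕ} {g : symplecticGroup (Fin m) F} (hg : Fixk k g) {v : Ix m → F}
    (hv : Perp k v) : Perp k ((g : Mt m F) *ᵥ v) := by
  intro i hi
  have h1 := SB_Sp g v (Pi.single (Sum.inl i) 1)
  have h2 := SB_Sp g v (Pi.single (Sum.inr i) 1)
  rw [(hg i hi).1, SB_single_inl, SB_single_inl] at h1
  rw [(hg i hi).2, SB_single_inr, SB_single_inr] at h2
  rw [h1, neg_injective h2]
  exact hv i hi

lemma gen_step {k : ℕ} (hk : k < m) (g : symplecticGroup (Fin m) F) (hg : Fixk k g) :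
    ∃ l : List ((Ix m → F) × F), l.length = 4 ∧
      Fixk (k + 1) ((l.map fun p => tv p.1 p.2).prod * g) := by
  set e : Ix m → F := Pi.single (Sum.inl ⟨k, hk⟩) 1 with he
  set f : Ix m → F := Pi.single (Sum.inr ⟨k, hk⟩) 1 with hf
  have pe : Perp k e := Perp.single_inl le_rfl
  have pf : Perp k f := Perp.single_inr le_rfl
  have e0 : e ≠ 0 := by simp [he]
  have hef : SB e f = -1 := by rw [hf, SB_single_inr]; simp [he]
  have ge0 : (g : Mt m F) *ᵥ e ≠ 0 := by
    intro h
    have := SB_Sp g e f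
    rw [h, hef] at this; simp [SB] at this
  obtain ⟨v, w, s, t, hv, hw, hvw⟩ := move_two (hg.perp pe) pe ge0 e0
  set g' := tv v s * tv w t * g with hg'
  have fg' : Fixk k g' := ((Fixk.tv hv s).mul (Fixk.tv hw t)).mul hg
  have g'e : (g' : Mt m F) *ᵥ e = e := by
    rw [hg', Submonoid.coe_mul, ← mulVec_mulVec, hvw]
  set b := (g' : Mt m F) *ᵥ f with hb
  have pb : Perp k b := fg'.perp pf
  have heb : SB e b = -1 := by
    have := SB_Sp g' e f
    rwa [g'e, hef] at this
  have key : ∃ v' w' : Ix m → F, ∃ s' t' : F, Perp k v' ∧ Perp k w' ∧ SB v' e = 0 ∧ SB w' e = 0 ∧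
      ((tv v' s' * tv w' t' : symplecticGroup (Fin m) F) : Mt m F) *ᵥ b = f := by
    by_cases h : SB b f = 0
    · refine ⟨f - (e + f), (e + f) - b, (SB f (e + f))⁻¹, (SB (e + f) b)⁻¹,
        pf.sub (pe.add pf), (pe.add pf).sub pb, ?_, ?_, ?_⟩
      · rw [SB_sub_left, SB_add_left, SB_self]; ring
      · rw [SB_sub_left, SB_add_left, SB_self, SB_swap f e, SB_swap b e, hef, heb]; ring
      · rw [Submonoid.coe_mul, ← mulVec_mulVec, tv_move b (e + f), tv_move (e + f) f]
        · rw [SB_add_left, hef, SB_self]; simp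
        · rw [SB_add_right, h, SB_swap b e, heb]; simp
    · refine ⟨0, f - b, 0, (SB f b)⁻¹, fun i hi => by simp, pf.sub pb, by simp [SB], ?_, ?_⟩
      · rw [SB_sub_left, SB_swap f e, SB_swap b e, hef, heb]; ring
      · rw [tv_zero, one_mul, tv_move b f h]
  obtain ⟨v', w', s', t', hv', hw', hve, hwe, hfin⟩ := key
  refine ⟨[(v', s'), (w', t'), (v, s), (w, t)], rfl, ?_⟩
  have heq : (([(v', s'), (w', t'), (v, s), (w, t)].map fun p => tv p.1 p.2).prod * g)
      = tv v' s' * tv w' t' * g' := by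
    simp [hg', mul_assoc]
  rw [heq]
  have F1 : Fixk k (tv v' s' * tv w' t' * g') := ((Fixk.tv hv' s').mul (Fixk.tv hw' t')).mul fg'
  intro i hi
  rcases Nat.lt_succ_iff_lt_or_eq.1 hi with h | h
  · exact F1 i h
  · have : i = ⟨k, hk⟩ := Fin.ext h
    subst this
    constructor
    · rw [Submonoid.coe_mul, ← mulVec_mulVec, ← he, g'e, Submonoid.coe_mul, ← mulVec_mulVec,
        tv_mulVec w', hwe]
      simp only [mul_zero, zero_smul, add_zero]
      rw [tv_mulVec, hve]; simp
    · rw [Submonoid.coe_mul, ← mulVec_mulVec, ← hf, ← hb, hfin]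

lemma gen_aux (g : symplecticGroup (Fin m) F) (k : ℕ) (hk : k ≤ m) :
    ∃ l : List ((Ix m → F) × F), l.length = 4 * k ∧
      Fixk k ((l.map fun p => tv p.1 p.2).prod * g) := by
  induction k with
  | zero => exact ⟨[], rfl, fun i hi => by omega⟩
  | succ k ih =>
    obtain ⟨l, hl, hF⟩ := ih (by omega)
    obtain ⟨l', hl', hF'⟩ := gen_step (by omega) _ hF
    refine ⟨l' ++ l, by simp [hl, hl']; ring, ?_⟩
    rw [List.map_append, List.prod_append, mul_assoc]
    exact hF'

/-- bounded generation by transvections -/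
lemma tv_gen (g : symplecticGroup (Fin m) F) :
    ∃ p : Fin (4 * m) → (Ix m → F) × F, g = (List.ofFn fun k => tv (p k).1 (p k).2).prod := by
  obtain ⟨l, hl, hF⟩ := gen_aux g⁻¹ m le_rfl
  have h1 : (l.map fun p => tv p.1 p.2).prod * g⁻¹ = 1 := by
    apply Subtype.ext
    apply Matrix.ext_of_mulVec_single
    intro i
    rcases i with i | i
    · rw [Submonoid.coe_one, one_mulVec]; exact (hF i i.2).1
    · rw [Submonoid.coe_one, one_mulVec]; exact (hF i i.2).2
  refine ⟨fun k => l.get (k.cast hl.symm), ?_⟩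
  rw [mul_inv_eq_one] at h1
  rw [← h1]
  congr 1
  apply List.ext_get <;> simp [hl]

lemma tv_closure (H : Subgroup (symplecticGroup (Fin m) F)) (h : ∀ v s, tv v s ∈ H) : H = ⊤ := by
  rw [eq_top_iff]
  intro g _
  obtain ⟨p, rfl⟩ := tv_gen g
  apply Subgroup.list_prod_mem
  intro x hx
  rw [List.mem_ofFn] at hx
  obtain ⟨k, rfl⟩ := hx
  exact h _ _

end gen

section idx
variable {m : ℕ} {F : Type} [Field F] [Fintype F]

lemma pow_factorial_mem_normalCore {G : Type*} [Group G] [Finite G] (H : Subgroup G) (n : ℕ)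
    (hn : H.index ≤ n) (g : G) : g ^ n.factorial ∈ H.normalCore := by
  rw [Subgroup.normalCore_eq_ker, MonoidHom.mem_ker, map_pow]
  classical
  have h1 : Nat.card (Equiv.Perm (G ⧸ H)) ∣ n.factorial := by
    rw [Nat.card_perm]
    exact Nat.factorial_dvd_factorial hn
  obtain ⟨c, hc⟩ := h1
  rw [hc, pow_mul, pow_card_eq_one', one_pow]

/-- subgroups of bounded index are everything for large q -/
lemma index_top (n : ℕ) (hq : 2 * n.factorial + 1 < Fintype.card F)
    (H : Subgroup (symplecticGroup (Fin m) F)) (hH : H.index ≤ n) : H = ⊤ := by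
  classical
  set e := n.factorial with he
  have hex : ∃ a : F, a ≠ 0 ∧ a ^ (2 * e) ≠ 1 := by
    obtain ⟨a, ha⟩ := IsCyclic.exists_ofOrder_eq_natCard (α := Fˣ)
    refine ⟨a, a.ne_zero, fun h => ?_⟩
    have h2 : a ^ (2 * e) = 1 := by ext; simpa using h
    have h3 := orderOf_dvd_of_pow_eq_one h2
    rw [ha, Nat.card_eq_fintype_card, Fintype.card_units] at h3
    have := Nat.le_of_dvd (by have := Nat.factorial_pos n; omega) h3
    omega
  obtain ⟨a, ha0, ha⟩ := hex
  have key : ∀ v s, tv v s ∈ H.normalCore := by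
    intro v s
    by_cases hv : v = 0
    · have : tv v s = (1 : symplecticGroup (Fin m) F) := by
        apply Sp_ext; intro x; rw [tv_mulVec, hv]; simp
      rw [this]; exact one_mem _
    have hav : a • v ≠ 0 := smul_ne_zero ha0 hv
    obtain ⟨v1, w1, s1, t1, _, _, h⟩ := move_two (k := 0) (a := v) (b := a • v)
      (fun i hi => by omega) (fun i hi => by omega) hv hav
    generalize tv v1 s1 * tv w1 t1 = t at h
    have hpow : ∀ j : ℕ, ((t ^ j : symplecticGroup (Fin m) F) : Mt m F) *ᵥ v = a ^ j • v := by
      intro j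
      induction j with
      | zero => simp
      | succ j ih =>
        rw [pow_succ, Submonoid.coe_mul, ← mulVec_mulVec, h, mulVec_smul, ih, smul_smul]
        ring_nf
    have ht := pow_factorial_mem_normalCore H n hH t
    rw [← he] at ht
    have hcomm : ∀ r, tv v ((a ^ (2 * e) - 1) * r) ∈ H.normalCore := by
      intro r
      have h1 : t ^ e * (tv v r * (t ^ e)⁻¹ * (tv v r)⁻¹) ∈ H.normalCore :=
        mul_mem ht ((Subgroup.normalCore_normal H).conj_mem _ (inv_mem ht) _)
      have h2 : t ^ e * (tv v r * (t ^ e)⁻¹ * (tv v r)⁻¹) = tv v ((a ^ (2 * e) - 1) * r) := by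
        rw [← mul_assoc, ← mul_assoc, tv_conj, hpow, tv_smul]
        rw [mul_inv_eq_iff_eq_mul, tv_mul]
        congr 1; ring
      rwa [h2] at h1
    have := hcomm ((a ^ (2 * e) - 1)⁻¹ * s)
    rwa [← mul_assoc, mul_inv_cancel₀ (sub_ne_zero.2 ha), one_mul] at this
  exact tv_closure H fun v s => H.normalCore_le (key v s)

end idx

section deg

lemma totalDegree_aeval_le_one {σ τ R : Type*} [CommRing R] (U : MvPolynomial σ ℤ)
    (f : σ → MvPolynomial τ R) (hf : ∀ i, (f i).totalDegree ≤ 1) :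
    (MvPolynomial.aeval f U).totalDegree ≤ U.totalDegree := by
  rw [MvPolynomial.aeval_def, MvPolynomial.eval₂_eq]
  apply MvPolynomial.totalDegree_finsetSum_le
  intro d hd
  have h1 : (algebraMap ℤ (MvPolynomial τ R) (U.coeff d)).totalDegree = 0 := by
    have : algebraMap ℤ (MvPolynomial τ R) (U.coeff d) = MvPolynomial.C ((U.coeff d : ℤ) : R) := by
      simp
    rw [this, MvPolynomial.totalDegree_C]
  refine (MvPolynomial.totalDegree_mul _ _).trans ?_
  rw [h1, zero_add]
  refine (MvPolynomial.totalDegree_finsetProd _ _).trans ?_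
  refine le_trans ?_ (MvPolynomial.le_totalDegree hd)
  refine Finset.sum_le_sum fun i _ => ?_
  refine (MvPolynomial.totalDegree_pow _ _).trans ?_
  nlinarith [hf i]

lemma natDegree_aeval_le_one {σ R : Type*} [CommRing R] (U : MvPolynomial σ ℤ)
    (f : σ → Polynomial R) (hf : ∀ i, (f i).natDegree ≤ 1) :
    (MvPolynomial.aeval f U).natDegree ≤ U.totalDegree := by
  rw [MvPolynomial.aeval_def, MvPolynomial.eval₂_eq]
  apply Polynomial.natDegree_sum_le_of_forall_le
  intro d hd
  have h1 : (algebraMap ℤ (Polynomial R) (U.coeff d)).natDegree = 0 := by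
    simp
  refine Polynomial.natDegree_mul_le.trans ?_
  rw [h1, zero_add]
  refine (Polynomial.natDegree_prod_le _ _).trans ?_
  refine le_trans ?_ (MvPolynomial.le_totalDegree hd)
  refine Finset.sum_le_sum fun i _ => ?_
  refine Polynomial.natDegree_pow_le.trans ?_
  nlinarith [hf i]

end deg

section counting

/-- parameters of a product of transvections -/
abbrev Tp (m : ℕ) := Fin (4 * m) × (Ix m ⊕ Unit)

/-- product of transvections -/
def tvprod {m : ℕ} {R : Type*} [CommRing R] (t : Tp m → R) : Matrix (Ix m) (Ix m) R :=
  (List.ofFn fun k : Fin (4 * m) => tvM (fun i => t (k, Sum.inl i)) (t (k, Sum.inr ()))).prod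

lemma tvM_map {m : ℕ} {R S : Type*} [CommRing R] [CommRing S] (f : R →+* S) (v : Ix m → R) (s : R) :
    (tvM v s).map f = tvM (fun i => f (v i)) (f s) := by
  have hJ : ∀ i j, f (J (Fin m) R i j) = J (Fin m) S i j := by
    intro i j
    rcases i with i | i <;> rcases j with j | j <;> simp [J, one_apply]
  ext i j
  simp [tvM, one_apply, vecMulVec_apply, vecMul, dotProduct, hJ]

lemma tvprod_map {m : ℕ} {R S : Type*} [CommRing R] [CommRing S] (f : R →+* S) (t : Tp m → R) :
    (tvprod t).map f = tvprod (fun i => f (t i)) := by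
  have : ∀ l : List (Matrix (Ix m) (Ix m) R), l.prod.map f = (l.map fun A => A.map f).prod := by
    intro l
    have := map_list_prod (f.mapMatrix (m := Ix m)) l
    rw [RingHom.mapMatrix_apply] at this; exact this
  rw [tvprod, tvprod, this, List.map_ofFn]
  congr 2
  ext1 k
  exact tvM_map f _ _

lemma counting {m : ℕ} (P0 : MvPolynomial (Ix m × Ix m) ℤ) : ∃ D : ℕ, ∀ (F : Type) [Field F] [Fintype F],
    (∃ g0 : symplecticGroup (Fin m) F,
      MvPolynomial.aeval (fun p : Ix m × Ix m => (g0 : Mt m F) p.1 p.2) P0 ≠ 0) →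
    Fintype.card F * Nat.card {g : symplecticGroup (Fin m) F //
      MvPolynomial.aeval (fun p : Ix m × Ix m => (g : Mt m F) p.1 p.2) P0 = 0} ≤
    D * Nat.card (symplecticGroup (Fin m) F) := by
  classical
  let S := MvPolynomial ((Ix m × Ix m) ⊕ Tp m) ℤ
  let YM : Matrix (Ix m) (Ix m) S := Matrix.of fun i j => MvPolynomial.X (Sum.inl (i, j))
  let TM : Matrix (Ix m) (Ix m) S := tvprod fun t => MvPolynomial.X (Sum.inr t)
  let U : S := MvPolynomial.aeval (fun p : Ix m × Ix m => (YM * TM) p.1 p.2) P0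
  refine ⟨U.totalDegree, ?_⟩
  intro F _ _ ⟨g0, hg0⟩
  have hfin : Finite (symplecticGroup (Fin m) F) := inferInstance
  let _ : Fintype (symplecticGroup (Fin m) F) := Fintype.ofFinite _
  set ev : Mt m F → F := fun g => MvPolynomial.aeval (fun p : Ix m × Ix m => g p.1 p.2) P0 with hev
  let e : Tp m ≃ Fin (Fintype.card (Tp m)) := Fintype.equivFin _
  set N := Fintype.card (Tp m) with hN
  let u : (Fin N → F) → symplecticGroup (Fin m) F := fun t =>
    (List.ofFn fun k : Fin (4 * m) => tv (fun i => t (e (k, Sum.inl i))) (t (e (k, Sum.inr ())))).prod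
  have hu : ∀ t, (u t : Mt m F) = tvprod (fun i => t (e i)) := by
    intro t
    have := map_list_prod ((symplecticGroup (Fin m) F).subtype)
      (List.ofFn fun k : Fin (4 * m) => tv (fun i => t (e (k, Sum.inl i))) (t (e (k, Sum.inr ()))))
    rw [List.map_ofFn] at this
    exact this
  -- the polynomial
  let Q : symplecticGroup (Fin m) F → MvPolynomial (Fin N) F := fun y =>
    MvPolynomial.aeval (Sum.elim (fun p => MvPolynomial.C ((y : Mt m F) p.1 p.2))
      (fun t => MvPolynomial.X (e t))) U
  have hQd : ∀ y, (Q y).totalDegree ≤ U.totalDegree := by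
    intro y
    apply totalDegree_aeval_le_one
    rintro (p | t)
    · simp
    · simp
  have hQe : ∀ y t, MvPolynomial.eval t (Q y) = ev (y * u t : symplecticGroup (Fin m) F) := by
    intro y t
    let φ : S →ₐ[ℤ] F := MvPolynomial.aeval
      (Sum.elim (fun p => (y : Mt m F) p.1 p.2) (fun i => t (e i)))
    have h1 : MvPolynomial.eval t (Q y) = φ U := by
      have : ((MvPolynomial.eval t).toIntAlgHom.comp (MvPolynomial.aeval
        (Sum.elim (fun p => MvPolynomial.C ((y : Mt m F) p.1 p.2))
        (fun t => MvPolynomial.X (e t))))) = φ := by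
        apply MvPolynomial.algHom_ext
        rintro (p | t) <;> simp [φ]
      exact DFunLike.congr_fun this U
    rw [h1]
    have h2 : φ U = MvPolynomial.aeval (fun p => φ ((YM * TM) p.1 p.2)) P0 := by
      simp only [U]
      rw [← AlgHom.comp_apply]
      congr 1
      apply MvPolynomial.algHom_ext
      intro p; simp
    rw [h2]
    have h3 : ∀ i j, φ ((YM * TM) i j) = ((y * u t : symplecticGroup (Fin m) F) : Mt m F) i j := by
      intro i j
      have h4 : (YM * TM).map φ.toRingHom = (y : Mt m F) * (u t : Mt m F) := by
        rw [Matrix.map_mul, hu]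
        congr 1
        · ext i j; simp only [YM, φ, Matrix.map_apply, Matrix.of_apply]
          exact MvPolynomial.aeval_X _ _
        · simp only [TM]; rw [tvprod_map]
          congr 1
          ext i; exact MvPolynomial.aeval_X _ _
      exact congrFun (congrFun h4 i) j
    simp only [h3]
    rfl
  have hQ0 : ∀ y, Q y ≠ 0 := by
    intro y h
    obtain ⟨p, hp⟩ := tv_gen (y⁻¹ * g0)
    let t : Fin N → F := fun i => Sum.elim (fun j => (p (e.symm i).1).1 j) (fun _ => (p (e.symm i).1).2) (e.symm i).2
    have h1 := hQe y t
    have : u t = y⁻¹ * g0 := by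
      rw [hp]; simp [u, t]
    rw [this, mul_inv_cancel_left, h] at h1
    exact hg0 (by simpa using h1.symm)
  set q := Fintype.card F with hq
  have hqpos : 0 < q := Fintype.card_pos
  have hSZ : ∀ y, q * (Finset.univ.filter fun t : Fin N → F => MvPolynomial.eval t (Q y) = 0).card ≤ U.totalDegree * q ^ N := by
    intro y
    have h := MvPolynomial.schwartz_zippel_totalDegree (hQ0 y) (Finset.univ : Finset F)
    rw [Fintype.piFinset_univ, Finset.card_univ, ← hq] at h
    have hq0 : (0 : ℚ≥0) < q := by exact_mod_cast hqpos
    rw [div_le_div_iff₀ (by positivity) hq0] at h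
    have h' : (Finset.univ.filter fun t : Fin N → F => MvPolynomial.eval t (Q y) = 0).card * q ≤ (Q y).totalDegree * q ^ N := by
      exact_mod_cast h
    calc _ = _ := mul_comm _ _
      _ ≤ _ := h'
      _ ≤ _ := Nat.mul_le_mul_right _ (hQd y)
  have hcard : ∀ t : Fin N → F, (Finset.univ.filter fun y : symplecticGroup (Fin m) F => MvPolynomial.eval t (Q y) = 0).card
      = Nat.card {g : symplecticGroup (Fin m) F // ev g = 0} := by
    intro t
    rw [← Fintype.card_subtype, ← Nat.card_eq_fintype_card]
    refine Nat.card_congr ((Equiv.mulRight (u t)).subtypeEquiv fun y => ?_)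
    rw [hQe]; rfl
  have hsum := Finset.sum_card_bipartiteAbove_eq_sum_card_bipartiteBelow
    (s := (Finset.univ : Finset (symplecticGroup (Fin m) F))) (t := (Finset.univ : Finset (Fin N → F)))
    (fun y t => MvPolynomial.eval t (Q y) = 0)
  simp only [Finset.bipartiteAbove, Finset.bipartiteBelow, hcard] at hsum
  rw [Finset.sum_const, Finset.card_univ, Fintype.card_fun, Fintype.card_fin, ← hq, smul_eq_mul] at hsum
  have hle : q ^ N * (q * Nat.card {g : symplecticGroup (Fin m) F // ev g = 0}) ≤
      q ^ N * (U.totalDegree * Nat.card (symplecticGroup (Fin m) F)) := by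
    calc _ = q * (q ^ N * Nat.card {g : symplecticGroup (Fin m) F // ev g = 0}) := by ring
      _ = ∑ y : symplecticGroup (Fin m) F, q * (Finset.univ.filter fun t : Fin N → F => MvPolynomial.eval t (Q y) = 0).card := by
        rw [← hsum, Finset.mul_sum]
      _ ≤ ∑ y : symplecticGroup (Fin m) F, U.totalDegree * q ^ N := Finset.sum_le_sum fun y _ => hSZ y
      _ = _ := by
        rw [Finset.sum_const, Finset.card_univ, smul_eq_mul, ← Nat.card_eq_fintype_card]; ring
  exact Nat.le_of_mul_le_mul_left hle (pow_pos hqpos N)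

end counting

section apps

/-- generic matrix -/
noncomputable def gX (m : ℕ) : Matrix (Ix m) (Ix m) (MvPolynomial (Ix m × Ix m) ℤ) :=
  Matrix.of fun i j => MvPolynomial.X (i, j)

lemma gX_map {m : ℕ} {R : Type*} [CommRing R] (g : Matrix (Ix m) (Ix m) R) :
    (gX m).map (MvPolynomial.aeval (fun p : Ix m × Ix m => g p.1 p.2) : _ →ₐ[ℤ] R) = g := by
  ext i j; simp [gX]

lemma half_good (m : ℕ) : ∃ D : ℕ, ∀ (F : Type) [Field F] [Fintype F], (2 : F) ≠ 0 →
    Fintype.card F * Nat.card {g : symplecticGroup (Fin m) F // (1 + (g : Mt m F)).det = 0} ≤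
    D * Nat.card (symplecticGroup (Fin m) F) := by
  obtain ⟨D, hD⟩ := counting (m := m) (1 + gX m).det
  refine ⟨D, fun F _ _ h2 => ?_⟩
  have key : ∀ g : Mt m F, MvPolynomial.aeval (fun p : Ix m × Ix m => g p.1 p.2) (1 + gX m).det
      = (1 + g).det := by
    intro g
    rw [AlgHom.map_det, map_add, map_one, AlgHom.mapMatrix_apply, gX_map]
  have := hD F ⟨1, by
    rw [key, Submonoid.coe_one]
    have : (1 + 1 : Mt m F) = (2 : F) • (1 : Mt m F) := by
      rw [two_smul]
    rw [this, det_smul, det_one, mul_one]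
    exact pow_ne_zero _ h2⟩
  simpa only [key] using this

/-- Krylov matrix -/
def kry {m : ℕ} {R : Type*} [CommRing R] (z : Matrix (Ix m) (Ix m) R) (v : Ix m → R) :
    Matrix (Ix m) (Ix m) R :=
  Matrix.of fun i j => ((z ^ (finSumFinEquiv j : ℕ)) *ᵥ v) i

/-- the exponent -/
def expM (m : ℕ) : ℕ := (2 * m + 8).factorial

/-- generic elements -/
def Gen {m : ℕ} {F : Type} [Field F] (y : Mt m F) : Prop := ∃ v, (kry (y ^ expM m) v).det ≠ 0

lemma kry_map {m : ℕ} {R S : Type*} [CommRing R] [CommRing S] (f : R →+* S)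
    (z : Matrix (Ix m) (Ix m) R) (v : Ix m → R) :
    (kry z v).map f = kry (z.map f) (fun i => f (v i)) := by
  ext i j
  simp only [kry, Matrix.map_apply, Matrix.of_apply]
  rw [RingHom.map_mulVec]
  congr 2
  exact Matrix.map_pow _ _ _

lemma gen_exists (m : ℕ) (F : Type) [Field F] [Fintype F] (M : ℕ) (hM : 0 < M)
    (hq : 2 * m * M + 1 < Fintype.card F) :
    ∃ g : symplecticGroup (Fin m) F, (kry ((g : Mt m F) ^ M) 1).det ≠ 0 := by
  classical
  obtain ⟨a, ha⟩ := IsCyclic.exists_ofOrder_eq_natCard (α := Fˣ)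
  rw [Nat.card_eq_fintype_card, Fintype.card_units] at ha
  let e : Ix m → ℤ := Sum.elim (fun i => (i : ℤ) + 1) (fun i => -((i : ℤ) + 1))
  let d : Ix m → F := fun i => ((a ^ e i : Fˣ) : F)
  have hmem : diagonal d ∈ symplecticGroup (Fin m) F := by
    rw [mem_Sp_iff]
    intro u v
    rw [SB_eq, SB_eq]
    refine Finset.sum_congr rfl fun i _ => ?_
    simp only [mulVec_diagonal]
    have h : d (Sum.inr i) * d (Sum.inl i) = 1 := by
      simp only [d, e, Sum.elim_inl, Sum.elim_inr]
      rw [← Units.val_mul, ← _root_.zpow_add]; simp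
    linear_combination (u (Sum.inr i) * v (Sum.inl i) - u (Sum.inl i) * v (Sum.inr i)) * h
  refine ⟨⟨diagonal d, hmem⟩, ?_⟩
  have hk : kry ((diagonal d) ^ M) (1 : Ix m → F) =
      (vandermonde (fun i : Fin (m + m) => d (finSumFinEquiv.symm i) ^ M)).submatrix
        finSumFinEquiv finSumFinEquiv := by
    ext i j
    simp [kry, diagonal_pow, mulVec_diagonal, vandermonde]
  change (kry ((diagonal d) ^ M) (1 : Ix m → F)).det ≠ 0
  rw [hk, det_submatrix_equiv_self, det_vandermonde_ne_zero_iff]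
  have hinj : ∀ i j : Ix m, d i ^ M = d j ^ M → i = j := by
    intro i j hij
    have h1 : a ^ ((e i - e j) * M) = 1 := by
      have : (a ^ e i) ^ M = (a ^ e j) ^ M := by
        ext; simpa [d] using hij
      rw [sub_mul, _root_.zpow_sub, mul_inv_eq_one, _root_.zpow_mul, _root_.zpow_mul, zpow_natCast, zpow_natCast, this]
    have h2 := orderOf_dvd_iff_zpow_eq_one.2 h1
    rw [ha] at h2
    have hb : |e i - e j| ≤ 2 * m := by
      rw [abs_le]
      rcases i with i | i <;> rcases j with j | j <;> simp only [e, Sum.elim_inl, Sum.elim_inr] <;>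
        have := i.2 <;> have := j.2 <;> constructor <;> omega
    have h0 : (e i - e j) * M = 0 := by
      apply Int.eq_zero_of_abs_lt_dvd h2
      rw [abs_mul, Nat.abs_cast]
      calc |e i - e j| * (M : ℤ) ≤ (2 * m) * M := by gcongr
        _ < _ := by
          have : ((2 * m * M : ℕ) : ℤ) < ((Fintype.card F - 1 : ℕ) : ℤ) := by
            exact_mod_cast (by omega)
          simpa using this
    have h3 : e i = e j := by
      rcases mul_eq_zero.1 h0 with h | h
      · omega
      · exact absurd h (by exact_mod_cast hM.ne')
    rcases i with i | i <;> rcases j with j | j <;> simp only [e, Sum.elim_inl, Sum.elim_inr] at h3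
    · congr 1; ext; omega
    · omega
    · omega
    · congr 1; ext; omega
  intro i j hij
  exact finSumFinEquiv.symm.injective (hinj _ _ hij)

lemma gen_count (m : ℕ) : ∃ D q0 : ℕ, ∀ (F : Type) [Field F] [Fintype F], q0 ≤ Fintype.card F →
    Fintype.card F * Nat.card {g : symplecticGroup (Fin m) F // ¬ Gen (g : Mt m F)} ≤
    D * Nat.card (symplecticGroup (Fin m) F) := by
  obtain ⟨D, hD⟩ := counting (m := m) (kry ((gX m) ^ expM m) 1).det
  refine ⟨D, 2 * m * expM m + 2, fun F _ _ hq => ?_⟩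
  have key : ∀ g : Mt m F, MvPolynomial.aeval (fun p : Ix m × Ix m => g p.1 p.2)
      (kry ((gX m) ^ expM m) 1).det = (kry (g ^ expM m) 1).det := by
    intro g
    rw [AlgHom.map_det, AlgHom.mapMatrix_apply]
    congr 1
    have := kry_map (MvPolynomial.aeval (fun p : Ix m × Ix m => g p.1 p.2) :
      MvPolynomial (Ix m × Ix m) ℤ →ₐ[ℤ] F).toRingHom ((gX m) ^ expM m) 1
    refine this.trans ?_
    congr 1
    · rw [Matrix.map_pow]; congr 1; exact gX_map g
    · ext i; simp
  obtain ⟨g, hg⟩ := gen_exists m F (expM m) (Nat.factorial_pos _) (by omega)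
  refine le_trans ?_ (hD F ⟨g, by rw [key]; exact hg⟩)
  gcongr
  simp only [key]
  refine Nat.card_le_card_of_injective (fun g => ⟨g.1, ?_⟩) ?_
  · by_contra h'
    exact g.2 ⟨1, h'⟩
  · intro a b h
    exact Subtype.ext (by simpa using h)

end apps

section natural
variable {m : ℕ} {R S : Type*} [CommRing R] [CommRing S]

/-- numerator of Cayley square -/
def Nm (X : Matrix (Ix m) (Ix m) R) : Matrix (Ix m) (Ix m) R := (adjugate (1 + X) * (1 - X)) ^ 2
/-- denominator of Cayley square -/
def kap (X : Matrix (Ix m) (Ix m) R) : R := (1 + X).det ^ 2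

/-- bracket polynomial -/
def Br (L X Y : Matrix (Ix m) (Ix m) R) (s : R) : R :=
  kap (s • X) * kap ((-s) • X) * trace (L * Nm (s • X) * Y * Nm ((-s) • X))

/-- denominator matrix -/
def Mn (h X : Matrix (Ix m) (Ix m) R) (s : R) : Matrix (Ix m) (Ix m) R :=
  kap (s • X) • (1 : Matrix (Ix m) (Ix m) R) + h * Nm (s • X)

/-- numerator -/
def Nu (h X : Matrix (Ix m) (Ix m) R) (s : R) : Matrix (Ix m) (Ix m) R :=
  J (Fin m) R * (kap (s • X) • adjugate (Mn h X s))

lemma map_smulM (f : R →+* S) (s : R) (X : Matrix (Ix m) (Ix m) R) :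
    f.mapMatrix (s • X) = f s • f.mapMatrix X := by
  ext i j; simp

lemma map_J' (f : R →+* S) : f.mapMatrix (J (Fin m) R) = J (Fin m) S := by
  ext i j
  rcases i with i | i <;> rcases j with j | j <;> simp [J, one_apply]

lemma Nm_map (f : R →+* S) (X : Matrix (Ix m) (Ix m) R) :
    f.mapMatrix (Nm X) = Nm (f.mapMatrix X) := by
  rw [Nm, Nm, map_pow, map_mul, RingHom.map_adjugate, map_add, map_sub, map_one]

lemma kap_map (f : R →+* S) (X : Matrix (Ix m) (Ix m) R) :
    f (kap X) = kap (f.mapMatrix X) := by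
  rw [kap, kap, map_pow, RingHom.map_det, map_add, map_one]

lemma Br_map (f : R →+* S) (L X Y : Matrix (Ix m) (Ix m) R) (s : R) :
    f (Br L X Y s) = Br (f.mapMatrix L) (f.mapMatrix X) (f.mapMatrix Y) (f s) := by
  have ht : ∀ A : Matrix (Ix m) (Ix m) R, f (trace A) = trace (f.mapMatrix A) := by
    intro A; simp [trace]
  simp only [Br, map_mul, kap_map, ht, Nm_map, map_smulM, map_neg]

lemma Mn_map (f : R →+* S) (h X : Matrix (Ix m) (Ix m) R) (s : R) :
    f.mapMatrix (Mn h X s) = Mn (f.mapMatrix h) (f.mapMatrix X) (f s) := by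
  simp only [Mn, map_add, map_mul, kap_map, Nm_map, map_smulM, map_one]

lemma Nu_map (f : R →+* S) (h X : Matrix (Ix m) (Ix m) R) (s : R) :
    f.mapMatrix (Nu h X s) = Nu (f.mapMatrix h) (f.mapMatrix X) (f s) := by
  simp only [Nu, map_mul, kap_map, map_smulM, map_J', RingHom.map_adjugate, Mn_map]

lemma Nm_dual (X : Matrix (Ix m) (Ix m) R) (e : R) (he : e * e = 0) :
    Nm (e • X) = kap (e • X) • (1 - (4 * e) • X) := by
  have h1 : (1 + e • X) * (1 - e • X) = 1 := by
    have : (1 + e • X) * (1 - e • X) = 1 - (e * e) • (X * X) := by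
      simp only [add_mul, mul_sub, mul_one, one_mul, smul_mul_smul_comm]; abel
    rw [this, he]; simp
  have h2 : adjugate (1 + e • X) = (1 + e • X).det • (1 - e • X) := by
    calc adjugate (1 + e • X) = adjugate (1 + e • X) * ((1 + e • X) * (1 - e • X)) := by
          rw [h1, mul_one]
      _ = _ := by rw [← mul_assoc, adjugate_mul, smul_mul_assoc, one_mul]
  have h3 : ((1 - e • X) * (1 - e • X)) = 1 - (2 * e) • X := by
    simp only [mul_sub, sub_mul, one_mul, mul_one, smul_mul_smul_comm, he, zero_smul, sub_zero, two_mul, add_smul]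
    abel
  have h4 : ((1 - (2 * e) • X) * (1 - (2 * e) • X)) = 1 - (4 * e) • X := by
    have : 2 * e * (2 * e) = 0 := by linear_combination 4 * he
    simp only [mul_sub, sub_mul, one_mul, mul_one, smul_mul_smul_comm, this, zero_smul, sub_zero]
    rw [show (4 * e) = 2 * e + 2 * e by ring, add_smul]
    abel
  rw [Nm, h2, kap, smul_mul_assoc, h3, smul_pow, sq (1 - (2 * e) • X), h4]

lemma kap_dual_unit (X : Matrix (Ix m) (Ix m) R) (e : R) (he : e * e = 0) : IsUnit (kap (e • X)) := by
  have h1 : (1 + e • X) * (1 - e • X) = 1 := by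
    have : (1 + e • X) * (1 - e • X) = 1 - (e * e) • (X * X) := by
      simp only [add_mul, mul_sub, mul_one, one_mul, smul_mul_smul_comm]; abel
    rw [this, he]; simp
  apply IsUnit.pow
  have := congrArg det h1
  rw [det_mul, det_one] at this
  exact IsUnit.of_mul_eq_one _ this

end natural

section growth
variable {m : ℕ} {F : Type} [Field F]

/-- the directions in H -/
def XH (H : Subgroup (symplecticGroup (Fin m) F)) : Set (Mt m F) :=
  {X | (J (Fin m) F * X).IsSymm ∧ ∀ s : F, kap (s • X) ≠ 0 →
    ∃ h ∈ H, Nm (s • X) = kap (s • X) • (h : Mt m F)}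

lemma Nm_mul_Nm (X : Mt m F) : Nm X * Nm (-X) = (kap X * kap (-X)) • 1 := by
  simp only [Nm, kap, sub_neg_eq_add]
  rw [← sub_eq_add_neg]
  generalize 1 + X = a
  generalize 1 - X = b
  calc (adjugate a * b) ^ 2 * (adjugate b * a) ^ 2
      = adjugate a * b * adjugate a * (b * adjugate b) * a * adjugate b * a := by
        rw [sq, sq]; noncomm_ring
    _ = b.det • (adjugate a * b * (adjugate a * a) * adjugate b * a) := by
        rw [mul_adjugate]; simp [mul_assoc]
    _ = (a.det * b.det) • (adjugate a * (b * adjugate b) * a) := by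
        rw [adjugate_mul]; simp [mul_assoc, smul_smul]; rw [mul_comm]
    _ = (a.det * b.det * b.det) • (adjugate a * a) := by
        rw [mul_adjugate]; simp [smul_smul]
    _ = _ := by rw [adjugate_mul, smul_smul]; ring_nf

lemma Sp_det (h : symplecticGroup (Fin m) F) : (h : Mt m F).det = 1 :=
  SymplecticGroup.det_eq_one h.2

lemma Sp_mul_inv (h : symplecticGroup (Fin m) F) : (h : Mt m F) * ((h⁻¹ : symplecticGroup (Fin m) F) : Mt m F) = 1 := by
  rw [← Submonoid.coe_mul, mul_inv_cancel]; rfl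
lemma Sp_inv_mul (h : symplecticGroup (Fin m) F) : ((h⁻¹ : symplecticGroup (Fin m) F) : Mt m F) * (h : Mt m F) = 1 := by
  rw [← Submonoid.coe_mul, inv_mul_cancel]; rfl

lemma Sp_adj (h : symplecticGroup (Fin m) F) : adjugate (h : Mt m F) = ((h⁻¹ : symplecticGroup (Fin m) F) : Mt m F) := by
  calc adjugate (h : Mt m F) = adjugate (h : Mt m F) * ((h : Mt m F) * ((h⁻¹ : symplecticGroup (Fin m) F) : Mt m F)) := by
        rw [Sp_mul_inv, mul_one]
    _ = _ := by rw [← mul_assoc, adjugate_mul, Sp_det, one_smul, one_mul]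

lemma Sp_J (h : symplecticGroup (Fin m) F) : J (Fin m) F * (h : Mt m F) =
    ((h⁻¹ : symplecticGroup (Fin m) F) : Mt m F)ᵀ * J (Fin m) F := by
  have h1 : (h : Mt m F)ᵀ * J (Fin m) F * h = J (Fin m) F := (SymplecticGroup.mem_iff').1 h.2
  have h2 : ((h⁻¹ : symplecticGroup (Fin m) F) : Mt m F)ᵀ * (h : Mt m F)ᵀ = 1 := by
    rw [← transpose_mul, Sp_mul_inv, transpose_one]
  calc _ = ((h⁻¹ : symplecticGroup (Fin m) F) : Mt m F)ᵀ * (h : Mt m F)ᵀ * J (Fin m) F * h := by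
        rw [h2, one_mul]
    _ = ((h⁻¹ : symplecticGroup (Fin m) F) : Mt m F)ᵀ * ((h : Mt m F)ᵀ * J (Fin m) F * h) := by
        simp only [mul_assoc]
    _ = _ := by rw [h1]

/-- conjugation of matrices -/
def cj (h : symplecticGroup (Fin m) F) (X : Mt m F) : Mt m F :=
  (h : Mt m F) * X * ((h⁻¹ : symplecticGroup (Fin m) F) : Mt m F)

lemma cj_mul (h : symplecticGroup (Fin m) F) (X Y : Mt m F) : cj h (X * Y) = cj h X * cj h Y := by
  simp only [cj]
  calc _ = (h : Mt m F) * X * 1 * Y * ((h⁻¹ : symplecticGroup (Fin m) F) : Mt m F) := by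
        rw [mul_one]; simp only [mul_assoc]
    _ = _ := by rw [← Sp_inv_mul h]; simp only [mul_assoc]
lemma cj_one (h : symplecticGroup (Fin m) F) : cj h 1 = 1 := by simp [cj, Sp_mul_inv]
lemma cj_add (h : symplecticGroup (Fin m) F) (X Y : Mt m F) : cj h (X + Y) = cj h X + cj h Y := by
  simp [cj, mul_add, add_mul]
lemma cj_sub (h : symplecticGroup (Fin m) F) (X Y : Mt m F) : cj h (X - Y) = cj h X - cj h Y := by
  simp [cj, mul_sub, sub_mul]
lemma cj_smul (h : symplecticGroup (Fin m) F) (s : F) (X : Mt m F) : cj h (s • X) = s • cj h X := by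
  simp [cj]
lemma cj_cj (g h : symplecticGroup (Fin m) F) (X : Mt m F) : cj g (cj h X) = cj (g * h) X := by
  simp [cj, mul_assoc]
lemma cj_det (h : symplecticGroup (Fin m) F) (X : Mt m F) : (cj h X).det = X.det := by
  simp [cj, Sp_det]
lemma cj_adj (h : symplecticGroup (Fin m) F) (X : Mt m F) : (cj h X).adjugate = cj h X.adjugate := by
  simp only [cj, adjugate_mul_distrib, Sp_adj, inv_inv, mul_assoc]

lemma cj_coe (h g : symplecticGroup (Fin m) F) : cj h (g : Mt m F) = ((h * g * h⁻¹ : symplecticGroup (Fin m) F) : Mt m F) := rfl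

lemma cj_symm (h : symplecticGroup (Fin m) F) (X : Mt m F) (hX : (J (Fin m) F * X).IsSymm) :
    (J (Fin m) F * cj h X).IsSymm := by
  have : J (Fin m) F * cj h X = ((h⁻¹ : symplecticGroup (Fin m) F) : Mt m F)ᵀ * (J (Fin m) F * X) *
      ((h⁻¹ : symplecticGroup (Fin m) F) : Mt m F) := by
    simp only [cj, ← mul_assoc]
    rw [Sp_J]
  rw [this, IsSymm, transpose_mul, transpose_mul, transpose_transpose, hX.eq, ← mul_assoc]

lemma XH_cj {H : Subgroup (symplecticGroup (Fin m) F)} {X : Mt m F} (hX : X ∈ XH H)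
    {h : symplecticGroup (Fin m) F} (hh : h ∈ H) : cj h X ∈ XH H := by
  refine ⟨cj_symm h X hX.1, fun s hs => ?_⟩
  have e1 : kap (s • cj h X) = kap (s • X) := by
    rw [kap, kap, ← cj_smul, ← cj_one h, ← cj_add, cj_det]
    simp [cj_one]
  have e2 : Nm (s • cj h X) = cj h (Nm (s • X)) := by
    rw [Nm, Nm, ← cj_smul, sq, sq]
    simp only [cj_mul, ← cj_adj, cj_add, cj_sub, cj_one]
  rw [e1] at hs
  obtain ⟨g, hg, hgX⟩ := hX.2 s hs
  refine ⟨h * g * h⁻¹, mul_mem (mul_mem hh hg) (inv_mem hh), ?_⟩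
  rw [e1, e2, hgX, cj_smul, cj_coe]

lemma Br_zero {H : Subgroup (symplecticGroup (Fin m) F)} {L X Y : Mt m F} (hX : X ∈ XH H) (hY : Y ∈ XH H)
    (hL : ∀ Z ∈ XH H, trace (L * Z) = 0) (s : F) : Br L X Y s = 0 := by
  by_cases h1 : kap (s • X) = 0
  · simp [Br, h1]
  by_cases h2 : kap ((-s) • X) = 0
  · rw [Br, h2]; simp
  obtain ⟨g, hg, e1⟩ := hX.2 s h1
  obtain ⟨g', hg', e2⟩ := hX.2 (-s) h2
  have h3 := Nm_mul_Nm (s • X)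
  rw [← neg_smul, e1, e2, smul_mul_smul_comm] at h3
  have h4 : (g : Mt m F) * g' = 1 := smul_right_injective _ (mul_ne_zero h1 h2) h3
  have h5 : g' = g⁻¹ := by
    apply eq_inv_of_mul_eq_one_right
    exact Subtype.ext h4
  rw [Br, e1, e2, h5]
  have := hL _ (XH_cj hY hg)
  simp only [cj, ← mul_assoc] at this
  simp [this]

lemma poly_zero {F : Type} [Field F] [Fintype F] (p : Polynomial F) (d : ℕ) (hd : p.natDegree ≤ d)
    (hq : d < Fintype.card F) (h : ∀ s, p.eval s = 0) : p = 0 := by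
  apply Polynomial.eq_zero_of_natDegree_lt_card_of_eval_eq_zero' p Finset.univ (fun s _ => h s)
  rw [Finset.card_univ]; omega

lemma W_bracket (m : ℕ) : ∃ D : ℕ, ∀ (F : Type) [Field F] [Fintype F], (2 : F) ≠ 0 → D < Fintype.card F →
    ∀ (H : Subgroup (symplecticGroup (Fin m) F)) (L X Y : Mt m F), X ∈ XH H → Y ∈ XH H →
    (∀ Z ∈ XH H, trace (L * Z) = 0) → trace (L * (X * Y - Y * X)) = 0 := by
  let σ := (Ix m × Ix m) ⊕ (Ix m × Ix m) ⊕ (Ix m × Ix m) ⊕ Unit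
  let A : (Ix m × Ix m → σ) → Matrix (Ix m) (Ix m) (MvPolynomial σ ℤ) := fun k =>
    Matrix.of fun i j => MvPolynomial.X (k (i, j))
  let U : MvPolynomial σ ℤ := Br (A Sum.inl) (A fun t => Sum.inr (Sum.inl t))
    (A fun t => Sum.inr (Sum.inr (Sum.inl t))) (MvPolynomial.X (Sum.inr (Sum.inr (Sum.inr ()))))
  refine ⟨U.totalDegree, ?_⟩
  intro F _ _ h2 hq H L X Y hX hY hL
  let p : Polynomial F := Br (Polynomial.C.mapMatrix L) (Polynomial.C.mapMatrix X) (Polynomial.C.mapMatrix Y) Polynomial.X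
  let f : σ → Polynomial F := Sum.elim (fun t => Polynomial.C (L t.1 t.2)) (Sum.elim (fun t => Polynomial.C (X t.1 t.2))
    (Sum.elim (fun t => Polynomial.C (Y t.1 t.2)) (fun _ => Polynomial.X)))
  have hfX : ∀ t : σ, (MvPolynomial.aeval f : MvPolynomial σ ℤ →ₐ[ℤ] Polynomial F) (MvPolynomial.X t) = f t :=
    fun t => MvPolynomial.aeval_X f t
  have hp : p = MvPolynomial.aeval f U := by
    have := Br_map (MvPolynomial.aeval f : _ →ₐ[ℤ] Polynomial F).toRingHom (A Sum.inl) (A fun t => Sum.inr (Sum.inl t))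
      (A fun t => Sum.inr (Sum.inr (Sum.inl t))) (MvPolynomial.X (Sum.inr (Sum.inr (Sum.inr ()))))
    refine Eq.trans ?_ this.symm
    simp only [p]
    congr 1
    · ext1 i j; exact (hfX (Sum.inl (i, j))).symm
    · ext1 i j; exact (hfX (Sum.inr (Sum.inl (i, j)))).symm
    · ext1 i j; exact (hfX (Sum.inr (Sum.inr (Sum.inl (i, j))))).symm
    · exact (hfX (Sum.inr (Sum.inr (Sum.inr ())))).symm
  have hdeg : p.natDegree ≤ U.totalDegree := by
    rw [hp]
    apply natDegree_aeval_le_one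
    rintro (t | t | t | t)
    · simp [f]
    · simp [f]
    · simp [f]
    · simp [f]
  have hp0 : p = 0 := by
    refine poly_zero p _ hdeg hq fun s => ?_
    have := Br_map (Polynomial.evalRingHom s) (Polynomial.C.mapMatrix L) (Polynomial.C.mapMatrix X) (Polynomial.C.mapMatrix Y) Polynomial.X
    rw [← Polynomial.coe_evalRingHom, this]
    have e : ∀ A : Mt m F, (Polynomial.evalRingHom s).mapMatrix (Polynomial.C.mapMatrix A) = A := by
      intro A; ext i j; simp
    rw [e, e, e]
    simpa using Br_zero hX hY hL s
  let ev : Polynomial F →+* DualNumber F := (Polynomial.aeval (DualNumber.eps : DualNumber F)).toRingHom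
  have h := Br_map ev (Polynomial.C.mapMatrix L) (Polynomial.C.mapMatrix X) (Polynomial.C.mapMatrix Y) Polynomial.X
  let ι : F →+* DualNumber F := algebraMap F (DualNumber F)
  have e : ∀ A : Mt m F, ev.mapMatrix (Polynomial.C.mapMatrix A) = ι.mapMatrix A := by
    intro A; ext1 i j; simp [ev, ι]
  rw [e, e, e, show ev Polynomial.X = DualNumber.eps by simp [ev]] at h
  change ev p = _ at h
  rw [hp0, map_zero, Br] at h
  have hee : (DualNumber.eps : DualNumber F) * DualNumber.eps = 0 := DualNumber.eps_mul_eps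
  have hee' : (-DualNumber.eps : DualNumber F) * -DualNumber.eps = 0 := by rw [neg_mul_neg, hee]
  have u1 := kap_dual_unit (ι.mapMatrix X) _ hee
  have u2 := kap_dual_unit (ι.mapMatrix X) _ hee'
  rw [Nm_dual _ _ hee, Nm_dual _ _ hee'] at h
  have h' := h.symm
  rw [mul_assoc, u1.mul_right_eq_zero, u2.mul_right_eq_zero] at h'
  simp only [mul_smul_comm, smul_mul_assoc, trace_smul, smul_eq_mul] at h'
  rw [u2.mul_right_eq_zero, u1.mul_right_eq_zero] at h'
  set E : DualNumber F := DualNumber.eps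
  have h3 : ι.mapMatrix L * (1 - (4 * E) • ι.mapMatrix X) * ι.mapMatrix Y * (1 - (4 * -E) • ι.mapMatrix X)
      = ι.mapMatrix (L * Y) - (4 * E) • ι.mapMatrix (L * (X * Y - Y * X)) := by
    have h16 : (4 * E) * (4 * -E) = 0 := by linear_combination (-16) * hee
    simp only [map_mul, map_sub, mul_sub, sub_mul, mul_one, smul_mul_assoc, mul_smul_comm, smul_smul, smul_sub]
    rw [show (4 * -E * (4 * E)) = 0 by rw [mul_comm]; exact h16]
    simp only [zero_smul, mul_neg, neg_smul, mul_assoc]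
    abel
  rw [h3, trace_sub, trace_smul] at h'
  have ht : ∀ A : Mt m F, trace (ι.mapMatrix A) = ι (trace A) := by intro A; simp [trace]
  rw [ht, ht, hL Y hY, map_zero, zero_sub, neg_eq_zero] at h'
  have h4 := congrArg TrivSqZeroExt.snd h'
  have h44 : (4 : DualNumber F) = ι 4 := (map_ofNat ι 4).symm
  rw [h44, smul_eq_mul] at h4
  simp [ι, E, TrivSqZeroExt.algebraMap_eq_inl] at h4
  rcases h4 with h4 | h4
  · exfalso; apply h2
    have : (2 : F) * 2 = 0 := by rw [← h4]; norm_num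
    simpa using this
  · exact h4

end growth

section homog
variable {τ : Type} [Fintype τ] {F : Type} [Field F] {A B : Type} [CommRing A] [CommRing B] [Algebra F A] [Algebra F B]

/-- homogenised evaluation -/
noncomputable def hm (P : MvPolynomial τ F) (d : ℕ) (num : τ → A) (den : A) : A :=
  ∑ μ ∈ P.support, algebraMap F A (P.coeff μ) * (∏ i, num i ^ μ i) * den ^ (d - ∑ i, μ i)

lemma hm_map (f : A →ₐ[F] B) (P : MvPolynomial τ F) (d : ℕ) (num : τ → A) (den : A) :
    f (hm P d num den) = hm P d (fun i => f (num i)) (f den) := by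
  simp [hm, map_sum, map_prod]

lemma deg_le (P : MvPolynomial τ F) {μ : τ →₀ ℕ} (h : μ ∈ P.support) : ∑ i, μ i ≤ P.totalDegree := by
  have := MvPolynomial.le_totalDegree h
  rwa [Finsupp.sum_fintype _ _ (fun _ => rfl)] at this

lemma hm_scale (P : MvPolynomial τ F) (t : τ → A) (den : A) :
    hm P P.totalDegree (fun i => den * t i) den = den ^ P.totalDegree * MvPolynomial.aeval t P := by
  rw [MvPolynomial.aeval_def, MvPolynomial.eval₂_eq', hm, Finset.mul_sum]
  refine Finset.sum_congr rfl fun μ hμ => ?_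
  simp only [mul_pow, Finset.prod_mul_distrib, Finset.prod_pow_eq_pow_sum]
  have := deg_le P hμ
  conv_rhs => rw [← Nat.add_sub_cancel' this, pow_add]
  ring

lemma hm_natDegree (P : MvPolynomial τ F) (num : τ → Polynomial F) (den : Polynomial F) (D : ℕ)
    (h1 : ∀ i, (num i).natDegree ≤ D) (h2 : den.natDegree ≤ D) :
    (hm P P.totalDegree num den).natDegree ≤ P.totalDegree * D := by
  apply Polynomial.natDegree_sum_le_of_forall_le
  intro μ hμ
  have h3 := deg_le P hμ
  have e1 : (algebraMap F (Polynomial F) (P.coeff μ)).natDegree = 0 := by simp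
  have e2 : (∏ i, num i ^ μ i).natDegree ≤ (∑ i, μ i) * D := by
    refine (Polynomial.natDegree_prod_le _ _).trans ?_
    rw [Finset.sum_mul]
    refine Finset.sum_le_sum fun i _ => ?_
    exact Polynomial.natDegree_pow_le.trans (Nat.mul_le_mul_left _ (h1 i))
  have e3 : (den ^ (P.totalDegree - ∑ i, μ i)).natDegree ≤ (P.totalDegree - ∑ i, μ i) * D :=
    Polynomial.natDegree_pow_le.trans (Nat.mul_le_mul_left _ h2)
  calc _ ≤ _ := Polynomial.natDegree_mul_le
    _ ≤ (0 + (∑ i, μ i) * D) + (P.totalDegree - ∑ i, μ i) * D := by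
      refine add_le_add (Polynomial.natDegree_mul_le.trans ?_) e3
      rw [e1]; omega
    _ = ((∑ i, μ i) + (P.totalDegree - ∑ i, μ i)) * D := by ring
    _ = _ := by rw [Nat.add_sub_cancel' h3]

lemma aeval_dual (P : MvPolynomial τ F) (a b : τ → F) :
    MvPolynomial.aeval (fun i => algebraMap F (DualNumber F) (a i) + DualNumber.eps * algebraMap F (DualNumber F) (b i)) P =
    algebraMap F (DualNumber F) (MvPolynomial.eval a P) + DualNumber.eps *
      algebraMap F (DualNumber F) (∑ z, b z * MvPolynomial.eval a (MvPolynomial.pderiv z P)) := by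
  classical
  have hee : (DualNumber.eps : DualNumber F) * DualNumber.eps = 0 := DualNumber.eps_mul_eps
  induction P using MvPolynomial.induction_on with
  | C r => simp
  | add p q hp hq =>
    simp only [map_add, hp, hq, mul_add, Finset.sum_add_distrib]; ring
  | mul_X p i hp =>
    have : (∑ z, b z * MvPolynomial.eval a (MvPolynomial.pderiv z (p * MvPolynomial.X i)))
        = (∑ z, b z * MvPolynomial.eval a (MvPolynomial.pderiv z p)) * a i + MvPolynomial.eval a p * b i := by
      simp only [Derivation.leibniz, smul_eq_mul, map_add, map_mul, MvPolynomial.eval_X, mul_add,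
        Finset.sum_add_distrib, Finset.sum_mul, MvPolynomial.pderiv_X]
      rw [add_comm]
      congr 1
      · exact Finset.sum_congr rfl fun z _ => by ring
      · rw [Finset.sum_eq_single i]
        · simp; ring
        · intro j _ hj; simp [Pi.single_apply, hj.symm]
        · simp
    rw [map_mul, hp, MvPolynomial.aeval_X, this, map_mul, MvPolynomial.eval_X]
    simp only [map_add, map_mul]
    linear_combination (algebraMap F (DualNumber F) (∑ z, b z * MvPolynomial.eval a (MvPolynomial.pderiv z p)) * algebraMap F (DualNumber F) (b i)) * hee

end homog

section frob
variable {τ : Type} [Fintype τ] {F : Type} [Field F] [Fintype F]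

lemma pderiv_deg (P : MvPolynomial τ F) (z : τ) (h : 0 < P.totalDegree) :
    (MvPolynomial.pderiv z P).totalDegree < P.totalDegree := by
  classical
  rw [MvPolynomial.totalDegree, Finset.sup_lt_iff (by simpa using h)]
  intro μ hμ
  rw [MvPolynomial.mem_support_iff, MvPolynomial.coeff_pderiv] at hμ
  have h1 : μ + Finsupp.single z 1 ∈ P.support := by
    rw [MvPolynomial.mem_support_iff]
    exact left_ne_zero_of_mul hμ
  have := MvPolynomial.le_totalDegree h1
  rw [Finsupp.sum_add_index' (fun _ => rfl) (fun _ _ _ => rfl), Finsupp.sum_single_index rfl] at this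
  omega

lemma pderiv_zero (P : MvPolynomial τ F) (hP : ∀ z, MvPolynomial.pderiv z P = 0) (h : 0 < P.totalDegree) :
    ∃ (p : ℕ) (Q : MvPolynomial τ F), 0 < p ∧ P = Q ^ p ∧ Q.totalDegree < P.totalDegree := by
  classical
  obtain ⟨p, hp⟩ := CharP.exists F
  have hpp : Fact p.Prime := ⟨CharP.char_is_prime F p⟩
  have hdiv : ∀ μ ∈ P.support, ∀ z, p ∣ μ z := by
    intro μ hμ z
    by_cases h0 : μ z = 0
    · rw [h0]; exact dvd_zero _
    have h1 := congrArg (MvPolynomial.coeff (μ - Finsupp.single z 1)) (hP z)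
    have h2 : μ - Finsupp.single z 1 + Finsupp.single z 1 = μ := by
      ext w
      simp only [Finsupp.add_apply, Finsupp.tsub_apply, Finsupp.single_apply]
      split_ifs with hw
      · subst hw; omega
      · omega
    rw [MvPolynomial.coeff_pderiv, h2, MvPolynomial.coeff_zero] at h1
    rcases mul_eq_zero.1 h1 with h3 | h3
    · exact absurd h3 (MvPolynomial.mem_support_iff.1 hμ)
    · rw [← CharP.cast_eq_zero_iff F p]
      rw [← h3]
      simp only [Finsupp.tsub_apply, Finsupp.single_eq_same]
      have : μ z = (μ z - 1) + 1 := by omega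
      conv_lhs => rw [this]
      push_cast; ring
  let dv : (τ →₀ ℕ) → (τ →₀ ℕ) := fun μ => μ.mapRange (fun n => n / p) (by simp)
  choose r hr using (fun x : F => (surjective_frobenius F p) x)
  let Q : MvPolynomial τ F := ∑ μ ∈ P.support, MvPolynomial.monomial (dv μ) (r (P.coeff μ))
  refine ⟨p, Q, hpp.1.pos, ?_, ?_⟩
  · simp only [Q]
    rw [sum_pow_char]
    conv_lhs => rw [MvPolynomial.as_sum P]
    refine Finset.sum_congr rfl fun μ hμ => ?_
    rw [MvPolynomial.monomial_pow]
    congr 1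
    · congr 1
      ext z
      simp only [dv, Finsupp.smul_apply, Finsupp.mapRange_apply, smul_eq_mul]
      exact (Nat.mul_div_cancel' (hdiv μ hμ z)).symm
    · exact (hr _).symm
  · refine lt_of_le_of_lt (MvPolynomial.totalDegree_finsetSum_le (d := P.totalDegree / p) ?_)
      (Nat.div_lt_self h hpp.1.one_lt)
    intro μ hμ
    refine (MvPolynomial.totalDegree_monomial_le _ _).trans ?_
    rw [Nat.le_div_iff_mul_le hpp.1.pos]
    refine le_trans ?_ (deg_le P hμ)
    rw [Finsupp.sum_fintype _ _ (fun _ => rfl), Finset.sum_mul]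
    refine Finset.sum_le_sum fun i _ => ?_
    simp only [dv, Finsupp.mapRange_apply]
    exact Nat.div_mul_le_self _ _

end frob

section growthtop
variable {m : ℕ}

lemma deg_univ (m : ℕ) : ∃ D : ℕ, ∀ (F : Type) [Field F] (h X : Mt m F),
    (kap ((Polynomial.X : Polynomial F) • (Polynomial.C.mapMatrix X))).natDegree ≤ D ∧
    (Mn (Polynomial.C.mapMatrix h) (Polynomial.C.mapMatrix X) (Polynomial.X : Polynomial F)).det.natDegree ≤ D ∧
    ∀ i j, (Nu (Polynomial.C.mapMatrix h) (Polynomial.C.mapMatrix X) (Polynomial.X : Polynomial F) i j).natDegree ≤ D := by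
  let σ := (Ix m × Ix m) ⊕ (Ix m × Ix m) ⊕ Unit
  let A : (Ix m × Ix m → σ) → Matrix (Ix m) (Ix m) (MvPolynomial σ ℤ) := fun k =>
    Matrix.of fun i j => MvPolynomial.X (k (i, j))
  let hA := A Sum.inl
  let XA := A fun t => Sum.inr (Sum.inl t)
  let sA : MvPolynomial σ ℤ := MvPolynomial.X (Sum.inr (Sum.inr ()))
  refine ⟨(kap (sA • XA)).totalDegree + (Mn hA XA sA).det.totalDegree + ∑ t : Ix m × Ix m, (Nu hA XA sA t.1 t.2).totalDegree, ?_⟩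
  intro F _ h X
  let f : σ → Polynomial F := Sum.elim (fun t => Polynomial.C (h t.1 t.2)) (Sum.elim (fun t => Polynomial.C (X t.1 t.2))
    (fun _ => Polynomial.X))
  have hfX : ∀ t : σ, (MvPolynomial.aeval f : MvPolynomial σ ℤ →ₐ[ℤ] Polynomial F) (MvPolynomial.X t) = f t :=
    fun t => MvPolynomial.aeval_X f t
  let φ := (MvPolynomial.aeval f : MvPolynomial σ ℤ →ₐ[ℤ] Polynomial F).toRingHom
  have e1 : φ.mapMatrix hA = Polynomial.C.mapMatrix h := by
    ext1 i j; exact hfX (Sum.inl (i, j))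
  have e2 : φ.mapMatrix XA = Polynomial.C.mapMatrix X := by
    ext1 i j; exact hfX (Sum.inr (Sum.inl (i, j)))
  have e3 : φ sA = Polynomial.X := hfX (Sum.inr (Sum.inr ()))
  have key : ∀ U : MvPolynomial σ ℤ, (φ U).natDegree ≤ U.totalDegree := by
    intro U
    apply natDegree_aeval_le_one
    rintro (t | t | t)
    · simp [f]
    · simp [f]
    · simp [f]
  refine ⟨?_, ?_, fun i j => ?_⟩
  · rw [← e2, ← e3, ← map_smulM, ← kap_map]
    exact (key _).trans (by omega)
  · rw [← e1, ← e2, ← e3, ← Mn_map, ← RingHom.map_det]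
    exact (key _).trans (by omega)
  · rw [← e1, ← e2, ← e3, ← Nu_map]
    refine (key (Nu hA XA sA i j)).trans ?_
    have := Finset.single_le_sum (f := fun t : Ix m × Ix m => (Nu hA XA sA t.1 t.2).totalDegree)
      (fun _ _ => Nat.zero_le _) (Finset.mem_univ (i, j))
    simp only at this
    omega

/-- representative entry -/
noncomputable def ent {A : Type} (M : Matrix (Ix m) (Ix m) A) (z : Sym2 (Ix m)) : A :=
  M (Quot.out z).1 (Quot.out z).2

/-- Cayley coordinates -/
noncomputable def psi {F : Type} [Field F] (g : Mt m F) : Sym2 (Ix m) → F := ent (J (Fin m) F * (1 + g)⁻¹)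

/-- the polynomial used in the growth argument -/
noncomputable def ppol {F : Type} [Field F] {A : Type} [CommRing A] [Algebra F A] (P : MvPolynomial (Sym2 (Ix m)) F)
    (h X : Matrix (Ix m) (Ix m) A) (s : A) : A :=
  kap (s • X) * (Mn h X s).det * hm P P.totalDegree (ent (Nu h X s)) (Mn h X s).det

lemma ppol_map {F : Type} [Field F] {A B : Type} [CommRing A] [Algebra F A] [CommRing B] [Algebra F B]
    (f : A →ₐ[F] B) (P : MvPolynomial (Sym2 (Ix m)) F) (h X : Matrix (Ix m) (Ix m) A) (s : A) :
    f (ppol P h X s) = ppol P (f.toRingHom.mapMatrix h) (f.toRingHom.mapMatrix X) (f s) := by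
  have e1 := Mn_map f.toRingHom h X s
  have e2 := Nu_map f.toRingHom h X s
  have e3 := kap_map f.toRingHom (s • X)
  rw [map_smulM] at e3
  have e4 : f (Mn h X s).det = (Mn (f.toRingHom.mapMatrix h) (f.toRingHom.mapMatrix X) (f s)).det := by
    rw [show (Mn (f.toRingHom.mapMatrix h) (f.toRingHom.mapMatrix X) (f s)) = _ from e1.symm, ← RingHom.map_det]; rfl
  rw [ppol, ppol, map_mul, map_mul, hm_map, e4]
  have e5 : (fun i => f (ent (Nu h X s) i)) = ent (Nu (f.toRingHom.mapMatrix h) (f.toRingHom.mapMatrix X) (f s)) := by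
    rw [show (Nu (f.toRingHom.mapMatrix h) (f.toRingHom.mapMatrix X) (f s)) = _ from e2.symm]; rfl
  rw [e5]
  congr 2

lemma adj_lem {A : Type} [CommRing A] {N M T : Matrix (Ix m) (Ix m) A} {κ : A} (hN : N = κ • M) (hT : M * T = 1) :
    κ • adjugate N = N.det • T := by
  have h1 : adjugate N * N * T = N.det • T := by rw [adjugate_mul, smul_mul_assoc, one_mul]
  rw [← h1]
  conv_rhs => rw [mul_assoc]; arg 2; rw [hN]
  rw [smul_mul_assoc, hT, mul_smul_comm, mul_one]

lemma ent_smul {A : Type} [CommRing A] (c : A) (M : Matrix (Ix m) (Ix m) A) : ent (c • M) = fun z => c * ent M z := rfl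

variable {F : Type} [Field F]

lemma ppol_zero {H : Subgroup (symplecticGroup (Fin m) F)} {P : MvPolynomial (Sym2 (Ix m)) F}
    (hP : ∀ g ∈ H, (1 + (g : Mt m F)).det ≠ 0 → MvPolynomial.eval (psi (g : Mt m F)) P = 0)
    {h : symplecticGroup (Fin m) F} (hh : h ∈ H) {X : Mt m F} (hX : X ∈ XH H) (s : F) :
    ppol P (h : Mt m F) X s = 0 := by
  rw [ppol]
  by_cases h1 : kap (s • X) = 0
  · rw [h1]; simp
  by_cases h2 : (Mn (h : Mt m F) X s).det = 0
  · rw [h2]; simp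
  obtain ⟨g, hg, e1⟩ := hX.2 s h1
  have hM : Mn (h : Mt m F) X s = kap (s • X) • (1 + ((h * g : symplecticGroup (Fin m) F) : Mt m F)) := by
    rw [Mn, e1, smul_add, mul_smul_comm]; rfl
  have hd : (1 + ((h * g : symplecticGroup (Fin m) F) : Mt m F)).det ≠ 0 := by
    intro h0
    apply h2; rw [hM, det_smul, h0, mul_zero]
  have hT := Matrix.mul_nonsing_inv (1 + ((h * g : symplecticGroup (Fin m) F) : Mt m F)) (isUnit_iff_ne_zero.2 hd)
  have hN : ent (Nu (h : Mt m F) X s) = fun z => (Mn (h : Mt m F) X s).det * psi ((h * g : symplecticGroup (Fin m) F) : Mt m F) z := by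
    rw [Nu, adj_lem hM hT, mul_smul_comm, ent_smul]; rfl
  rw [hN, hm_scale]
  have h3 : MvPolynomial.aeval (psi ((h * g : symplecticGroup (Fin m) F) : Mt m F)) P = 0 := by
    have := hP (h * g) (mul_mem hh hg) hd
    rwa [← MvPolynomial.coe_aeval_eq_eval] at this
  rw [h3]; simp

lemma dual_snd (a b : F) : TrivSqZeroExt.snd (algebraMap F (DualNumber F) a + DualNumber.eps * algebraMap F (DualNumber F) b) = b := by
  simp [TrivSqZeroExt.algebraMap_eq_inl]

lemma dP_zero [Fintype F] (h2 : (2 : F) ≠ 0) {H : Subgroup (symplecticGroup (Fin m) F)} {P : MvPolynomial (Sym2 (Ix m)) F}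
    (hP : ∀ g ∈ H, (1 + (g : Mt m F)).det ≠ 0 → MvPolynomial.eval (psi (g : Mt m F)) P = 0)
    {D : ℕ} (hD : ∀ (h X : Mt m F),
    (kap ((Polynomial.X : Polynomial F) • (Polynomial.C.mapMatrix X))).natDegree ≤ D ∧
    (Mn (Polynomial.C.mapMatrix h) (Polynomial.C.mapMatrix X) (Polynomial.X : Polynomial F)).det.natDegree ≤ D ∧
    ∀ i j, (Nu (Polynomial.C.mapMatrix h) (Polynomial.C.mapMatrix X) (Polynomial.X : Polynomial F) i j).natDegree ≤ D)
    (hq : (P.totalDegree + 2) * D < Fintype.card F)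
    {h : symplecticGroup (Fin m) F} (hh : h ∈ H) (hd : (1 + (h : Mt m F)).det ≠ 0) {X : Mt m F} (hX : X ∈ XH H) :
    ∑ z, ent (J (Fin m) F * ((1 + (h : Mt m F))⁻¹ * (h : Mt m F) * X * (1 + (h : Mt m F))⁻¹)) z *
      MvPolynomial.eval (psi (h : Mt m F)) (MvPolynomial.pderiv z P) = 0 := by
  set hm' : Mt m F := (h : Mt m F) with hhm
  have hp0 : ppol P (Polynomial.C.mapMatrix hm') (Polynomial.C.mapMatrix X) (Polynomial.X : Polynomial F) = 0 := by
    refine poly_zero _ _ ?_ hq fun s => ?_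
    · obtain ⟨d1, d2, d3⟩ := hD hm' X
      rw [ppol]
      refine Polynomial.natDegree_mul_le.trans ?_
      have a1 := Polynomial.natDegree_mul_le.trans (add_le_add d1 d2)
      have a2 := hm_natDegree P _ _ D (fun z => d3 (Quot.out z).1 (Quot.out z).2) d2
      calc _ ≤ _ := add_le_add a1 a2
        _ = _ := by ring
    · have := ppol_map (Polynomial.aeval s : Polynomial F →ₐ[F] F) P (Polynomial.C.mapMatrix hm') (Polynomial.C.mapMatrix X) Polynomial.X
      rw [Polynomial.coe_aeval_eq_eval] at this
      rw [this]
      have e : ∀ A : Mt m F, (Polynomial.aeval s : Polynomial F →ₐ[F] F).toRingHom.mapMatrix (Polynomial.C.mapMatrix A) = A := by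
        intro A; ext i j; simp
      rw [e, e]
      simpa using ppol_zero hP hh hX s
  have hk := ppol_map (Polynomial.aeval (DualNumber.eps : DualNumber F)) P (Polynomial.C.mapMatrix hm') (Polynomial.C.mapMatrix X) Polynomial.X
  let ι : F →+* DualNumber F := algebraMap F (DualNumber F)
  have e : ∀ A : Mt m F, (Polynomial.aeval (DualNumber.eps : DualNumber F)).toRingHom.mapMatrix (Polynomial.C.mapMatrix A) = ι.mapMatrix A := by
    intro A; ext1 i j; simp [ι]
  rw [e, e, hp0, map_zero, Polynomial.aeval_X, ppol] at hk
  have hee : (DualNumber.eps : DualNumber F) * DualNumber.eps = 0 := DualNumber.eps_mul_eps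
  set E : DualNumber F := DualNumber.eps with hE
  set κ := kap (E • ι.mapMatrix X) with hκ
  have u1 : IsUnit κ := kap_dual_unit (ι.mapMatrix X) _ hee
  set k := (1 + hm')⁻¹ with hkk
  have hkd : (1 + hm') * k = 1 := Matrix.mul_nonsing_inv _ (isUnit_iff_ne_zero.2 hd)
  set Mn' := Mn (ι.mapMatrix hm') (ι.mapMatrix X) E with hMn
  let M := 1 + ι.mapMatrix hm' * (1 - (4 * E) • ι.mapMatrix X)
  let T := ι.mapMatrix k + (4 * E) • ι.mapMatrix (k * hm' * X * k)
  have hM : Mn' = κ • M := by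
    rw [hMn, Mn, Nm_dual _ _ hee, smul_add, mul_smul_comm]
  have hT : M * T = 1 := by
    have h16 : (4 * E) * (4 * E) = 0 := by linear_combination (16) * hee
    have a1 : M = ι.mapMatrix (1 + hm') - (4 * E) • ι.mapMatrix (hm' * X) := by
      simp only [M, mul_sub, mul_one, map_add, map_one, map_mul, mul_smul_comm]; abel
    have a2 : (1 + hm') * (k * hm' * X * k) = hm' * X * k := by
      rw [← mul_assoc, ← mul_assoc, ← mul_assoc, hkd, one_mul]
    rw [a1]
    simp only [T, sub_mul, mul_add, smul_mul_assoc, mul_smul_comm, smul_smul, h16, zero_smul, smul_add, smul_sub]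
    rw [← map_mul, ← map_mul, ← map_mul, hkd, a2, map_one]
    abel
  have u2 : IsUnit Mn'.det := by
    rw [hM, det_smul]
    refine (u1.pow _).mul ?_
    have := congrArg det hT
    rw [det_mul, det_one] at this
    exact IsUnit.of_mul_eq_one _ this
  have hN : ent (Nu (ι.mapMatrix hm') (ι.mapMatrix X) E) = fun z => Mn'.det * ent (J (Fin m) (DualNumber F) * T) z := by
    rw [Nu, ← hκ, ← hMn, adj_lem hM hT, mul_smul_comm, ent_smul]
  rw [hN, hm_scale] at hk
  have hk := hk.symm
  rw [(u1.mul u2).mul_right_eq_zero, (u2.pow _).mul_right_eq_zero] at hk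
  have hJT : ent (J (Fin m) (DualNumber F) * T) = fun z => algebraMap F (DualNumber F) (psi hm' z) +
      DualNumber.eps * algebraMap F (DualNumber F) (4 * ent (J (Fin m) F * (k * hm' * X * k)) z) := by
    funext z
    have : J (Fin m) (DualNumber F) * T = ι.mapMatrix (J (Fin m) F * k) + (4 * E) • ι.mapMatrix (J (Fin m) F * (k * hm' * X * k)) := by
      simp only [T, mul_add, mul_smul_comm]
      rw [← map_J' ι, ← map_mul, ← map_mul]
    rw [this, psi, ← hkk, map_mul (algebraMap F (DualNumber F)), map_ofNat (algebraMap F (DualNumber F)), ← hE]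
    simp only [ent, Matrix.add_apply, Matrix.smul_apply, RingHom.mapMatrix_apply, Matrix.map_apply, smul_eq_mul, ι]
    ring
  rw [hJT, aeval_dual] at hk
  have h4 := congrArg TrivSqZeroExt.snd hk
  rw [dual_snd, TrivSqZeroExt.snd_zero] at h4
  simp only [mul_assoc] at h4
  rw [← Finset.mul_sum, mul_eq_zero] at h4
  rcases h4 with h4 | h4
  · exfalso; apply h2
    have : (2 : F) * 2 = 0 := by rw [← h4]; norm_num
    simpa using this
  · simp only [mul_assoc]; exact h4

lemma deriv_vanish [Fintype F] (h2 : (2 : F) ≠ 0) {H : Subgroup (symplecticGroup (Fin m) F)} {P : MvPolynomial (Sym2 (Ix m)) F}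
    (hP : ∀ g ∈ H, (1 + (g : Mt m F)).det ≠ 0 → MvPolynomial.eval (psi (g : Mt m F)) P = 0)
    {D : ℕ} (hD : ∀ (h X : Mt m F),
    (kap ((Polynomial.X : Polynomial F) • (Polynomial.C.mapMatrix X))).natDegree ≤ D ∧
    (Mn (Polynomial.C.mapMatrix h) (Polynomial.C.mapMatrix X) (Polynomial.X : Polynomial F)).det.natDegree ≤ D ∧
    ∀ i j, (Nu (Polynomial.C.mapMatrix h) (Polynomial.C.mapMatrix X) (Polynomial.X : Polynomial F) i j).natDegree ≤ D)
    (hq : (P.totalDegree + 2) * D < Fintype.card F)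
    (hspan : ∀ X : Mt m F, (J (Fin m) F * X).IsSymm → X ∈ Submodule.span F (XH H))
    (z : Sym2 (Ix m))
    {h : symplecticGroup (Fin m) F} (hh : h ∈ H) (hd : (1 + (h : Mt m F)).det ≠ 0) :
    MvPolynomial.eval (psi (h : Mt m F)) (MvPolynomial.pderiv z P) = 0 := by
  classical
  have key : ∀ X ∈ Submodule.span F (XH H), ∑ z, ent (J (Fin m) F * ((1 + (h : Mt m F))⁻¹ * (h : Mt m F) * X * (1 + (h : Mt m F))⁻¹)) z *
      MvPolynomial.eval (psi (h : Mt m F)) (MvPolynomial.pderiv z P) = 0 := by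
    intro X hX
    induction hX using Submodule.span_induction with
    | mem x hx => exact dP_zero h2 hP hD hq hh hd hx
    | zero => simp [ent]
    | add x y _ _ hx hy =>
      have := congrArg₂ (· + ·) hx hy
      simp only [← Finset.sum_add_distrib, add_zero] at this
      rw [← this]
      refine Finset.sum_congr rfl fun z _ => ?_
      simp only [mul_add, add_mul, ent, Matrix.add_apply]
    | smul a x _ hx =>
      have := congrArg (a * ·) hx
      simp only [Finset.mul_sum, mul_zero] at this
      rw [← this]
      refine Finset.sum_congr rfl fun z _ => ?_
      simp only [mul_smul_comm, smul_mul_assoc, ent, Matrix.smul_apply, smul_eq_mul, mul_assoc]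
  let Ez : Mt m F := Matrix.of fun i j => if s(i, j) = z then 1 else 0
  have hEz : Ezᵀ = Ez := by
    ext i j
    simp only [Ez, transpose_apply, Matrix.of_apply, Sym2.eq_swap]
  have hJ2 : J (Fin m) F * J (Fin m) F = -1 := J_squared (Fin m) F
  set hi : Mt m F := ((h⁻¹ : symplecticGroup (Fin m) F) : Mt m F) with hhi
  let X : Mt m F := hi * (1 + (h : Mt m F)) * (-J (Fin m) F * Ez) * (1 + (h : Mt m F))
  have hJh : J (Fin m) F * hi = (h : Mt m F)ᵀ * J (Fin m) F := by
    have := Sp_J h⁻¹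
    rwa [inv_inv] at this
  have hX : (J (Fin m) F * X).IsSymm := by
    have : J (Fin m) F * X = (1 + (h : Mt m F))ᵀ * Ez * (1 + (h : Mt m F)) := by
      calc J (Fin m) F * X = -(J (Fin m) F * hi * (1 + (h : Mt m F)) * J (Fin m) F * Ez * (1 + (h : Mt m F))) := by
            simp only [X]; noncomm_ring
        _ = -(((h : Mt m F)ᵀ * J (Fin m) F + J (Fin m) F * (hi * (h : Mt m F))) * J (Fin m) F * Ez * (1 + (h : Mt m F))) := by
            rw [← hJh]; noncomm_ring
        _ = -(((h : Mt m F)ᵀ + 1) * (J (Fin m) F * J (Fin m) F) * Ez * (1 + (h : Mt m F))) := by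
            rw [hhi, Sp_inv_mul]; noncomm_ring
        _ = _ := by rw [hJ2, transpose_add, transpose_one, add_comm]; noncomm_ring
    rw [this, IsSymm, transpose_mul, transpose_mul, hEz, transpose_transpose, ← mul_assoc]
  have h3 := key X (hspan X hX)
  have hk1 : (1 + (h : Mt m F)) * (1 + (h : Mt m F))⁻¹ = 1 := Matrix.mul_nonsing_inv _ (isUnit_iff_ne_zero.2 hd)
  have hk2 : (1 + (h : Mt m F))⁻¹ * (1 + (h : Mt m F)) = 1 := Matrix.nonsing_inv_mul _ (isUnit_iff_ne_zero.2 hd)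
  have h4 : J (Fin m) F * ((1 + (h : Mt m F))⁻¹ * (h : Mt m F) * X * (1 + (h : Mt m F))⁻¹) = Ez := by
    set k := (1 + (h : Mt m F))⁻¹
    calc _ = J (Fin m) F * (k * ((h : Mt m F) * hi) * (1 + (h : Mt m F)) * (-J (Fin m) F * Ez) * ((1 + (h : Mt m F)) * k)) := by
          simp only [X, mul_assoc]
      _ = J (Fin m) F * (k * (1 + (h : Mt m F)) * (-J (Fin m) F * Ez)) := by
          rw [hhi, Sp_mul_inv, hk1, mul_one, mul_one]
      _ = -(J (Fin m) F * J (Fin m) F * Ez) := by rw [hk2]; noncomm_ring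
      _ = _ := by rw [hJ2]; simp
  rw [h4, Finset.sum_eq_single z] at h3
  · have : ent Ez z = 1 := by
      have : Sym2.mk (Quot.out z).1 (Quot.out z).2 = z := Quot.out_eq z
      simp [ent, Ez, this]
    rwa [this, one_mul] at h3
  · intro w _ hw
    have : ent Ez w = 0 := by
      have : Sym2.mk (Quot.out w).1 (Quot.out w).2 = w := Quot.out_eq w
      simp [ent, Ez, this, hw]
    rw [this, zero_mul]
  · simp

end growthtop

section growthtop2
variable {m : ℕ} {F : Type} [Field F]

lemma vanish_all [Fintype F] (h2 : (2 : F) ≠ 0) {H : Subgroup (symplecticGroup (Fin m) F)}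
    {D : ℕ} (hD : ∀ (h X : Mt m F),
    (kap ((Polynomial.X : Polynomial F) • (Polynomial.C.mapMatrix X))).natDegree ≤ D ∧
    (Mn (Polynomial.C.mapMatrix h) (Polynomial.C.mapMatrix X) (Polynomial.X : Polynomial F)).det.natDegree ≤ D ∧
    ∀ i j, (Nu (Polynomial.C.mapMatrix h) (Polynomial.C.mapMatrix X) (Polynomial.X : Polynomial F) i j).natDegree ≤ D)
    (hspan : ∀ X : Mt m F, (J (Fin m) F * X).IsSymm → X ∈ Submodule.span F (XH H)) (d : ℕ) :
    ∀ (P : MvPolynomial (Sym2 (Ix m)) F), P.totalDegree = d → (P.totalDegree + 2) * D < Fintype.card F →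
    (∀ g ∈ H, (1 + (g : Mt m F)).det ≠ 0 → MvPolynomial.eval (psi (g : Mt m F)) P = 0) → P = 0 := by
  induction d using Nat.strong_induction_on with
  | _ d ih =>
  intro P hd hq hP
  have mono : ∀ Q : MvPolynomial (Sym2 (Ix m)) F, Q.totalDegree < P.totalDegree → (Q.totalDegree + 2) * D < Fintype.card F := by
    intro Q hQ
    exact lt_of_le_of_lt (Nat.mul_le_mul_right _ (by omega)) hq
  rcases Nat.eq_zero_or_pos P.totalDegree with h0 | h0
  · rw [MvPolynomial.totalDegree_eq_zero_iff_eq_C] at h0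
    have h1 : (1 + ((1 : symplecticGroup (Fin m) F) : Mt m F)).det ≠ 0 := by
      have : (1 + ((1 : symplecticGroup (Fin m) F) : Mt m F)) = (2 : F) • 1 := by
        rw [two_smul]; rfl
      rw [this, det_smul, det_one, mul_one]
      exact pow_ne_zero _ h2
    have := hP 1 (one_mem _) h1
    rw [h0, MvPolynomial.eval_C] at this
    rw [h0, this, map_zero]
  · have hz : ∀ z, MvPolynomial.pderiv z P = 0 := by
      intro z
      have hlt := pderiv_deg P z h0
      refine ih _ (hd ▸ hlt) _ rfl (mono _ hlt) fun g hg hgd => ?_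
      exact deriv_vanish h2 hP hD hq hspan z hg hgd
    obtain ⟨p, Q, hp, e, hlt⟩ := pderiv_zero P hz h0
    have : Q = 0 := by
      refine ih _ (hd ▸ hlt) _ rfl (mono _ hlt) fun g hg hgd => ?_
      have := hP g hg hgd
      rw [e, map_pow] at this
      exact pow_eq_zero_iff (by omega) |>.1 this
    rw [e, this, zero_pow (by omega)]

/-- polynomial with given coefficients in a box -/
noncomputable def boxp (k : ℕ) (a : (Sym2 (Ix m) → Fin k) → F) : MvPolynomial (Sym2 (Ix m)) F :=
  ∑ μ, MvPolynomial.monomial (Finsupp.equivFunOnFinite.symm fun i => (μ i : ℕ)) (a μ)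

lemma boxp_coeff (k : ℕ) (a : (Sym2 (Ix m) → Fin k) → F) (μ : Sym2 (Ix m) → Fin k) :
    (boxp k a).coeff (Finsupp.equivFunOnFinite.symm fun i => (μ i : ℕ)) = a μ := by
  classical
  rw [boxp, MvPolynomial.coeff_sum, Finset.sum_eq_single μ]
  · rw [MvPolynomial.coeff_monomial, if_pos rfl]
  · intro ν _ hν
    rw [MvPolynomial.coeff_monomial, if_neg]
    intro h
    apply hν
    have := Finsupp.equivFunOnFinite.symm.injective h
    funext i
    exact Fin.ext (congrFun this i)
  · simp

lemma boxp_deg (k : ℕ) (a : (Sym2 (Ix m) → Fin k) → F) :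
    (boxp k a).totalDegree ≤ Fintype.card (Sym2 (Ix m)) * k := by
  apply MvPolynomial.totalDegree_finsetSum_le
  intro μ _
  refine (MvPolynomial.totalDegree_monomial_le _ _).trans ?_
  rw [Finsupp.sum_fintype _ _ (fun _ => rfl)]
  refine (Finset.sum_le_card_nsmul _ _ k fun i _ => (μ i).2.le).trans ?_
  simp

lemma psi_inj {g g' : symplecticGroup (Fin m) F} (h : (1 + (g : Mt m F)).det ≠ 0) (h' : (1 + (g' : Mt m F)).det ≠ 0)
    (e : psi (g : Mt m F) = psi (g' : Mt m F)) : g = g' := by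
  have key : ∀ g : symplecticGroup (Fin m) F, (1 + (g : Mt m F)).det ≠ 0 →
      J (Fin m) F * (1 + (g : Mt m F))⁻¹ - (J (Fin m) F * (1 + (g : Mt m F))⁻¹)ᵀ = J (Fin m) F := by
    intro g h
    have h1 : (g : Mt m F)ᵀ * J (Fin m) F * g = J (Fin m) F := (SymplecticGroup.mem_iff').1 g.2
    set k := (1 + (g : Mt m F))⁻¹
    have hk1 : (1 + (g : Mt m F)) * k = 1 := Matrix.mul_nonsing_inv _ (isUnit_iff_ne_zero.2 h)
    have hk2 : kᵀ * (1 + (g : Mt m F))ᵀ = 1 := by rw [← transpose_mul, hk1, transpose_one]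
    have h3 : (1 + (g : Mt m F))ᵀ * J (Fin m) F + J (Fin m) F * (1 + (g : Mt m F)) =
        (1 + (g : Mt m F))ᵀ * J (Fin m) F * (1 + (g : Mt m F)) := by
      rw [transpose_add, transpose_one]
      calc _ = (J (Fin m) F + J (Fin m) F) + (g : Mt m F)ᵀ * J (Fin m) F + J (Fin m) F * g := by noncomm_ring
        _ = (J (Fin m) F + (g : Mt m F)ᵀ * J (Fin m) F * g) + (g : Mt m F)ᵀ * J (Fin m) F + J (Fin m) F * g := by rw [h1]
        _ = _ := by noncomm_ring
    have h4 := congrArg (fun A => kᵀ * A * k) h3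
    simp only [mul_add, add_mul] at h4
    rw [transpose_mul, J_transpose, mul_neg, sub_neg_eq_add]
    have e1 : kᵀ * ((1 + (g : Mt m F))ᵀ * J (Fin m) F) * k = J (Fin m) F * k := by
      rw [← mul_assoc, hk2, one_mul]
    have e2 : kᵀ * (J (Fin m) F * (1 + (g : Mt m F))) * k = kᵀ * J (Fin m) F := by
      rw [mul_assoc, mul_assoc, hk1, mul_one]
    have e3 : kᵀ * ((1 + (g : Mt m F))ᵀ * J (Fin m) F * (1 + (g : Mt m F))) * k = J (Fin m) F := by
      rw [mul_assoc, mul_assoc, hk1, mul_one, ← mul_assoc, hk2, one_mul]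
    calc _ = kᵀ * ((1 + (g : Mt m F))ᵀ * J (Fin m) F + J (Fin m) F * (1 + (g : Mt m F))) * k := by
            rw [mul_add, add_mul, e1, e2]
      _ = _ := by rw [h3, e3]
  have k1 := key g h
  have k2 := key g' h'
  set A := J (Fin m) F * (1 + (g : Mt m F))⁻¹ with hA
  set B := J (Fin m) F * (1 + (g' : Mt m F))⁻¹ with hB
  have hAB : A = B := by
    ext i j
    have e1 := congrFun e s(i, j)
    simp only [psi, ent, ← hA, ← hB] at e1
    have e2 : Sym2.mk (Quot.out s(i, j)).1 (Quot.out s(i, j)).2 = s(i, j) := Quot.out_eq s(i, j)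
    rw [Sym2.eq_iff] at e2
    rcases e2 with ⟨a, b⟩ | ⟨a, b⟩
    · rwa [a, b] at e1
    · rw [a, b] at e1
      have f1 := congrFun (congrFun k1 i) j
      have f2 := congrFun (congrFun k2 i) j
      simp only [Matrix.sub_apply, transpose_apply] at f1 f2
      rw [sub_eq_iff_eq_add] at f1 f2
      rw [f1, f2, e1]
  have hJ2 : J (Fin m) F * J (Fin m) F = -1 := J_squared (Fin m) F
  have h5 : (1 + (g : Mt m F))⁻¹ = (1 + (g' : Mt m F))⁻¹ := by
    have := congrArg (fun M => -(J (Fin m) F * M)) hAB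
    simp only [hA, hB, ← mul_assoc, hJ2] at this
    simpa using this
  have h6 : (1 + (g : Mt m F)) = (1 + (g' : Mt m F)) := by
    rw [← Matrix.nonsing_inv_nonsing_inv _ (isUnit_iff_ne_zero.2 h), h5, Matrix.nonsing_inv_nonsing_inv _ (isUnit_iff_ne_zero.2 h')]
  exact Subtype.ext (add_left_cancel h6)

theorem growth_top (m : ℕ) : ∃ q0 : ℕ, ∀ (F : Type) [Field F] [Fintype F], (2 : F) ≠ 0 → q0 ≤ Fintype.card F →
    ∀ H : Subgroup (symplecticGroup (Fin m) F),
    (∀ X : Mt m F, (J (Fin m) F * X).IsSymm → X ∈ Submodule.span F (XH H)) → H = ⊤ := by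
  obtain ⟨D1, hD1⟩ := half_good m
  obtain ⟨D, hD⟩ := deg_univ m
  set N := Fintype.card (Sym2 (Ix m)) with hN
  set c := D * (N + 2) + 1 with hc
  set n0 := 2 * (2 * c) ^ N with hn0
  refine ⟨2 * D1 + c + (2 * n0.factorial + 2), ?_⟩
  intro F _ _ h2 hq H hspan
  classical
  have : Finite (symplecticGroup (Fin m) F) := inferInstance
  refine index_top n0 (by omega) H ?_
  set q := Fintype.card F with hqd
  set k := q / c with hk
  have hcpos : 0 < c := by omega
  have hk1 : k * c ≤ q := Nat.div_mul_le_self _ _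
  have hk2 : q < (k + 1) * c := by
    rw [mul_comm]; exact Nat.lt_mul_div_succ q hcpos
  have hk0 : 1 ≤ k := by
    rw [hk, Nat.le_div_iff_mul_le hcpos]; omega
  have hkq : (N * k + 2) * D < q := by
    have : (N * k + 2) * D ≤ k * (D * (N + 2)) := by nlinarith [Nat.zero_le D]
    have h3 : k * c = k * (D * (N + 2)) + k := by rw [hc]; ring
    omega
  -- lower bound
  have hlow : k ^ N ≤ Nat.card H := by
    have inj : Function.Injective (fun (a : (Sym2 (Ix m) → Fin k) → F) (g : {g : H // (1 + ((g : symplecticGroup (Fin m) F) : Mt m F)).det ≠ 0}) =>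
        MvPolynomial.eval (psi ((g.1 : symplecticGroup (Fin m) F) : Mt m F)) (boxp k a)) := by
      intro a b hab
      have h0 : boxp k a - boxp k b = 0 := by
        have hdg : (boxp k a - boxp k b).totalDegree ≤ N * k :=
          (MvPolynomial.totalDegree_sub _ _).trans (max_le (boxp_deg k a) (boxp_deg k b))
        refine vanish_all h2 (hD F) hspan _ _ rfl (lt_of_le_of_lt (Nat.mul_le_mul_right _ (by omega)) hkq) ?_
        intro g hg hgd
        have := congrFun hab ⟨⟨g, hg⟩, hgd⟩
        simp only at this
        rw [map_sub, this, sub_self]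
      funext μ
      rw [← boxp_coeff k a μ, ← boxp_coeff k b μ, sub_eq_zero.1 h0]
    have h1 := Nat.card_le_card_of_injective _ inj
    rw [Nat.card_fun, Nat.card_fun, Nat.card_fun, Nat.card_eq_fintype_card (α := Fin k), Fintype.card_fin,
      Nat.card_eq_fintype_card (α := Sym2 (Ix m)), Nat.card_eq_fintype_card (α := F), ← hN, ← hqd] at h1
    have h3 := (Nat.pow_le_pow_iff_right (by omega : 1 < q)).1 h1
    exact h3.trans (Nat.card_le_card_of_injective _ Subtype.val_injective)
  have hup : Nat.card {g : symplecticGroup (Fin m) F // ¬ (1 + (g : Mt m F)).det = 0} ≤ q ^ N := by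
    have inj : Function.Injective (fun g : {g : symplecticGroup (Fin m) F // ¬ (1 + (g : Mt m F)).det = 0} => psi (g.1 : Mt m F)) := by
      intro g g' e
      exact Subtype.ext (psi_inj g.2 g'.2 e)
    have h1 := Nat.card_le_card_of_injective _ inj
    rwa [Nat.card_fun, Nat.card_eq_fintype_card (α := Sym2 (Ix m)), Nat.card_eq_fintype_card (α := F), ← hN, ← hqd] at h1
  have hsplit : Nat.card (symplecticGroup (Fin m) F) = Nat.card {g : symplecticGroup (Fin m) F // (1 + (g : Mt m F)).det = 0} +
      Nat.card {g : symplecticGroup (Fin m) F // ¬ (1 + (g : Mt m F)).det = 0} := by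
    rw [← Nat.card_sum]
    exact (Nat.card_congr (Equiv.sumCompl fun g : symplecticGroup (Fin m) F => (1 + (g : Mt m F)).det = 0)).symm
  have hh := hD1 F h2
  rw [← hqd] at hh
  have hbad : 2 * Nat.card {g : symplecticGroup (Fin m) F // (1 + (g : Mt m F)).det = 0} ≤ Nat.card (symplecticGroup (Fin m) F) := by
    by_contra hcon
    push Not at hcon
    set b := Nat.card {g : symplecticGroup (Fin m) F // (1 + (g : Mt m F)).det = 0}
    have h3 : (2 * D1 + 1) * b ≤ q * b := Nat.mul_le_mul_right _ (by omega)
    nlinarith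
  have hG : Nat.card (symplecticGroup (Fin m) F) ≤ 2 * q ^ N := by omega
  have hqk : q ≤ k * (2 * c) := by nlinarith
  have h5 : q ^ N ≤ k ^ N * (2 * c) ^ N := by
    rw [← mul_pow]; exact Nat.pow_le_pow_left hqk N
  have h6 : Nat.card H * H.index ≤ Nat.card H * n0 := by
    rw [Subgroup.card_mul_index, hn0]
    calc _ ≤ 2 * q ^ N := hG
      _ ≤ 2 * (k ^ N * (2 * c) ^ N) := by omega
      _ = k ^ N * (2 * (2 * c) ^ N) := by ring
      _ ≤ _ := Nat.mul_le_mul_right _ hlow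
  exact Nat.le_of_mul_le_mul_left h6 Nat.card_pos

end growthtop2

section Labs
variable {ι K : Type*} [Fintype ι] [DecidableEq ι] [Field K]

/-- preservation of W under Hadamard multiplication -/
def Pres (W : Submodule K (Matrix ι ι K)) (w : ι → ι → K) : Prop :=
  ∀ Y ∈ W, (Matrix.of fun k l => w k l * Y k l) ∈ W

lemma Pres.mul {W : Submodule K (Matrix ι ι K)} {v w : ι → ι → K} (hv : Pres W v) (hw : Pres W w) :
    Pres W (fun k l => v k l * w k l) := by
  intro Y hY
  have := hv _ (hw Y hY)
  convert this using 1
  ext k l; simp [mul_assoc]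

lemma Pres.add {W : Submodule K (Matrix ι ι K)} {v w : ι → ι → K} (hv : Pres W v) (hw : Pres W w) :
    Pres W (fun k l => v k l + w k l) := by
  intro Y hY
  have := W.add_mem (hv Y hY) (hw Y hY)
  convert this using 1
  ext k l; simp [add_mul]

lemma Pres.const {W : Submodule K (Matrix ι ι K)} (c : K) : Pres W (fun _ _ => c) := by
  intro Y hY
  exact W.smul_mem c hY

/-- delta -/
def dl (K : Type*) [Field K] (x y : ι) : K := if x = y then 1 else 0

/-- weight function -/
def wt (K : Type*) [Field K] (a a' k l : ι) : K :=
  (dl K k a - dl K k a') - (dl K l a - dl K l a')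

lemma wt_short {a a' b b' : ι} (h1 : a ≠ a') (h2 : b ≠ b') (h3 : a ≠ b) (h4 : a' ≠ b) (h5 : a ≠ b')
    (h6 : a' ≠ b') (k l : ι) : (wt K a a' k l * wt K b b' k l) * ((wt K a a' k l + 1) * (wt K b b' k l + (-1))) =
    if (k = a ∧ l = b) ∨ (k = b' ∧ l = a') then 4 else 0 := by
  have key : ∀ k : ι, k = a ∨ k = a' ∨ k = b ∨ k = b' ∨ (k ≠ a ∧ k ≠ a' ∧ k ≠ b ∧ k ≠ b') := by
    intro k; tauto
  unfold wt dl
  rcases key k with rfl | rfl | rfl | rfl | ⟨k1, k2, k3, k4⟩ <;> rcases key l with rfl | rfl | rfl | rfl | ⟨l1, l2, l3, l4⟩ <;>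
    simp [*, Ne.symm h1, Ne.symm h2, Ne.symm h3, Ne.symm h4, Ne.symm h5, Ne.symm h6] <;> norm_num

lemma wt_long {a a' : ι} (h1 : a ≠ a') (bar : ι → ι) (hb : ∀ c, bar c ≠ c) (ha : bar a = a') (ha' : bar a' = a) (hi : Function.Injective bar) (k l : ι) :
    (∏ c ∈ Finset.univ.filter (fun c => c ≠ a ∧ c ≠ a'), (1 + (-1) * (wt K c (bar c) k l * wt K c (bar c) k l))) *
      (wt K a a' k l * (wt K a a' k l + 2)) =
    if (k = a ∧ l = a') then 8 else 0 := by
  have gen : ∀ k l : ι, k ≠ a → k ≠ a' → (l = a ∨ l = a') →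
      (∏ c ∈ Finset.univ.filter (fun c => c ≠ a ∧ c ≠ a'), (1 + (-1) * (wt K c (bar c) k l * wt K c (bar c) k l))) = 0 := by
    intro k l k1 k2 hl
    apply Finset.prod_eq_zero (i := k) (by simp [k1, k2])
    have e1 : k ≠ bar k := (hb k).symm
    have e2 : l ≠ k := by rcases hl with rfl | rfl <;> [exact k1.symm; exact k2.symm]
    have e3 : l ≠ bar k := by
      rcases hl with rfl | rfl
      · rw [← ha']; intro h; exact k2 (hi h).symm
      · rw [← ha]; intro h; exact k1 (hi h).symm
    simp [wt, dl, e1, e2, e3]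
  have wsymm : ∀ c k l : ι, wt K c (bar c) k l * wt K c (bar c) k l = wt K c (bar c) l k * wt K c (bar c) l k := by
    intro c k l; unfold wt; ring
  have one : ∀ k l : ι, (k = a ∨ k = a') → (l = a ∨ l = a') →
      (∏ c ∈ Finset.univ.filter (fun c => c ≠ a ∧ c ≠ a'), (1 + (-1) * (wt K c (bar c) k l * wt K c (bar c) k l))) = 1 := by
    intro k l hk hl
    apply Finset.prod_eq_one
    intro c hc
    simp only [Finset.mem_filter, Finset.mem_univ, true_and] at hc
    have hc1 : bar c ≠ a := by rw [← ha']; intro h; exact hc.2 (hi h)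
    have hc2 : bar c ≠ a' := by rw [← ha]; intro h; exact hc.1 (hi h)
    rcases hk with rfl | rfl <;> rcases hl with rfl | rfl <;>
      simp [wt, dl, hc.1.symm, hc.2.symm, hc1.symm, hc2.symm]
  by_cases hk : k = a ∨ k = a'
  · by_cases hl : l = a ∨ l = a'
    · rw [one k l hk hl]
      rcases hk with rfl | rfl <;> rcases hl with rfl | rfl <;> simp [wt, dl, h1, h1.symm] <;> norm_num
    · push Not at hl
      simp only [wsymm _ k l]
      rw [gen l k hl.1 hl.2 hk, zero_mul, if_neg]
      exact fun h => hl.2 h.2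
  · push Not at hk
    rw [if_neg (fun h => hk.1 h.1)]
    by_cases hl : l = a ∨ l = a'
    · rw [gen k l hk.1 hk.2 hl, zero_mul]
    · push Not at hl
      have : wt K a a' k l = 0 := by simp [wt, dl, hk.1, hk.2, hl.1, hl.2]
      rw [this]; simp

/-- root element -/
def Rt (bar : ι → ι) (c : ι → K) (a b : ι) : Matrix ι ι K :=
  Matrix.single a b 1 + Matrix.single (bar b) (bar a) (c (bar a) / c b)

variable (h2 : (2 : K) ≠ 0) (bar : ι → ι) (hbb : ∀ c, bar (bar c) = c) (hb : ∀ c, bar c ≠ c) (c : ι → K)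
  (hc0 : ∀ i, c i ≠ 0) (hc : ∀ i, c (bar i) = - c i) (W : Submodule K (Matrix ι ι K))
  (hrel : ∀ X ∈ W, ∀ a b, c (bar a) * X a b = c b * X (bar b) (bar a))
  (hbr : ∀ X ∈ W, ∀ Y ∈ W, X * Y - Y * X ∈ W)
  (hdiag : ∀ d : ι → K, (∀ i, d (bar i) = - d i) → Matrix.diagonal d ∈ W)
include h2 hbb hb hc0 hc hrel hbr hdiag

omit h2 hc0 hc hrel in
lemma pres_wt (a : ι) : Pres W (wt K a (bar a)) := by
  intro Y hY
  have hi : ∀ x y, bar x = y ↔ x = bar y := fun x y => ⟨fun h => by rw [← h, hbb], fun h => by rw [h, hbb]⟩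
  have := hbr _ (hdiag (fun k => dl K k a - dl K k (bar a)) (by
    intro i
    simp only [dl, hi, hbb]; ring)) Y hY
  convert this using 1
  ext k l
  simp [wt, Matrix.diagonal_mul, Matrix.mul_diagonal]; ring

lemma rt_mem {Y : Matrix ι ι K} (hY : Y ∈ W) {a b : ι} (hab : a ≠ b) (h : Y a b ≠ 0) : Rt bar c a b ∈ W := by
  have hinj : Function.Injective bar := fun x y e => by rw [← hbb x, e, hbb]
  have hw := pres_wt bar hbb hb W hbr hdiag
  by_cases h4 : bar a = b
  · subst h4
    have hp : Pres W (fun k l => (∏ c ∈ Finset.univ.filter (fun c => c ≠ a ∧ c ≠ bar a), (1 + (-1) * (wt K c (bar c) k l * wt K c (bar c) k l))) *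
      (wt K a (bar a) k l * (wt K a (bar a) k l + 2))) := by
      refine Pres.mul ?_ ((hw a).mul ((hw a).add (Pres.const 2)))
      have : ∀ s : Finset ι, Pres W (fun k l => ∏ c ∈ s, (1 + (-1) * (wt K c (bar c) k l * wt K c (bar c) k l))) := by
        intro s
        induction s using Finset.induction_on with
        | empty => simpa using Pres.const 1
        | insert x s hx ih =>
          simp only [Finset.prod_insert hx]
          exact Pres.mul ((Pres.const 1).add ((Pres.const (-1)).mul ((hw x).mul (hw x)))) ih
      exact this _
    have h8 := hp Y hY
    have e : Rt bar c a (bar a) = (2 / (8 * Y a (bar a))) • (Matrix.of fun k l => ((∏ c ∈ Finset.univ.filter (fun c => c ≠ a ∧ c ≠ bar a), (1 + (-1) * (wt K c (bar c) k l * wt K c (bar c) k l))) *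
      (wt K a (bar a) k l * (wt K a (bar a) k l + 2))) * Y k l) := by
      ext k l
      have h8 : (8 : K) ≠ 0 := by
        have : (8 : K) = 2 ^ 3 := by norm_num
        rw [this]; exact pow_ne_zero _ h2
      simp only [wt_long hab bar hb rfl (hbb a) hinj, Matrix.smul_apply, Matrix.of_apply, Rt, hbb, Matrix.add_apply, div_self (hc0 _), smul_eq_mul,
        Matrix.single_apply]
      by_cases hh : k = a ∧ l = bar a
      · rw [if_pos hh, if_pos ⟨hh.1.symm, hh.2.symm⟩]
        rw [hh.1, hh.2]; field_simp; norm_num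
      · rw [if_neg hh, if_neg (fun h => hh ⟨h.1.symm, h.2.symm⟩)]; simp
    rw [e]; exact W.smul_mem _ h8
  · have h5 : a ≠ bar b := fun e => h4 (by rw [e, hbb])
    have h6 : bar a ≠ bar b := fun e => hab (hinj e)
    have hp := ((hw a).mul (hw b)).mul (((hw a).add (Pres.const 1)).mul ((hw b).add (Pres.const (-1))))
    have h8 := hp Y hY
    simp only [wt_short (K := K) (hb a).symm (hb b).symm hab h4 h5 h6] at h8
    have h44 : (4 : K) ≠ 0 := by
      have : (4 : K) = 2 ^ 2 := by norm_num
      rw [this]; exact pow_ne_zero _ h2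
    have hr := hrel Y hY a b
    have e : Rt bar c a b = (1 / (4 * Y a b)) • (Matrix.of fun k l => (if (k = a ∧ l = b) ∨ (k = bar b ∧ l = bar a) then 4 else 0) * Y k l) := by
      ext k l
      simp only [Matrix.smul_apply, Matrix.of_apply, Rt, Matrix.add_apply, smul_eq_mul, Matrix.single_apply]
      by_cases hh : k = a ∧ l = b
      · have hn : ¬ (bar b = k ∧ bar a = l) := fun h => h5 (by rw [← hh.1, h.1])
        rw [if_pos ⟨hh.1.symm, hh.2.symm⟩, if_neg hn, if_pos (Or.inl hh), hh.1, hh.2]; field_simp; norm_num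
      · by_cases hh' : k = bar b ∧ l = bar a
        · rw [if_neg (fun h => hh ⟨h.1.symm, h.2.symm⟩), if_pos ⟨hh'.1.symm, hh'.2.symm⟩, if_pos (Or.inr hh'), hh'.1, hh'.2]
          have := hc0 b
          field_simp; linear_combination hr
        · rw [if_neg (fun h => hh ⟨h.1.symm, h.2.symm⟩), if_neg (fun h => hh' ⟨h.1.symm, h.2.symm⟩), if_neg (by tauto)]; simp
    rw [e]; exact W.smul_mem _ h8

omit hrel hbr hdiag in
lemma rt_br {x y z : ι} (hxy : x ≠ y) (hyz : y ≠ z) (hxz : x ≠ z) :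
    (Rt bar c x y * Rt bar c y z - Rt bar c y z * Rt bar c x y) x z ≠ 0 := by
  have hinj : Function.Injective bar := fun x y e => by rw [← hbb x, e, hbb]
  have hsm : ∀ (a b a' b' : ι) (r s : K), (Matrix.single a b r * Matrix.single a' b' s) x z =
      if b = a' ∧ a = x ∧ b' = z then r * s else 0 := by
    intro a b a' b' r s
    by_cases h : b = a'
    · subst h; rw [Matrix.single_mul_single_same, Matrix.single_apply]; simp
    · rw [Matrix.single_mul_single_of_ne _ _ _ _ h]; simp [h]
  have hbx : ∀ x y, bar x = y ↔ x = bar y := fun x y => ⟨fun h => by rw [← h, hbb], fun h => by rw [h, hbb]⟩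
  have e1 : (Rt bar c x y * Rt bar c y z) x z = 1 + (if y = bar z then 1 else 0) + (if bar x = y then 1 else 0) := by
    simp only [Rt, mul_add, add_mul, Matrix.add_apply, hsm]
    have t1 : ¬ (bar x = bar z ∧ bar y = x ∧ bar y = z) := fun h => hxz (hinj h.1)
    rw [if_neg t1]
    have t2 : (if y = bar z ∧ x = x ∧ bar y = z then 1 * (c (bar y) / c z) else 0) = (if y = bar z then 1 else 0) := by
      by_cases h : y = bar z
      · rw [if_pos ⟨h, rfl, by rw [h, hbb]⟩, if_pos h, h, hbb, div_self (hc0 _), one_mul]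
      · rw [if_neg (fun t => h t.1), if_neg h]
    have t3 : (if bar x = y ∧ bar y = x ∧ z = z then (c (bar x) / c y) * 1 else 0) = (if bar x = y then 1 else 0) := by
      by_cases h : bar x = y
      · rw [if_pos ⟨h, by rw [← h, hbb], rfl⟩, if_pos h, h, div_self (hc0 _), one_mul]
      · rw [if_neg (fun t => h t.1), if_neg h]
    simp only [true_and, and_true] at t2 t3 ⊢
    rw [t2, t3]; simp; ring
  have e2 : (Rt bar c y z * Rt bar c x y) x z = if z = bar x then -1 else 0 := by
    simp only [Rt, mul_add, add_mul, Matrix.add_apply, hsm]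
    have t1 : ¬ (z = x ∧ y = x ∧ y = z) := fun h => hxy h.2.1.symm
    have t2 : ¬ (z = bar y ∧ y = x ∧ bar x = z) := fun h => hxy h.2.1.symm
    have t3 : ¬ (bar y = x ∧ bar z = x ∧ y = z) := fun h => hyz h.2.2
    rw [if_neg t1, if_neg t2, if_neg t3]
    by_cases h : z = bar x
    · rw [if_pos ⟨trivial, by rw [h, hbb], h.symm⟩, if_pos h, h]
      have hx := hc0 (bar x)
      have hy := hc0 y
      rw [hc y]; field_simp; ring
    · rw [if_neg (fun t => h t.2.2.symm), if_neg h]; ring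
  rw [Matrix.sub_apply, e1, e2]
  by_cases hz : z = bar x
  · have n1 : y ≠ bar z := by rw [hz, hbb]; exact hxy.symm
    have n2 : bar x ≠ y := by rw [← hz]; exact hyz.symm
    rw [if_pos hz, if_neg n1, if_neg n2]; norm_num; exact h2
  · rw [if_neg hz]
    by_cases hy : y = bar z
    · have : bar x ≠ y := fun h => hxz (hinj (h.trans hy))
      rw [if_pos hy, if_neg this]; norm_num; exact h2
    · by_cases hx : bar x = y
      · rw [if_neg hy, if_pos hx]; norm_num; exact h2
      · rw [if_neg hy, if_neg hx]; norm_num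

theorem L_abs (halg : ∀ S : Subalgebra K (Matrix ι ι K), (∀ X ∈ W, X ∈ S) → S = ⊤)
    (X : Matrix ι ι K) (hX : ∀ a b, c (bar a) * X a b = c b * X (bar b) (bar a)) : X ∈ W := by
  have hinj : Function.Injective bar := fun x y e => by rw [← hbb x, e, hbb]
  have hrt := @rt_mem ι K _ _ _ h2 bar hbb hb c hc0 hc W hrel hbr hdiag
  let rel : ι → ι → Prop := fun a b => a = b ∨ ∃ Y ∈ W, Y a b ≠ 0
  have htr : ∀ x y z, rel x y → rel y z → rel x z := by
    intro x y z hxy hyz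
    by_cases h1 : x = y
    · rwa [h1]
    by_cases h3 : y = z
    · rwa [← h3]
    by_cases h4 : x = z
    · exact Or.inl h4
    rcases hxy with h | ⟨Y, hY, hY0⟩
    · exact absurd h h1
    rcases hyz with h | ⟨Z, hZ, hZ0⟩
    · exact absurd h h3
    refine Or.inr ⟨_, hbr _ (hrt hY h1 hY0) _ (hrt hZ h3 hZ0), rt_br h2 bar hbb hb c hc0 hc h1 h3 h4⟩
  let S : Subalgebra K (Matrix ι ι K) :=
    { carrier := {M | ∀ a b, M a b ≠ 0 → rel a b}
      mul_mem' := by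
        intro M N hM hN a b hab
        rw [Matrix.mul_apply] at hab
        obtain ⟨k, _, hk⟩ := Finset.exists_ne_zero_of_sum_ne_zero hab
        exact htr _ _ _ (hM _ _ (left_ne_zero_of_mul hk)) (hN _ _ (right_ne_zero_of_mul hk))
      add_mem' := by
        intro M N hM hN a b hab
        rw [Matrix.add_apply] at hab
        by_cases h : M a b = 0
        · rw [h, zero_add] at hab; exact hN _ _ hab
        · exact hM _ _ h
      algebraMap_mem' := by
        intro r a b hab
        rw [Matrix.algebraMap_matrix_apply] at hab
        by_cases h : a = b
        · exact Or.inl h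
        · rw [if_neg h] at hab; exact absurd rfl hab }
  have hS := halg S (fun Y hY a b hab => Or.inr ⟨Y, hY, hab⟩)
  have hall : ∀ a b, a ≠ b → Rt bar c a b ∈ W := by
    intro a b hab
    have : Matrix.single a b (1 : K) ∈ S := by rw [hS]; trivial
    rcases this a b (by simp) with h | ⟨Y, hY, hY0⟩
    · exact absurd h hab
    · exact hrt hY hab hY0
  have hd : Matrix.diagonal (fun i => X i i) ∈ W := by
    apply hdiag
    intro i
    have := hX i i
    rw [hc] at this
    have h3 := hc0 i
    apply mul_left_cancel₀ h3
    linear_combination -this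
  have hsum : ∑ t : ι × ι, (if t.1 = t.2 then (0 : Matrix ι ι K) else (X t.1 t.2 / 2) • Rt bar c t.1 t.2) ∈ W := by
    apply W.sum_mem
    intro t _
    split_ifs with h
    · exact W.zero_mem
    · exact W.smul_mem _ (hall _ _ h)
  have : X = Matrix.diagonal (fun i => X i i) +
      ∑ t : ι × ι, (if t.1 = t.2 then (0 : Matrix ι ι K) else (X t.1 t.2 / 2) • Rt bar c t.1 t.2) := by
    ext k l
    rw [Matrix.add_apply, Matrix.sum_apply]
    have e : ∀ t : ι × ι, (if t.1 = t.2 then (0 : Matrix ι ι K) else (X t.1 t.2 / 2) • Rt bar c t.1 t.2) k l =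
        (if t = (k, l) then (if k = l then 0 else X k l / 2) else 0) +
        (if t = (bar l, bar k) then (if k = l then 0 else X k l / 2) else 0) := by
      rintro ⟨a, b⟩
      by_cases hab : a = b
      · subst hab
        have t1 : (if (a, a) = (k, l) then (if k = l then (0 : K) else X k l / 2) else 0) = 0 := by
          by_cases h : (a, a) = (k, l)
          · rw [Prod.mk.injEq] at h
            rw [if_pos (h.1.symm.trans h.2)]; simp
          · rw [if_neg h]
        have t2 : (if (a, a) = (bar l, bar k) then (if k = l then (0 : K) else X k l / 2) else 0) = 0 := by
          by_cases h : (a, a) = (bar l, bar k)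
          · rw [Prod.mk.injEq] at h
            rw [if_pos (hinj (h.2.symm.trans h.1))]; simp
          · rw [if_neg h]
        rw [t1, t2]; simp
      · rw [if_neg hab]
        simp only [Rt, Matrix.smul_apply, Matrix.add_apply, Matrix.single_apply, smul_eq_mul, mul_add, Prod.mk.injEq]
        congr 1
        · by_cases h : a = k ∧ b = l
          · have hkl : k ≠ l := by rw [← h.1, ← h.2]; exact hab
            rw [if_pos h, if_pos h, if_neg hkl, h.1, h.2, mul_one]
          · rw [if_neg h, if_neg h, mul_zero]
        · by_cases h : bar b = k ∧ bar a = l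
          · have hkl : k ≠ l := by rw [← h.1, ← h.2]; exact fun h => hab (hinj h).symm
            have h' : a = bar l ∧ b = bar k := ⟨by rw [← h.2, hbb], by rw [← h.1, hbb]⟩
            rw [if_pos h, if_pos h', if_neg hkl]
            have := hX a b
            rw [h.1, h.2] at this
            have hb0 := hc0 b
            rw [h.2]
            field_simp; linear_combination this
          · have h' : ¬ (a = bar l ∧ b = bar k) := fun t => h ⟨by rw [t.2, hbb], by rw [t.1, hbb]⟩
            rw [if_neg h, if_neg h', mul_zero]
    simp only [e, Finset.sum_add_distrib, Finset.sum_ite_eq', Finset.mem_univ, if_true]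
    by_cases hkl : k = l
    · subst hkl; simp
    · rw [Matrix.diagonal_apply_ne _ hkl, if_neg hkl]; field_simp; norm_num
  rw [this]
  exact W.add_mem hd hsum

end Labs

/-- torus data -/
structure TD (m : ℕ) (F R : Type) [Field F] [CommRing R] [Algebra F R] where
  bar : R →ₐ[F] R
  bb : ∀ r, bar (bar r) = r
  lam : R →ₗ[F] F
  lam0 : ∀ u, lam (u * bar u) = 0
  nd : ∀ r, (∀ u, lam (r * u) = 0) → r = 0
  j : R
  j' : R
  jj : j * j' = 1
  hj : bar j = - j
  dim : Module.finrank F R = 2 * m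
  homs : 2 * m ≤ Nat.card (R →ₐ[F] AlgebraicClosure F)
  xi : R
  xiu : xi * bar xi = 1
  gen : ∀ u, u * bar u = 1 → ∃ k : ℕ, xi ^ k = u ^ 2

section frame
variable {m : ℕ} {F R : Type} [Field F] [CommRing R] [Algebra F R] (T : TD m F R)

lemma TD.pol (u v : R) : T.lam (u * T.bar v) + T.lam (v * T.bar u) = 0 := by
  have h := T.lam0 (u + v)
  have e : (u + v) * T.bar (u + v) = u * T.bar u + v * T.bar v + (u * T.bar v + v * T.bar u) := by
    rw [map_add]; ring
  rw [e, map_add, map_add, T.lam0, T.lam0, map_add] at h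
  simpa using h

/-- fixed part -/
def TD.Lp : Submodule F R where
  carrier := {r | T.bar r = r}
  add_mem' := by intro a b ha hb; simp only [Set.mem_setOf_eq] at *; rw [map_add, ha, hb]
  zero_mem' := by simp
  smul_mem' := by intro c x hx; simp only [Set.mem_setOf_eq] at *; rw [map_smul, hx]

/-- anti-fixed part -/
def TD.Lm : Submodule F R where
  carrier := {r | T.bar r = -r}
  add_mem' := by intro a b ha hb; simp only [Set.mem_setOf_eq] at *; rw [map_add, ha, hb]; ring
  zero_mem' := by simp
  smul_mem' := by intro c x hx; simp only [Set.mem_setOf_eq] at *; rw [map_smul, hx]; simp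

/-- plus projection -/
noncomputable def TD.pp : R →ₗ[F] R := (2⁻¹ : F) • (LinearMap.id + T.bar.toLinearMap)
/-- minus projection -/
noncomputable def TD.pm : R →ₗ[F] R := (2⁻¹ : F) • (LinearMap.id - T.bar.toLinearMap)

lemma TD.pp_mem (u : R) : T.pp u ∈ T.Lp := by
  change T.bar _ = _
  simp [TD.pp, T.bb, add_comm]

lemma TD.pm_mem (u : R) : T.pm u ∈ T.Lm := by
  change T.bar _ = - _
  simp only [TD.pm, LinearMap.smul_apply, LinearMap.sub_apply, LinearMap.id_apply, AlgHom.toLinearMap_apply, map_smul, map_sub, T.bb]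
  rw [← smul_neg, neg_sub]

lemma TD.pp_add_pm (h2 : (2 : F) ≠ 0) (u : R) : T.pp u + T.pm u = u := by
  simp only [TD.pm, TD.pp, LinearMap.smul_apply, LinearMap.sub_apply, LinearMap.add_apply, LinearMap.id_apply, ← smul_add]
  rw [add_add_sub_cancel, ← two_smul F u, smul_smul, inv_mul_cancel₀ h2, one_smul]

lemma half (h2 : (2 : F) ≠ 0) {a : F} (h : a + a = 0) : a = 0 := by
  rw [← two_mul] at h; exact (mul_eq_zero.1 h).resolve_left h2

lemma TD.lam_pp (h2 : (2 : F) ≠ 0) {u v : R} (hu : u ∈ T.Lp) (hv : v ∈ T.Lp) : T.lam (u * v) = 0 := by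
  have h := T.pol u v
  rw [show T.bar u = u from hu, show T.bar v = v from hv, mul_comm v u] at h
  exact half h2 h

lemma TD.lam_mm (h2 : (2 : F) ≠ 0) {u v : R} (hu : u ∈ T.Lm) (hv : v ∈ T.Lm) : T.lam (u * v) = 0 := by
  have h := T.pol u v
  rw [show T.bar u = -u from hu, show T.bar v = -v from hv, mul_neg, mul_neg, mul_comm v u, map_neg, ← neg_add, neg_eq_zero] at h
  exact half h2 h

theorem TD.frame (hm : 0 < m) (h2 : (2 : F) ≠ 0) :
    ∃ θ : R ≃ₗ[F] (Ix m → F), ∀ u v, SB (θ u) (θ v) = T.lam (u * T.bar v) := by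
  have hfin : Module.Finite F R := Module.finite_of_finrank_pos (by rw [T.dim]; omega)
  have hcompl : IsCompl T.Lp T.Lm := by
    constructor
    · rw [Submodule.disjoint_def]
      intro x h1 h3
      have h1 : T.bar x = x := h1
      have h3 : T.bar x = -x := h3
      rw [h1] at h3
      have : (2 : F) • x = 0 := by rw [two_smul]; nth_rewrite 1 [h3]; simp
      exact (smul_eq_zero.1 this).resolve_left h2
    · rw [codisjoint_iff, eq_top_iff]
      intro x _
      rw [← T.pp_add_pm h2 x]
      exact Submodule.add_mem_sup (T.pp_mem x) (T.pm_mem x)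
  have hfr := Submodule.finrank_add_eq_of_isCompl hcompl
  rw [T.dim] at hfr
  have hbj' : T.bar T.j' = - T.j' := by
    have h1 : T.j * (- T.bar T.j') = 1 := by
      have := congrArg T.bar T.jj
      rw [map_mul, T.hj, map_one] at this
      rw [← this]; ring
    calc T.bar T.j' = -((T.j' * T.j) * (- T.bar T.j')) := by rw [mul_comm T.j', T.jj]; ring
      _ = -(T.j' * (T.j * (- T.bar T.j'))) := by ring
      _ = _ := by rw [h1, mul_one]
  have hLe : Module.finrank F T.Lp = Module.finrank F T.Lm := by
    apply LinearEquiv.finrank_eq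
    refine LinearEquiv.ofLinear
      ((LinearMap.mulLeft F T.j).restrict (p := T.Lp) (q := T.Lm) ?_)
      ((LinearMap.mulLeft F T.j').restrict (p := T.Lm) (q := T.Lp) ?_) ?_ ?_
    · intro x hx
      change T.bar _ = _
      rw [LinearMap.mulLeft_apply, map_mul, T.hj, show T.bar x = x from hx]; ring
    · intro x hx
      change T.bar _ = _
      rw [LinearMap.mulLeft_apply, map_mul, hbj', show T.bar x = -x from hx]; ring
    · ext x
      simp [← mul_assoc, T.jj]
    · ext x
      simp [← mul_assoc, mul_comm T.j' T.j, T.jj]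
  have hLm : Module.finrank F T.Lp = m := by omega
  let b := Module.finBasisOfFinrankEq F T.Lp hLm
  let pc : R →ₗ[F] T.Lp := T.pp.codRestrict T.Lp T.pp_mem
  let θ0 : R →ₗ[F] (Ix m → F) := LinearMap.pi (Sum.elim (fun i => (b.coord i).comp pc)
    (fun i => (T.lam.comp (LinearMap.mulLeft F (b i : R))).comp T.pm))
  have hsum : ∀ (u : R) (w : R), ∑ i, b.coord i (pc u) * T.lam (b i * w) = T.lam (T.pp u * w) := by
    intro u w
    have : T.pp u = ∑ i, b.coord i (pc u) • (b i : R) := by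
      have := congrArg (Submodule.subtype T.Lp) (b.sum_repr (pc u))
      rw [map_sum] at this
      simp only [map_smul, Submodule.subtype_apply] at this
      exact this.symm
    rw [this, Finset.sum_mul, map_sum]
    simp
  have key : ∀ u v, SB (θ0 u) (θ0 v) = T.lam (u * T.bar v) := by
    intro u v
    have e1 : ∀ i, θ0 u (Sum.inr i) * θ0 v (Sum.inl i) - θ0 u (Sum.inl i) * θ0 v (Sum.inr i) =
        b.coord i (pc v) * T.lam (b i * T.pm u) - b.coord i (pc u) * T.lam (b i * T.pm v) := by
      intro i
      simp only [θ0, LinearMap.pi_apply, Sum.elim_inl, Sum.elim_inr, LinearMap.comp_apply, LinearMap.mulLeft_apply]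
      ring
    rw [SB_eq, Finset.sum_congr rfl fun i _ => e1 i, Finset.sum_sub_distrib, hsum, hsum]
    have e2 : u * T.bar v = T.pp u * T.pp v - T.pp u * T.pm v + T.pp v * T.pm u - T.pm u * T.pm v := by
      conv_lhs => rw [← T.pp_add_pm h2 u, ← T.pp_add_pm h2 v, map_add, show T.bar (T.pp v) = T.pp v from T.pp_mem v,
        show T.bar (T.pm v) = - T.pm v from T.pm_mem v]
      ring
    rw [e2, map_sub, map_add, map_sub, T.lam_pp h2 (T.pp_mem u) (T.pp_mem v), T.lam_mm h2 (T.pm_mem u) (T.pm_mem v)]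
    ring
  have hinj : Function.Injective θ0 := by
    rw [injective_iff_map_eq_zero]
    intro u hu
    apply T.nd
    intro v
    have := key u (T.bar v)
    rw [hu, T.bb] at this
    rw [← this]; simp [SB]
  have hdim : Module.finrank F R = Module.finrank F (Ix m → F) := by
    rw [T.dim, Module.finrank_fintype_fun_eq_card]; simp; ring
  refine ⟨LinearEquiv.ofInjectiveOfFinrankEq θ0 hinj hdim, key⟩

end frame

section rho
variable {m : ℕ} {F R : Type} [Field F] [CommRing R] [Algebra F R] (θ : R ≃ₗ[F] (Ix m → F))

/-- regular representation -/
noncomputable def rho : R →ₐ[F] Mt m F :=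
  (LinearMap.toMatrixAlgEquiv' (R := F) (n := Ix m)).toAlgHom.comp
    ((LinearEquiv.conjAlgEquiv F θ).toAlgHom.comp (Algebra.lmul F R))

lemma rho_mulVec (r u : R) : rho θ r *ᵥ θ u = θ (r * u) := by
  change LinearMap.toMatrix' ((LinearEquiv.conjAlgEquiv F θ) (Algebra.lmul F R r)) *ᵥ θ u = _
  rw [LinearMap.toMatrix'_mulVec]
  simp [LinearEquiv.conjAlgEquiv]

lemma mat_ext {A B : Mt m F} (h : ∀ u, A *ᵥ θ u = B *ᵥ θ u) : A = B := by
  apply Matrix.ext_of_mulVec_single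
  intro i
  have := h (θ.symm (Pi.single i 1))
  simpa using this

variable (T : TD m F R) (hθ : ∀ u v, SB (θ u) (θ v) = T.lam (u * T.bar v))
include hθ

lemma rho_adj (r : R) (x y : Ix m → F) : SB (rho θ r *ᵥ x) y = SB x (rho θ (T.bar r) *ᵥ y) := by
  obtain ⟨u, rfl⟩ := θ.surjective x
  obtain ⟨v, rfl⟩ := θ.surjective y
  rw [rho_mulVec, rho_mulVec, hθ, hθ, map_mul T.bar, T.bb]
  congr 1; ring

lemma rho_adjM (r : R) : (rho θ r)ᵀ * J (Fin m) F = J (Fin m) F * rho θ (T.bar r) := by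
  have h : ∀ x y : Ix m → F, x ⬝ᵥ (((rho θ r)ᵀ * J (Fin m) F) *ᵥ y) = x ⬝ᵥ ((J (Fin m) F * rho θ (T.bar r)) *ᵥ y) := by
    intro x y
    have := rho_adj θ T hθ r x y
    have e := SB_mulVec (rho θ r) 1 x y
    rw [one_mulVec, mul_one] at e
    rw [← e, this, SB, mulVec_mulVec]
  apply Matrix.ext_of_mulVec_single
  intro i
  exact dotProduct_eq _ _ (fun w => by rw [dotProduct_comm, h, dotProduct_comm])

lemma rho_Sp {u : R} (hu : u * T.bar u = 1) : rho θ u ∈ symplecticGroup (Fin m) F := by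
  rw [mem_Sp_iff]
  intro x y
  rw [rho_adj θ T hθ, mulVec_mulVec, ← map_mul, mul_comm, hu, map_one, one_mulVec]

lemma rho_symm {r : R} (hr : T.bar r = -r) : (J (Fin m) F * rho θ r).IsSymm := by
  rw [IsSymm, transpose_mul, J_transpose, mul_neg, rho_adjM θ T hθ, hr, map_neg, mul_neg, neg_neg]

lemma rho_XH {H : Subgroup (symplecticGroup (Fin m) F)} (hH : (⟨rho θ T.xi, rho_Sp θ T hθ T.xiu⟩ : symplecticGroup (Fin m) F) ∈ H)
    {r : R} (hr : T.bar r = -r) : rho θ r ∈ XH H := by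
  refine ⟨rho_symm θ T hθ hr, fun s hs => ?_⟩
  set a := s • r with ha
  have hbar : T.bar a = -a := by rw [ha, map_smul, hr, smul_neg]
  have e1 : s • rho θ r = rho θ a := (map_smul _ _ _).symm
  rw [e1] at hs ⊢
  have hd : (rho θ (1 + a)).det ≠ 0 := by
    intro h0; apply hs; rw [kap, ← map_one (rho θ), ← map_add, h0]; simp
  obtain ⟨w, hw⟩ : ∃ w, (1 + a) * w = 1 := by
    refine ⟨θ.symm ((rho θ (1 + a))⁻¹ *ᵥ θ 1), ?_⟩
    apply θ.injective
    rw [← rho_mulVec, θ.apply_symm_apply, mulVec_mulVec, Matrix.mul_nonsing_inv _ (isUnit_iff_ne_zero.2 hd), one_mulVec]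
  have hw' : (1 - a) * T.bar w = 1 := by
    have := congrArg T.bar hw
    rwa [map_mul, map_add, map_one, hbar, ← sub_eq_add_neg] at this
  set u := w * (1 - a) with hu
  have huu : u * T.bar u = 1 := by
    rw [hu, map_mul, map_sub, map_one, hbar, sub_neg_eq_add]
    calc _ = ((1 + a) * w) * ((1 - a) * T.bar w) := by ring
      _ = 1 := by rw [hw, hw', mul_one]
  obtain ⟨k, hk⟩ := T.gen u huu
  refine ⟨⟨rho θ T.xi, rho_Sp θ T hθ T.xiu⟩ ^ k, pow_mem hH k, ?_⟩
  have e2 : adjugate (rho θ (1 + a)) = (rho θ (1 + a)).det • rho θ w := by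
    calc _ = adjugate (rho θ (1 + a)) * (rho θ (1 + a) * rho θ w) := by rw [← map_mul, hw, map_one, mul_one]
      _ = _ := by rw [← mul_assoc, adjugate_mul, smul_mul_assoc, one_mul]
  rw [Nm, kap, ← map_one (rho θ), ← map_add, ← map_sub, e2, smul_mul_assoc, ← map_mul, ← hu, smul_pow, ← map_pow, ← hk, map_pow]
  rfl

end rho

section lmain
variable {m : ℕ} {F R : Type} [Field F] [CommRing R] [Algebra F R] (θ : R ≃ₗ[F] (Ix m → F))

/-- base change of matrices -/
noncomputable def mp (F K : Type) [Field F] [Field K] [Algebra F K] (m : ℕ) : Mt m F →ₐ[F] Mt m K :=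
  (Algebra.ofId F K).mapMatrix

lemma mp_apply {K : Type} [Field K] [Algebra F K] (X : Mt m F) (i j) :
    mp F K m X i j = algebraMap F K (X i j) := rfl

lemma mp_span {K : Type} [Field K] [Algebra F K] (Y : Mt m K) :
    Y = ∑ i, ∑ j, Y i j • mp F K m (single i j 1) := by
  conv_lhs => rw [matrix_eq_sum_single Y]
  refine Finset.sum_congr rfl fun i _ => Finset.sum_congr rfl fun j _ => ?_
  ext a b
  rw [Matrix.smul_apply, mp_apply, single_apply, single_apply]
  split_ifs <;> simp

theorem diagz {K : Type} [Field K] [Algebra F K] (hm : 0 < m) (hd : Module.finrank F R = 2 * m)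
    (hh : 2 * m ≤ Nat.card (R →ₐ[F] K)) :
    ∃ (e : Ix m ≃ (R →ₐ[F] K)) (P Q : Mt m K), P * Q = 1 ∧ Q * P = 1 ∧
      (∀ r, P * mp F K m (rho θ r) * Q = diagonal (fun i => e i r)) ∧
      ∀ i k, P i k = e i (θ.symm (Pi.single k 1)) := by
  have hfin : Module.Finite F R := Module.finite_of_finrank_pos (by rw [hd]; omega)
  have hle := card_algHom_le_finrank F R K
  rw [hd] at hle
  have hc : Nat.card (R →ₐ[F] K) = 2 * m := le_antisymm hle hh
  have hF : Finite (R →ₐ[F] K) := Nat.finite_of_card_ne_zero (by omega)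
  obtain ⟨e⟩ : Nonempty (Ix m ≃ (R →ₐ[F] K)) := Finite.card_eq.1 (by rw [hc]; simp; ring)
  let P : Mt m K := of fun i k => e i (θ.symm (Pi.single k 1))
  have hPk : ∀ (i : Ix m) (x : Ix m → F), ∑ k, P i k * algebraMap F K (x k) = e i (θ.symm x) := by
    intro i x
    conv_rhs => rw [← Finset.univ_sum_single x, map_sum, map_sum]
    refine Finset.sum_congr rfl fun k _ => ?_
    rw [show (Pi.single k (x k) : Ix m → F) = x k • Pi.single k 1 by rw [← Pi.single_smul]; simp,
      map_smul, map_smul, Algebra.smul_def, mul_comm]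
    rfl
  have hu : IsUnit P := by
    rw [← linearIndependent_rows_iff_isUnit, Fintype.linearIndependent_iff]
    intro g hg
    have hl := (linearIndependent_algHom_toLinearMap F R K).comp e e.injective
    rw [Fintype.linearIndependent_iff] at hl
    apply hl g
    refine LinearMap.ext fun r => ?_
    simp only [LinearMap.sum_apply, LinearMap.smul_apply, Function.comp, AlgHom.toLinearMap_apply, LinearMap.zero_apply, smul_eq_mul]
    have : ∀ i, e i r = ∑ k, P i k * algebraMap F K (θ r k) := by
      intro i; rw [hPk, θ.symm_apply_apply]
    simp only [this, Finset.mul_sum]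
    rw [Finset.sum_comm]
    refine Finset.sum_eq_zero fun k _ => ?_
    have h1 := congrFun hg k
    simp only [Finset.sum_apply, Pi.smul_apply, smul_eq_mul, Pi.zero_apply, row_apply] at h1
    simp only [← mul_assoc]
    rw [← Finset.sum_mul, h1, zero_mul]
  have hdet : IsUnit P.det := (isUnit_iff_isUnit_det P).1 hu
  refine ⟨e, P, P⁻¹, mul_nonsing_inv _ hdet, nonsing_inv_mul _ hdet, fun r => ?_, fun _ _ => rfl⟩
  have : P * mp F K m (rho θ r) = diagonal (fun i => e i r) * P := by
    ext i k
    rw [mul_apply, diagonal_mul]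
    have h1 : ∀ l, mp F K m (rho θ r) l k = algebraMap F K ((rho θ r *ᵥ Pi.single k 1) l) := by
      intro l; rw [mulVec_single_one]; rfl
    simp only [h1]
    rw [hPk]
    have h2 := rho_mulVec θ r (θ.symm (Pi.single k 1))
    rw [θ.apply_symm_apply] at h2
    rw [h2, θ.symm_apply_apply, map_mul]; rfl
  rw [this, mul_assoc, mul_nonsing_inv _ hdet, mul_one]

end lmain

theorem L_mainK {m : ℕ} {F R : Type} (K : Type) [Field F] [Field K] [Algebra F K] [CommRing R] [Algebra F R] (θ : R ≃ₗ[F] (Ix m → F))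
    (hm : 0 < m) (h2 : (2 : F) ≠ 0)
    (hh : 2 * m ≤ Nat.card (R →ₐ[F] K)) (T : TD m F R) (hθ : ∀ u v, SB (θ u) (θ v) = T.lam (u * T.bar v)) (W : Submodule F (Mt m F))
    (hsym : ∀ X ∈ W, (J (Fin m) F * X).IsSymm) (hbr : ∀ X ∈ W, ∀ Y ∈ W, X * Y - Y * X ∈ W)
    (hrho : ∀ r, T.bar r = -r → rho θ r ∈ W)
    (halg : ∀ S : Subalgebra F (Mt m F), (∀ X ∈ W, X ∈ S) → S = ⊤)
    (X : Mt m F) (hX : (J (Fin m) F * X).IsSymm) : X ∈ W := by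
  obtain ⟨e, P, Q, hPQ, hQP, hdg, hP⟩ := diagz (K := K) θ hm T.dim hh
  have h2K : (2 : K) ≠ 0 := by
    have := (map_ne_zero (algebraMap F K)).2 h2
    rwa [map_ofNat] at this
  have hmm : ∀ Y Z : Mt m F, P * mp F K m Y * Q * (P * mp F K m Z * Q) = P * mp F K m (Y * Z) * Q := by
    intro Y Z
    rw [map_mul]
    calc _ = P * mp F K m Y * (Q * P) * mp F K m Z * Q := by simp only [mul_assoc]
      _ = _ := by rw [hQP, mul_one]; simp only [mul_assoc]
  let bar : Ix m → Ix m := fun i => e.symm ((e i).comp T.bar)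
  have hbar : ∀ i r, e (bar i) r = e i (T.bar r) := by
    intro i r; simp [bar]
  have hbb : ∀ i, bar (bar i) = i := by
    intro i; apply e.injective; ext r; rw [hbar, hbar, T.bb]
  have hb : ∀ i, bar i ≠ i := by
    intro i h
    have h1 := hbar i T.j
    rw [h, T.hj, map_neg] at h1
    have h0 : e i T.j = 0 := by
      have : (2 : K) * e i T.j = 0 := by rw [two_mul]; nth_rewrite 1 [h1]; simp
      exact (mul_eq_zero.1 this).resolve_left h2K
    have h3 := congrArg (e i) T.jj
    rw [map_mul, h0, zero_mul, map_one] at h3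
    exact zero_ne_one h3
  set J0 : Mt m K := mp F K m (J (Fin m) F) with hJ0
  have hJJ : J0 * J0 = -1 := by
    rw [hJ0, ← map_mul, J_squared, map_neg, map_one]
  set J' : Mt m K := Qᵀ * J0 * Q with hJ'
  have hmpT : ∀ Y : Mt m F, (mp F K m Y)ᵀ = mp F K m Yᵀ := fun Y => rfl
  have hJ0T : J0ᵀ = -J0 := by rw [hJ0, hmpT, J_transpose, map_neg]
  have hJ'T : J'ᵀ = -J' := by
    rw [hJ', transpose_mul, transpose_mul, transpose_transpose, hJ0T]; simp [mul_assoc]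
  have hQPT : Qᵀ * Pᵀ = 1 := by rw [← transpose_mul, hPQ, transpose_one]
  have hPQT : Pᵀ * Qᵀ = 1 := by rw [← transpose_mul, hQP, transpose_one]
  have hcomm : ∀ r, diagonal (fun i => e i r) * J' = J' * diagonal (fun i => e i (T.bar r)) := by
    intro r
    have h1 := congrArg (mp F K m) (rho_adjM θ T hθ r)
    rw [map_mul, map_mul, ← hmpT, ← hJ0] at h1
    have h3 : diagonal (fun i => e i r) = Qᵀ * (mp F K m (rho θ r))ᵀ * Pᵀ := by
      rw [← diagonal_transpose, ← hdg r]; simp only [transpose_mul, mul_assoc]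
    rw [h3, ← hdg (T.bar r), hJ']
    calc _ = Qᵀ * (mp F K m (rho θ r))ᵀ * (Pᵀ * Qᵀ) * J0 * Q := by simp only [mul_assoc]
      _ = Qᵀ * ((mp F K m (rho θ r))ᵀ * J0) * Q := by rw [hPQT, mul_one]; simp only [mul_assoc]
      _ = Qᵀ * J0 * mp F K m (rho θ (T.bar r)) * Q := by rw [h1]; simp only [mul_assoc]
      _ = Qᵀ * J0 * (Q * P) * mp F K m (rho θ (T.bar r)) * Q := by rw [hQP, mul_one]
      _ = _ := by simp only [mul_assoc]
  have hoff : ∀ i j, j ≠ bar i → J' i j = 0 := by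
    intro i j hij
    by_contra h0
    apply hij
    rw [← hbb j]; congr 1
    apply e.injective
    ext r
    have h1 := congrFun (congrFun (hcomm r) i) j
    rw [diagonal_mul, mul_diagonal, mul_comm] at h1
    have := mul_left_cancel₀ h0 h1
    rw [hbar, this]
  let c : Ix m → K := fun i => J' i (bar i)
  have hc0 : ∀ i, c i ≠ 0 := by
    intro i h0
    have h1 : J' * (P * J0 * Pᵀ) = -1 := by
      rw [hJ']
      calc _ = Qᵀ * J0 * (Q * P) * J0 * Pᵀ := by simp only [mul_assoc]
        _ = Qᵀ * (J0 * J0) * Pᵀ := by rw [hQP, mul_one]; simp only [mul_assoc]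
        _ = _ := by rw [hJJ, mul_neg, mul_one, neg_mul, hQPT]
    have h3 := congrFun (congrFun h1 i) i
    rw [mul_apply, Finset.sum_eq_zero] at h3
    · simp at h3
    · intro j _
      by_cases hj : j = bar i
      · rw [hj, show J' i (bar i) = 0 from h0, zero_mul]
      · rw [hoff i j hj, zero_mul]
  have hc : ∀ i, c (bar i) = -c i := by
    intro i
    have := congrFun (congrFun hJ'T i) (bar i)
    rw [transpose_apply, Matrix.neg_apply] at this
    change J' (bar i) (bar (bar i)) = _
    rw [hbb, this]
  have hrelX : ∀ Z : Mt m F, (J (Fin m) F * Z).IsSymm → ∀ a b, c (bar a) * (P * mp F K m Z * Q) a b =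
      c b * (P * mp F K m Z * Q) (bar b) (bar a) := by
    intro Z hZ a b
    set Z' := P * mp F K m Z * Q with hZ'
    have h1 : (J' * Z').IsSymm := by
      have : J' * Z' = Qᵀ * mp F K m (J (Fin m) F * Z) * Q := by
        rw [hJ', hZ', map_mul, ← hJ0]
        calc _ = Qᵀ * J0 * (Q * P) * mp F K m Z * Q := by simp only [mul_assoc]
          _ = _ := by rw [hQP, mul_one]; simp only [mul_assoc]
      rw [this, IsSymm, transpose_mul, transpose_mul, transpose_transpose, hmpT, hZ.eq, mul_assoc]
    have h3 : ∀ x y, (J' * Z') x y = c x * Z' (bar x) y := by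
      intro x y
      rw [mul_apply, Finset.sum_eq_single (bar x)]
      · intro j _ hj; rw [hoff x j hj, zero_mul]
      · simp
    have h4 := h1.apply (bar a) b
    rw [h3, h3, hbb] at h4
    exact h4.symm
  let s : Set (Mt m K) := {Z | ∃ Y ∈ W, Z = P * mp F K m Y * Q}
  let W' : Submodule K (Mt m K) := Submodule.span K s
  have hmem : P * mp F K m X * Q ∈ W' := by
    refine L_abs h2K bar hbb hb c hc0 hc W' ?_ ?_ ?_ ?_ _ (hrelX X hX)
    · intro Z hZ a b
      refine Submodule.span_induction (p := fun Z _ => c (bar a) * Z a b = c b * Z (bar b) (bar a)) ?_ ?_ ?_ ?_ hZ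
      · rintro _ ⟨Y, hY, rfl⟩; exact hrelX Y (hsym Y hY) a b
      · simp
      · intro x y _ _ hx hy; rw [Matrix.add_apply, Matrix.add_apply, mul_add, mul_add, hx, hy]
      · intro k x _ hx
        rw [Matrix.smul_apply, Matrix.smul_apply, smul_eq_mul, smul_eq_mul, mul_left_comm, hx, mul_left_comm]
    · intro Y hY Z hZ
      refine Submodule.span_induction₂ (p := fun Y Z _ _ => Y * Z - Z * Y ∈ W') ?_ ?_ ?_ ?_ ?_ ?_ ?_ hY hZ
      · rintro _ _ ⟨Y, hY, rfl⟩ ⟨Z, hZ, rfl⟩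
        apply Submodule.subset_span
        refine ⟨_, hbr Y hY Z hZ, ?_⟩
        rw [hmm, hmm, map_sub, mul_sub, sub_mul]
      · intro y _; simp
      · intro y _; simp
      · intro x y z _ _ _ h h'
        have := W'.add_mem h h'
        convert this using 1; noncomm_ring
      · intro x y z _ _ _ h h'
        have := W'.add_mem h h'
        convert this using 1; noncomm_ring
      · intro k x y _ _ h
        have := W'.smul_mem k h
        rwa [smul_sub, ← smul_mul_assoc, ← mul_smul_comm] at this
      · intro k x y _ _ h
        have := W'.smul_mem k h
        rwa [smul_sub, ← smul_mul_assoc, ← mul_smul_comm, smul_mul_assoc, mul_smul_comm, ← mul_smul_comm, ← smul_mul_assoc] at this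
    · intro d hd
      let x := Q *ᵥ d
      have hx : P *ᵥ x = d := by rw [mulVec_mulVec, hPQ, one_mulVec]
      let a : Ix m → R := fun k => T.pm (θ.symm (Pi.single k 1))
      have hea : ∀ i k, e i (a k) = 2⁻¹ * (P i k - P (bar i) k) := by
        intro i k
        rw [hP, hP, hbar]
        simp only [a, TD.pm, LinearMap.smul_apply, LinearMap.sub_apply, LinearMap.id_apply, AlgHom.toLinearMap_apply, map_smul, map_sub]
        rw [Algebra.smul_def, map_inv₀, map_ofNat]
      have hdd : diagonal d = ∑ k, x k • (P * mp F K m (rho θ (a k)) * Q) := by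
        simp only [hdg]
        ext i j
        rw [Matrix.sum_apply]
        simp only [Matrix.smul_apply, diagonal_apply, smul_eq_mul]
        split_ifs with hij
        · have e1 : d i = 2⁻¹ * (d i - d (bar i)) := by
            rw [hd, sub_neg_eq_add, ← two_mul, inv_mul_cancel_left₀ h2K]
          rw [e1, ← hx]
          simp only [mulVec, dotProduct, hea, ← Finset.sum_sub_distrib, Finset.mul_sum]
          refine Finset.sum_congr rfl fun k _ => by ring
        · simp
      rw [hdd]
      refine Submodule.sum_mem _ fun k _ => W'.smul_mem _ (Submodule.subset_span ⟨_, hrho _ (T.pm_mem _), rfl⟩)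
    · intro S hS
      let S0 : Subalgebra F (Mt m F) :=
        { carrier := {Y | P * mp F K m Y * Q ∈ S}
          mul_mem' := by
            intro a b ha hb
            have := S.mul_mem ha hb
            rwa [hmm] at this
          add_mem' := by
            intro a b ha hb
            have := S.add_mem ha hb
            rwa [← add_mul, ← mul_add, ← map_add] at this
          algebraMap_mem' := by
            intro r
            have : P * mp F K m (algebraMap F (Mt m F) r) * Q = algebraMap F K r • (1 : Mt m K) := by
              rw [AlgHom.commutes, Algebra.algebraMap_eq_smul_one, mul_smul_comm, mul_one, smul_mul_assoc, hPQ,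
                algebraMap_smul]
            change _ ∈ S
            rw [this]
            exact S.smul_mem S.one_mem _ }
      have h0 : S0 = ⊤ := halg S0 fun Y hY => hS _ (Submodule.subset_span ⟨Y, hY, rfl⟩)
      rw [eq_top_iff]
      intro Z _
      have e1 : Z = P * (Q * Z * P) * Q := by
        calc Z = (P * Q) * Z * (P * Q) := by rw [hPQ]; simp
          _ = _ := by simp only [mul_assoc]
      rw [e1, mp_span (F := F) (Q * Z * P), Finset.mul_sum, Finset.sum_mul]
      refine S.sum_mem fun i _ => ?_
      rw [Finset.mul_sum, Finset.sum_mul]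
      refine S.sum_mem fun j _ => ?_
      rw [mul_smul_comm, smul_mul_assoc]
      refine S.smul_mem ?_ _
      have : single i j 1 ∈ S0 := by rw [h0]; trivial
      exact this
  obtain ⟨π, hπ⟩ := LinearMap.exists_leftInverse_of_injective (Algebra.linearMap F K)
    (LinearMap.ker_eq_bot.2 (algebraMap F K).injective)
  have hπ1 : ∀ x : F, π (algebraMap F K x) = x := fun x => LinearMap.congr_fun hπ x
  have key : ∀ Z ∈ W', ∀ k : K, π.mapMatrix (k • (Q * Z * P)) ∈ W := by
    intro Z hZ
    refine Submodule.span_induction (p := fun Z _ => ∀ k : K, π.mapMatrix (k • (Q * Z * P)) ∈ W) ?_ ?_ ?_ ?_ hZ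
    · rintro _ ⟨Y, hY, rfl⟩ k
      have e1 : Q * (P * mp F K m Y * Q) * P = mp F K m Y := by
        calc _ = (Q * P) * mp F K m Y * (Q * P) := by simp only [mul_assoc]
          _ = _ := by rw [hQP]; simp
      rw [e1]
      have e2 : π.mapMatrix (k • mp F K m Y) = π k • Y := by
        ext i j
        rw [LinearMap.mapMatrix_apply, map_apply, Matrix.smul_apply, Matrix.smul_apply, mp_apply, smul_eq_mul, mul_comm,
          ← Algebra.smul_def, map_smul, smul_eq_mul, smul_eq_mul, mul_comm]
      rw [e2]; exact W.smul_mem _ hY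
    · intro k; simp
    · intro x y _ _ hx hy k
      have := W.add_mem (hx k) (hy k)
      rwa [← map_add, ← smul_add, ← add_mul, ← mul_add] at this
    · intro a x _ hx k
      have := hx (k * a)
      have e1 : k • (Q * a • x * P) = (k * a) • (Q * x * P) := by
        rw [mul_smul_comm, smul_mul_assoc, smul_smul]
      rwa [e1]
  have := key _ hmem 1
  have e1 : Q * (P * mp F K m X * Q) * P = mp F K m X := by
    calc _ = (Q * P) * mp F K m X * (Q * P) := by simp only [mul_assoc]
      _ = _ := by rw [hQP]; simp
  rw [e1, one_smul] at this
  have e2 : π.mapMatrix (mp F K m X) = X := by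
    ext i j; exact hπ1 _
  rwa [e2] at this

theorem L_main {m : ℕ} {F R : Type} [Field F] [CommRing R] [Algebra F R] (θ : R ≃ₗ[F] (Ix m → F))
    (hm : 0 < m) (h2 : (2 : F) ≠ 0)
    (T : TD m F R) (hθ : ∀ u v, SB (θ u) (θ v) = T.lam (u * T.bar v)) (W : Submodule F (Mt m F))
    (hsym : ∀ X ∈ W, (J (Fin m) F * X).IsSymm) (hbr : ∀ X ∈ W, ∀ Y ∈ W, X * Y - Y * X ∈ W)
    (hrho : ∀ r, T.bar r = -r → rho θ r ∈ W)
    (halg : ∀ S : Subalgebra F (Mt m F), (∀ X ∈ W, X ∈ S) → S = ⊤)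
    (X : Mt m F) (hX : (J (Fin m) F * X).IsSymm) : X ∈ W :=
  L_mainK (AlgebraicClosure F) θ hm h2 T.homs T hθ W hsym hbr hrho halg X hX

lemma dens0 {F V : Type} [Field F] [AddCommGroup V] [Module F V] [FiniteDimensional F V] [Nontrivial V]
    (A : Subalgebra F (Module.End F V))
    (irr : ∀ U : Submodule F V, (∀ X ∈ A, ∀ u ∈ U, X u ∈ U) → U = ⊥ ∨ U = ⊤)
    (comm : ∀ C : Module.End F V, (∀ X ∈ A, C * X = X * C) → ∃ c : F, C = c • 1) : A = ⊤ := by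
  have hs : IsSimpleModule A V := by
    rw [isSimpleModule_iff]
    refine ⟨fun N => ?_⟩
    let U : Submodule F V :=
      { carrier := N
        add_mem' := N.add_mem
        zero_mem' := N.zero_mem
        smul_mem' := by
          intro c x hx
          exact N.smul_mem (algebraMap F A c) hx }
    rcases irr U (fun X hX u hu => N.smul_mem (⟨X, hX⟩ : A) hu) with h | h
    · left
      ext x
      have : x ∈ U ↔ x ∈ (⊥ : Submodule F V) := by rw [h]
      rw [Submodule.mem_bot] at this ⊢
      exact this
    · right
      ext x
      have : x ∈ U := by rw [h]; trivial
      exact ⟨fun _ => trivial, fun _ => this⟩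
  rw [eq_top_iff]
  intro f _
  have hg : ∀ g : Module.End A V, ∃ c : F, ∀ v, g v = c • v := by
    intro g
    let C : Module.End F V :=
      { toFun := g
        map_add' := g.map_add
        map_smul' := fun c x => g.map_smul (algebraMap F A c) x }
    obtain ⟨c, hc⟩ := comm C (fun X hX => LinearMap.ext fun v => g.map_smul (⟨X, hX⟩ : A) v)
    exact ⟨c, fun v => LinearMap.congr_fun hc v⟩
  let f' : Module.End (Module.End A V) V :=
    { toFun := f
      map_add' := f.map_add
      map_smul' := by
        intro g v
        obtain ⟨c, hc⟩ := hg g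
        simp [hc] }
  let b := Module.finBasis F V
  classical
  obtain ⟨r, hr⟩ := jacobson_density f' (Finset.univ.image b)
  have : f = r := by
    apply b.ext
    intro i
    exact hr (b i) (Finset.mem_image_of_mem _ (Finset.mem_univ i))
  rw [this]; exact r.2

lemma dens {m : ℕ} {F : Type} [Field F] (hm : 0 < m) (A : Subalgebra F (Mt m F))
    (irr : ∀ U : Submodule F (Ix m → F), (∀ X ∈ A, ∀ u ∈ U, X *ᵥ u ∈ U) → U = ⊥ ∨ U = ⊤)
    (comm : ∀ C : Mt m F, (∀ X ∈ A, C * X = X * C) → ∃ c : F, C = c • 1) : A = ⊤ := by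
  have : Nonempty (Fin m) := ⟨⟨0, hm⟩⟩
  let e := (Matrix.toLinAlgEquiv' : Mt m F ≃ₐ[F] _)
  have h := dens0 (A.map e.toAlgHom) ?_ ?_
  · rw [eq_top_iff]
    intro X _
    have : e X ∈ A.map e.toAlgHom := by rw [h]; trivial
    obtain ⟨Y, hY, hYX⟩ := this
    rw [← e.injective hYX]; exact hY
  · intro U hU
    exact irr U fun X hX u hu => hU (e X) ⟨X, hX, rfl⟩ u hu
  · intro C hC
    obtain ⟨D, rfl⟩ := e.surjective C
    obtain ⟨c, hc⟩ := comm D fun X hX => e.injective (by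
      rw [map_mul, map_mul]; exact hC (e X) ⟨X, hX, rfl⟩)
    exact ⟨c, by rw [hc, map_smul, map_one]⟩

section gen
variable {m : ℕ} {F : Type} [Field F]

lemma gen_stable {y : Mt m F} (hy : Gen y) {C : Mt m F} (hC : C * y ^ expM m = y ^ expM m * C)
    (U : Submodule F (Ix m → F)) (hU : ∀ u ∈ U, y ^ expM m *ᵥ u ∈ U) : ∀ u ∈ U, C *ᵥ u ∈ U := by
  obtain ⟨v, hv⟩ := hy
  set z := y ^ expM m with hz
  have hun : IsUnit (kry z v).det := isUnit_iff_ne_zero.2 hv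
  let c := (kry z v)⁻¹ *ᵥ (C *ᵥ v)
  have hc : kry z v *ᵥ c = C *ᵥ v := by rw [mulVec_mulVec, mul_nonsing_inv _ hun, one_mulVec]
  let D : Mt m F := ∑ j, c j • z ^ (finSumFinEquiv j : ℕ)
  have hDv : D *ᵥ v = C *ᵥ v := by
    rw [← hc]
    ext i
    simp only [D, Matrix.sum_mulVec, Finset.sum_apply, smul_mulVec, Pi.smul_apply, smul_eq_mul]
    simp only [mulVec, dotProduct, kry, of_apply]
    exact Finset.sum_congr rfl fun j _ => mul_comm _ _
  have hCz : ∀ k : ℕ, C * z ^ k = z ^ k * C := fun k => (show Commute C z from hC).pow_right k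
  have hDz : ∀ k : ℕ, D * z ^ k = z ^ k * D := by
    intro k
    simp only [D, Finset.sum_mul, Finset.mul_sum, smul_mul_assoc, mul_smul_comm]
    refine Finset.sum_congr rfl fun j _ => by rw [← pow_add, ← pow_add, add_comm]
  have hCD : C * kry z v = D * kry z v := by
    apply Matrix.ext_of_mulVec_single
    intro j
    have e1 : kry z v *ᵥ Pi.single j 1 = z ^ (finSumFinEquiv j : ℕ) *ᵥ v := by
      rw [mulVec_single_one]; rfl
    rw [← mulVec_mulVec, ← mulVec_mulVec, e1, mulVec_mulVec, mulVec_mulVec, hCz, hDz, ← mulVec_mulVec, ← mulVec_mulVec, hDv]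
  have hCD' : C = D := by
    have := congrArg (· * (kry z v)⁻¹) hCD
    simpa [mul_assoc, mul_nonsing_inv _ hun] using this
  intro u hu
  rw [hCD']
  simp only [D, Matrix.sum_mulVec, smul_mulVec]
  refine Submodule.sum_mem _ fun j _ => U.smul_mem _ ?_
  generalize (finSumFinEquiv j : ℕ) = k
  induction k with
  | zero => simpa using hu
  | succ k ih => rw [pow_succ', ← mulVec_mulVec]; exact hU _ ih

lemma gen_cj {y : symplecticGroup (Fin m) F} (hy : Gen (y : Mt m F)) (h : symplecticGroup (Fin m) F) :
    Gen ((h * y * h⁻¹ : symplecticGroup (Fin m) F) : Mt m F) := by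
  obtain ⟨v, hv⟩ := hy
  refine ⟨(h : Mt m F) *ᵥ v, ?_⟩
  have e1 : ∀ k : ℕ, (((h * y * h⁻¹ : symplecticGroup (Fin m) F) : Mt m F) ^ expM m) ^ k *ᵥ ((h : Mt m F) *ᵥ v) =
      (h : Mt m F) *ᵥ (((y : Mt m F) ^ expM m) ^ k *ᵥ v) := by
    intro k
    have : (((h * y * h⁻¹) ^ expM m) ^ k * h : symplecticGroup (Fin m) F) = h * (y ^ expM m) ^ k := by
      rw [conj_pow, conj_pow]; group
    have := congrArg (fun g : symplecticGroup (Fin m) F => (g : Mt m F)) this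
    simp only [Submonoid.coe_mul, SubmonoidClass.coe_pow] at this
    rw [mulVec_mulVec, mulVec_mulVec, ← this]
    simp
  have e2 : kry (((h * y * h⁻¹ : symplecticGroup (Fin m) F) : Mt m F) ^ expM m) ((h : Mt m F) *ᵥ v) =
      (h : Mt m F) * kry ((y : Mt m F) ^ expM m) v := by
    ext i j
    rw [kry, of_apply, e1, mul_apply]
    rfl
  rw [e2, det_mul, Sp_det, one_mul]
  exact hv
end gen

lemma TD.bj' {m : ℕ} {F R : Type} [Field F] [CommRing R] [Algebra F R] (T : TD m F R) : T.bar T.j' = - T.j' := by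
  have h1 : T.j * (- T.bar T.j') = 1 := by
    have := congrArg T.bar T.jj
    rw [map_mul, T.hj, map_one] at this
    rw [← this]; ring
  calc T.bar T.j' = -((T.j' * T.j) * (- T.bar T.j')) := by rw [mul_comm T.j', T.jj]; ring
    _ = -(T.j' * (T.j * (- T.bar T.j'))) := by ring
    _ = _ := by rw [h1, mul_one]

theorem main_gen (m : ℕ) (hm : 0 < m) : ∃ q0 : ℕ, ∀ (F R : Type) [Field F] [Fintype F] [CommRing R] [Algebra F R],
    (2 : F) ≠ 0 → q0 ≤ Fintype.card F → ∀ (T : TD m F R) (θ : R ≃ₗ[F] (Ix m → F))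
    (hθ : ∀ u v, SB (θ u) (θ v) = T.lam (u * T.bar v)) (H : Subgroup (symplecticGroup (Fin m) F)),
    (⟨rho θ T.xi, rho_Sp θ T hθ T.xiu⟩ : symplecticGroup (Fin m) F) ∈ H →
    (∀ A : Subalgebra F (Mt m F), (∀ r, rho θ r ∈ A) → (∀ h ∈ H, ∀ X ∈ A, cj h X ∈ A) → A = ⊤) → H = ⊤ := by
  obtain ⟨q1, h1⟩ := growth_top m
  obtain ⟨D, hD⟩ := W_bracket m
  refine ⟨max q1 (D + 1), fun F R _ _ _ _ h2 hq T θ hθ H hH hA => ?_⟩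
  apply h1 F h2 (le_trans (le_max_left _ _) hq) H
  have hq' : D < Fintype.card F := lt_of_lt_of_le (Nat.lt_succ_self D) (le_trans (le_max_right _ _) hq)
  set W := Submodule.span F (XH H) with hW
  have hsym : ∀ X ∈ W, (J (Fin m) F * X).IsSymm := by
    intro X hX
    refine Submodule.span_induction (p := fun X _ => (J (Fin m) F * X).IsSymm) (fun X hX => hX.1) ?_ ?_ ?_ hX
    · simp [IsSymm]
    · intro x y _ _ hx hy; rw [mul_add]; exact hx.add hy
    · intro a x _ hx; rw [mul_smul_comm]; exact hx.smul a
  have hrho : ∀ r, T.bar r = -r → rho θ r ∈ W := fun r hr => Submodule.subset_span (rho_XH θ T hθ hH hr)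
  have hbr0 : ∀ X ∈ XH H, ∀ Y ∈ XH H, X * Y - Y * X ∈ W := by
    intro X hX Y hY
    by_contra hn
    obtain ⟨f, hf1, hf2⟩ := Submodule.exists_le_ker_of_notMem hn
    let L : Mt m F := of fun i j => f (single j i 1)
    have hL : ∀ Z, trace (L * Z) = f Z := by
      intro Z
      conv_rhs => rw [matrix_eq_sum_single Z, map_sum]
      simp only [trace, diag, mul_apply, map_sum]
      rw [Finset.sum_comm]
      refine Finset.sum_congr rfl fun i _ => Finset.sum_congr rfl fun j _ => ?_
      rw [show single i j (Z i j) = Z i j • (single i j 1 : Mt m F) by rw [smul_single]; simp, map_smul, smul_eq_mul, mul_comm]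
      rfl
    apply hf1
    rw [← hL]
    refine hD F h2 hq' H L X Y hX hY fun Z hZ => ?_
    rw [hL]; exact hf2 (Submodule.subset_span hZ)
  have hbr : ∀ X ∈ W, ∀ Y ∈ W, X * Y - Y * X ∈ W := by
    intro Y hY Z hZ
    refine Submodule.span_induction₂ (p := fun Y Z _ _ => Y * Z - Z * Y ∈ W) ?_ ?_ ?_ ?_ ?_ ?_ ?_ hY hZ
    · intro X Y hX hY; exact hbr0 X hX Y hY
    · intro y _; simp
    · intro y _; simp
    · intro x y z _ _ _ h h'
      have := W.add_mem h h'
      convert this using 1; noncomm_ring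
    · intro x y z _ _ _ h h'
      have := W.add_mem h h'
      convert this using 1; noncomm_ring
    · intro k x y _ _ h
      have := W.smul_mem k h
      rwa [smul_sub, ← smul_mul_assoc, ← mul_smul_comm] at this
    · intro k x y _ _ h
      have := W.smul_mem k h
      rwa [smul_sub, ← smul_mul_assoc, ← mul_smul_comm, smul_mul_assoc, mul_smul_comm, ← mul_smul_comm, ← smul_mul_assoc] at this
  intro X hX
  refine L_main θ hm h2 T hθ W hsym hbr hrho ?_ X hX
  have htop := hA (Algebra.adjoin F (XH H)) ?_ ?_
  · intro S hS
    rw [eq_top_iff, ← htop]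
    exact Algebra.adjoin_le fun X hX => hS X (Submodule.subset_span hX)
  · have ha : ∀ r, T.bar r = -r → rho θ r ∈ Algebra.adjoin F (XH H) :=
      fun r hr => Algebra.subset_adjoin (rho_XH θ T hθ hH hr)
    intro r
    have e1 : r = T.j' * (T.j * T.pp r) + T.pm r := by
      rw [← mul_assoc, mul_comm T.j', T.jj, one_mul, T.pp_add_pm h2]
    rw [e1, map_add, map_mul]
    refine Subalgebra.add_mem _ (Subalgebra.mul_mem _ (ha _ T.bj') (ha _ ?_)) (ha _ (T.pm_mem r))
    rw [map_mul, T.hj, show T.bar (T.pp r) = T.pp r from T.pp_mem r]; ring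
  · intro h hh X hX
    induction hX using Algebra.adjoin_induction with
    | mem x hx => exact Algebra.subset_adjoin (XH_cj hx hh)
    | algebraMap r =>
      rw [Algebra.algebraMap_eq_smul_one, cj_smul, cj_one]
      exact Subalgebra.smul_mem _ (Subalgebra.one_mem _) _
    | add x y _ _ hx hy => rw [cj_add]; exact Subalgebra.add_mem _ hx hy
    | mul x y _ _ hx hy => rw [cj_mul]; exact Subalgebra.mul_mem _ hx hy

lemma rho_inj {m : ℕ} {F R : Type} [Field F] [CommRing R] [Algebra F R] (θ : R ≃ₗ[F] (Ix m → F)) :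
    Function.Injective (rho θ) := by
  intro a b h
  have := congrArg (fun X => θ.symm (X *ᵥ θ 1)) h
  simpa [rho_mulVec] using this

lemma rho_comm {m : ℕ} {F R : Type} [Field F] [CommRing R] [Algebra F R] (θ : R ≃ₗ[F] (Ix m → F))
    {C : Mt m F} (hC : ∀ r, C * rho θ r = rho θ r * C) : rho θ (θ.symm (C *ᵥ θ 1)) = C := by
  apply mat_ext θ
  intro u
  rw [rho_mulVec]
  have h1 := congrArg (· *ᵥ θ 1) (hC u)
  simp only [← mulVec_mulVec] at h1
  rw [rho_mulVec, mul_one] at h1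
  rw [h1]
  conv_rhs => rw [← θ.apply_symm_apply (C *ᵥ θ 1), rho_mulVec]
  rw [mul_comm]

lemma pow_stable {m : ℕ} {F : Type} [Field F] {y : Mt m F} {U : Submodule F (Ix m → F)} (h : ∀ u ∈ U, y *ᵥ u ∈ U)
    (k : ℕ) : ∀ u ∈ U, y ^ k *ᵥ u ∈ U := by
  induction k with
  | zero => intro u hu; simpa using hu
  | succ k ih => intro u hu; rw [pow_succ', ← mulVec_mulVec]; exact h _ (ih u hu)

lemma dvd_expM {m d : ℕ} (h0 : 0 < d) (h : d ≤ 2 * m + 8) : d ∣ expM m := Nat.dvd_factorial h0 h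

lemma cj_coe_mul {m : ℕ} {F : Type} [Field F] (h : symplecticGroup (Fin m) F) (X : Mt m F) :
    cj h X * (h : Mt m F) = (h : Mt m F) * X := by
  rw [cj, mul_assoc, Sp_inv_mul, mul_one]

theorem crit (m : ℕ) (hm : 0 < m) : ∃ q0 : ℕ, ∀ (F R : Type) [Field F] [Fintype F] [CommRing R] [Algebra F R],
    (2 : F) ≠ 0 → q0 ≤ Fintype.card F → ∀ (T : TD m F R) (θ : R ≃ₗ[F] (Ix m → F))
    (hθ : ∀ u v, SB (θ u) (θ v) = T.lam (u * T.bar v)) (y : symplecticGroup (Fin m) F),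
    Gen (y : Mt m F) → Finite (Ideal R) → Nat.card (Ideal R) ≤ 8 →
    (∀ I : Ideal R, (∀ u ∈ I, θ.symm ((y : Mt m F) *ᵥ θ u) ∈ I) → I = ⊥ ∨ I = ⊤) →
    (∀ D : Subalgebra F R, IsField D → (∀ r ∈ D, ∀ U : Submodule F (Ix m → F), (∀ u ∈ U, (y : Mt m F) *ᵥ u ∈ U) →
      ∀ u ∈ U, rho θ r *ᵥ u ∈ U) → ∀ r ∈ D, ∃ c : F, r = algebraMap F R c) →
    Subgroup.closure {(⟨rho θ T.xi, rho_Sp θ T hθ T.xiu⟩ : symplecticGroup (Fin m) F), y} = ⊤ := by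
  obtain ⟨q0, h0⟩ := main_gen m hm
  refine ⟨q0, fun F R _ _ _ _ h2 hq T θ hθ y hy hfin hcard ha hb => ?_⟩
  set H := Subgroup.closure {(⟨rho θ T.xi, rho_Sp θ T hθ T.xiu⟩ : symplecticGroup (Fin m) F), y} with hH
  have hyH : y ∈ H := Subgroup.subset_closure (by simp)
  apply h0 F R h2 hq T θ hθ H (Subgroup.subset_closure (by simp))
  intro A hA hN
  have irr : ∀ U : Submodule F (Ix m → F), (∀ X ∈ A, ∀ u ∈ U, X *ᵥ u ∈ U) → U = ⊥ ∨ U = ⊤ := by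
    intro U hU
    let I : ℕ → Ideal R := fun k =>
      { carrier := {r | ((y ^ k : symplecticGroup (Fin m) F) : Mt m F) *ᵥ θ r ∈ U}
        add_mem' := by
          intro a b ha hb
          have := U.add_mem ha hb
          rwa [← mulVec_add, ← map_add] at this
        zero_mem' := by simp
        smul_mem' := by
          intro c x hx
          have h1 := hU _ (hN _ (H.pow_mem hyH k) _ (hA c)) _ hx
          rw [mulVec_mulVec, cj_coe_mul, ← mulVec_mulVec, rho_mulVec] at h1
          exact h1 }
    have hI : ∀ k r, r ∈ I k ↔ ((y ^ k : symplecticGroup (Fin m) F) : Mt m F) *ᵥ θ r ∈ U := fun k r => Iff.rfl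
    obtain ⟨k, l, hkl, hIk⟩ : ∃ k l : Fin 9, k < l ∧ I k = I l := by
      have : ¬ Function.Injective (fun k : Fin 9 => I k) := by
        intro hinj
        have := Nat.card_le_card_of_injective _ hinj
        simp at this
        omega
      simp only [Function.Injective, not_forall] at this
      obtain ⟨a, b, hab, hne⟩ := this
      rcases lt_or_gt_of_ne hne with h | h
      · exact ⟨a, b, h, hab⟩
      · exact ⟨b, a, h, hab.symm⟩
    have hlk : (k : ℕ) < l := hkl
    have hd : ∀ u ∈ U, ((y : Mt m F) ^ ((l : ℕ) - k)) *ᵥ u ∈ U := by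
      intro u hu
      let w := θ.symm ((((y ^ (k : ℕ))⁻¹ : symplecticGroup (Fin m) F) : Mt m F) *ᵥ u)
      have hw : w ∈ I k := by
        rw [hI, θ.apply_symm_apply, mulVec_mulVec, Sp_mul_inv, one_mulVec]; exact hu
      rw [hIk, hI, θ.apply_symm_apply, mulVec_mulVec] at hw
      have e : (y ^ (l : ℕ) * (y ^ (k : ℕ))⁻¹ : symplecticGroup (Fin m) F) = y ^ ((l : ℕ) - k) := by
        rw [pow_sub y hlk.le]
      have e' := congrArg (fun g : symplecticGroup (Fin m) F => (g : Mt m F)) e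
      simp only [Submonoid.coe_mul, SubmonoidClass.coe_pow] at e' hw
      rwa [← e']
    have hM : ∀ u ∈ U, ((y : Mt m F) ^ expM m) *ᵥ u ∈ U := by
      obtain ⟨c, hc⟩ := dvd_expM (m := m) (d := (l : ℕ) - k) (by omega) (by omega)
      rw [hc, pow_mul]
      exact pow_stable hd c
    have hyU := gen_stable hy (C := (y : Mt m F)) (by rw [← pow_succ, ← pow_succ']) U hM
    rcases ha (I 0) (fun u hu => by
      rw [hI] at hu ⊢
      rw [pow_zero] at hu ⊢
      simp only [OneMemClass.coe_one, one_mulVec] at hu ⊢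
      rw [θ.apply_symm_apply]; exact hyU _ hu) with h | h
    · left
      rw [eq_bot_iff]
      intro u hu
      have : θ.symm u ∈ I 0 := by rw [hI]; simpa using hu
      rw [h] at this
      simpa using this
    · right
      rw [eq_top_iff]
      intro u _
      have : θ.symm u ∈ I 0 := by rw [h]; trivial
      rw [hI] at this
      simpa using this
  apply dens hm A irr
  intro C hC
  have hfd : Module.Finite F R := Module.finite_of_finrank_pos (by rw [T.dim]; omega)
  have hR : Finite R := Module.finite_of_finite F
  have hnt : Nontrivial R := Module.nontrivial_of_finrank_pos (R := F) (by rw [T.dim]; omega)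
  let D : Subalgebra F R :=
    { carrier := {r | ∀ X ∈ A, rho θ r * X = X * rho θ r}
      mul_mem' := by
        intro a b ha hb X hX
        rw [map_mul, mul_assoc, hb X hX, ← mul_assoc, ha X hX, mul_assoc]
      add_mem' := by
        intro a b ha hb X hX
        rw [map_add, add_mul, mul_add, ha X hX, hb X hX]
      algebraMap_mem' := by
        intro c X hX
        rw [AlgHom.commutes]; exact Algebra.commutes c X }
  have hDm : ∀ r, r ∈ D ↔ ∀ X ∈ A, rho θ r * X = X * rho θ r := fun r => Iff.rfl
  have hreg : ∀ d ∈ D, d ≠ 0 → ∀ u, d * u = 0 → u = 0 := by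
    intro d hd hd0
    rcases irr (LinearMap.ker (Matrix.mulVecLin (rho θ d))) (fun X hX u hu => by
      rw [LinearMap.mem_ker, mulVecLin_apply] at hu ⊢
      rw [mulVec_mulVec, hd X hX, ← mulVec_mulVec, hu, mulVec_zero]) with h | h
    · intro u hu
      have : θ u ∈ LinearMap.ker (Matrix.mulVecLin (rho θ d)) := by
        rw [LinearMap.mem_ker, mulVecLin_apply, rho_mulVec, hu, map_zero]
      rw [h] at this
      simpa using this
    · exfalso; apply hd0
      have : θ 1 ∈ LinearMap.ker (Matrix.mulVecLin (rho θ d)) := by rw [h]; trivial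
      rw [LinearMap.mem_ker, mulVecLin_apply, rho_mulVec, mul_one] at this
      simpa using this
  have hnz : NoZeroDivisors D := ⟨by
    intro a b hab
    by_cases h : a = 0
    · exact Or.inl h
    · right
      have h' : (a : R) ≠ 0 := fun e => h (Subtype.ext e)
      exact Subtype.ext (hreg a a.2 h' b (by simpa using congrArg Subtype.val hab))⟩
  have hdom : IsDomain D := NoZeroDivisors.to_isDomain D
  have hfield : IsField D := Finite.isField_of_domain D
  have hcomm : ∀ C : Mt m F, (∀ X ∈ A, C * X = X * C) → ∃ r ∈ D, rho θ r = C := by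
    intro C hC
    have h1 := rho_comm θ (fun r => hC _ (hA r))
    exact ⟨_, fun X hX => by rw [h1]; exact hC X hX, h1⟩
  have hcj : ∀ r ∈ D, ∃ s ∈ D, rho θ s = cj y (rho θ r) := by
    intro r hr
    apply hcomm
    intro X hX
    have h1 := hr _ (hN _ (H.inv_mem hyH) X hX)
    have h3 := congrArg (cj y) h1
    rw [cj_mul, cj_mul, cj_cj, mul_inv_cancel] at h3
    simpa [cj] using h3
  choose! s hsD hs using hcj
  have hz : ∀ r ∈ D, rho θ r * (y : Mt m F) ^ expM m = (y : Mt m F) ^ expM m * rho θ r := by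
    let σ : D →ₐ[F] D := AlgHom.ofLinearMap
      { toFun := fun r => ⟨s r, hsD r r.2⟩
        map_add' := fun a b => Subtype.ext (rho_inj θ (by
          change rho θ (s (a + b : R)) = rho θ (s a + s b)
          rw [hs _ (D.add_mem a.2 b.2), map_add, cj_add, map_add, hs _ a.2, hs _ b.2]))
        map_smul' := fun c a => Subtype.ext (rho_inj θ (by
          change rho θ (s (c • (a : R))) = rho θ (c • s a)
          rw [hs _ (D.smul_mem a.2 c), map_smul, cj_smul, map_smul, hs _ a.2])) }
      (Subtype.ext (rho_inj θ (by
          change rho θ (s 1) = rho θ 1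
          rw [hs _ D.one_mem, map_one, cj_one])))
      (fun a b => Subtype.ext (rho_inj θ (by
          change rho θ (s (a * b : R)) = rho θ (s a * s b)
          rw [hs _ (D.mul_mem a.2 b.2), map_mul, cj_mul, map_mul, hs _ a.2, hs _ b.2])))
    have hσ : ∀ r : D, rho θ (σ r : R) = cj y (rho θ r) := fun r => hs r r.2
    have hinj : Function.Injective σ := by
      intro a b hab
      apply Subtype.ext
      apply rho_inj θ
      have h1 : cj y (rho θ a) = cj y (rho θ b) := by rw [← hσ, ← hσ, hab]
      have h3 := congrArg (cj y⁻¹) h1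
      rw [cj_cj, cj_cj, inv_mul_cancel] at h3
      simpa [cj] using h3
    let τ : D ≃ₐ[F] D := AlgEquiv.ofBijective σ (Finite.injective_iff_bijective.1 hinj)
    have hτ : ∀ k : ℕ, ∀ r : D, rho θ ((τ ^ k) r : R) = cj (y ^ k) (rho θ r) := by
      intro k
      induction k with
      | zero => intro r; simp [cj]
      | succ k ih =>
        intro r
        rw [pow_succ', AlgEquiv.mul_apply, pow_succ', ← cj_cj, ← ih]
        exact hσ _
    have hfa : Finite (D →ₐ[F] D) := inferInstance
    have hfe : Finite (D ≃ₐ[F] D) := Finite.of_injective (fun t : D ≃ₐ[F] D => (t : D →ₐ[F] D)) (fun a b h => by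
      ext x; exact congrArg Subtype.val (AlgHom.congr_fun h x))
    have hle : orderOf τ ≤ 2 * m := by
      calc orderOf τ ≤ Nat.card (D ≃ₐ[F] D) := orderOf_le_card
        _ ≤ Nat.card (D →ₐ[F] D) := Nat.card_le_card_of_injective (fun t : D ≃ₐ[F] D => (t : D →ₐ[F] D)) (fun a b h => by
            ext x; exact congrArg Subtype.val (AlgHom.congr_fun h x))
        _ ≤ Module.finrank F D := card_algHom_le_finrank F D D
        _ ≤ Module.finrank F R := Submodule.finrank_le (Subalgebra.toSubmodule D)
        _ = 2 * m := T.dim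
    have hτM : τ ^ expM m = 1 := by
      rw [← orderOf_dvd_iff_pow_eq_one]
      exact dvd_expM (orderOf_pos τ) (by omega)
    intro r hr
    have h1 := hτ (expM m) ⟨r, hr⟩
    rw [hτM] at h1
    have h3 := cj_coe_mul (y ^ expM m) (rho θ r)
    rw [← h1] at h3
    simpa using h3
  obtain ⟨r, hr, rfl⟩ := hcomm C hC
  obtain ⟨c, rfl⟩ := hb D hfield (fun r hr U hU => gen_stable hy (hz r hr) U (pow_stable hU _)) r hr
  exact ⟨c, by rw [AlgHom.commutes, Algebra.algebraMap_eq_smul_one]⟩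

/-- partial torus data -/
structure PD (F R : Type) [Field F] [CommRing R] [Algebra F R] where
  bar : R →ₐ[F] R
  bb : ∀ r, bar (bar r) = r
  lam : R →ₗ[F] F
  lam0 : ∀ u, lam (u * bar u) = 0
  nd : ∀ r, (∀ u, lam (r * u) = 0) → r = 0
  j : R
  j' : R
  jj : j * j' = 1
  hj : bar j = - j

/-- product of partial data -/
def PD.prod {F R S : Type} [Field F] [CommRing R] [Algebra F R] [CommRing S] [Algebra F S] (P : PD F R) (Q : PD F S) :
    PD F (R × S) where
  bar := AlgHom.prodMap P.bar Q.bar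
  bb := fun r => Prod.ext (P.bb _) (Q.bb _)
  lam := P.lam.comp (LinearMap.fst F R S) + Q.lam.comp (LinearMap.snd F R S)
  lam0 := fun u => by
    change P.lam (u.1 * P.bar u.1) + Q.lam (u.2 * Q.bar u.2) = 0
    rw [P.lam0, Q.lam0, add_zero]
  nd := fun r h => by
    refine Prod.ext (P.nd _ fun u => ?_) (Q.nd _ fun u => ?_)
    · have : P.lam (r.1 * u) + Q.lam (r.2 * 0) = 0 := h (u, 0)
      simpa using this
    · have : P.lam (r.1 * 0) + Q.lam (r.2 * u) = 0 := h (0, u)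
      simpa using this
  j := (P.j, Q.j)
  j' := (P.j', Q.j')
  jj := Prod.ext P.jj Q.jj
  hj := Prod.ext P.hj Q.hj

/-- swap data -/
def PD.swp {F E : Type} [Field F] [Field E] [Algebra F E] (f : E →ₗ[F] F) (hf : f 1 ≠ 0) :
    PD F (E × E) where
  bar := AlgHom.prod (AlgHom.snd F E E) (AlgHom.fst F E E)
  bb := fun r => rfl
  lam := f.comp (LinearMap.fst F E E) - f.comp (LinearMap.snd F E E)
  lam0 := fun u => by
    change f (u.1 * u.2) - f (u.2 * u.1) = 0
    rw [mul_comm, sub_self]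
  nd := fun r h => by
    refine Prod.ext ?_ ?_
    · by_contra h0
      have : f (r.1 * (r.1)⁻¹) - f (r.2 * 0) = 0 := h ((r.1)⁻¹, 0)
      rw [mul_inv_cancel₀ h0, mul_zero, map_zero, sub_zero] at this
      exact hf this
    · by_contra h0
      have : f (r.1 * 0) - f (r.2 * (r.2)⁻¹) = 0 := h (0, (r.2)⁻¹)
      rw [mul_inv_cancel₀ h0, mul_zero, map_zero, zero_sub, neg_eq_zero] at this
      exact hf this
  j := (1, -1)
  j' := (1, -1)
  jj := Prod.ext (mul_one _) (by simp)
  hj := Prod.ext rfl (by simp)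

/-- field data -/
def PD.fld {F E : Type} [Field F] [Field E] [Algebra F E] (bar : E →ₐ[F] E) (bb : ∀ r, bar (bar r) = r)
    (j : E) (hj0 : j ≠ 0) (hj : bar j = -j) (f : E →ₗ[F] F) (hf : f (2 * j) ≠ 0) : PD F E where
  bar := bar
  bb := bb
  lam := f.comp (LinearMap.id - bar.toLinearMap)
  lam0 := fun u => by
    change f (u * bar u - bar (u * bar u)) = 0
    rw [map_mul, bb, mul_comm, sub_self, map_zero]
  nd := fun r h => by
    by_contra h0
    have h1 : f (r * (r⁻¹ * j) - bar (r * (r⁻¹ * j))) = 0 := h (r⁻¹ * j)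
    rw [mul_inv_cancel_left₀ h0, hj, sub_neg_eq_add, ← two_mul] at h1
    exact hf h1
  j := j
  j' := j⁻¹
  jj := mul_inv_cancel₀ hj0
  hj := hj

/-- completing partial data -/
def PD.toTD {m : ℕ} {F R : Type} [Field F] [CommRing R] [Algebra F R] (P : PD F R) (dim : Module.finrank F R = 2 * m)
    (homs : 2 * m ≤ Nat.card (R →ₐ[F] AlgebraicClosure F)) (xi : R) (xiu : xi * P.bar xi = 1)
    (gen : ∀ u, u * P.bar u = 1 → ∃ k : ℕ, xi ^ k = u ^ 2) : TD m F R :=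
  { P with dim := dim, homs := homs, xi := xi, xiu := xiu, gen := gen }

lemma exists_fun {F E : Type} [Field F] [AddCommGroup E] [Module F E] {v : E} (hv : v ≠ 0) : ∃ f : E →ₗ[F] F, f v ≠ 0 := by
  by_contra h
  push Not at h
  exact hv ((Module.forall_dual_apply_eq_zero_iff F v).1 h)

lemma exists_ext (F : Type) [Field F] [Fintype F] (n : ℕ) (hn : 0 < n) :
    ∃ (E : Type) (_ : Field E) (_ : Algebra F E), Finite E ∧ Module.finrank F E = n := by
  obtain ⟨p, hp⟩ := CharP.exists F
  have : Fact p.Prime := ⟨CharP.char_is_prime F p⟩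
  have : NeZero n := ⟨hn.ne'⟩
  exact ⟨FiniteField.Extension F p n, inferInstance, inferInstance, inferInstance, FiniteField.finrank_extension F p n⟩

section fieldfacts
variable {F E : Type} [Field F] [Fintype F] [Field E] [Algebra F E] [Finite E]

/-- powers of Frobenius -/
noncomputable def fb (F E : Type) [Field F] [Fintype F] [Field E] [Algebra F E] (k : ℕ) : E →ₐ[F] E :=
  FiniteField.frobeniusAlgHom F E ^ k

lemma fb_apply (k : ℕ) (x : E) : fb F E k x = x ^ (Fintype.card F ^ k) := by
  rw [fb, AlgHom.coe_pow, FiniteField.coe_frobeniusAlgHom, pow_iterate]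

lemma fb_add (k l : ℕ) (x : E) : fb F E k (fb F E l x) = fb F E (k + l) x := by
  rw [fb, fb, fb, pow_add]; rfl

lemma fb_fin (x : E) : fb F E (Module.finrank F E) x = x := by
  rw [fb, ← FiniteField.orderOf_frobeniusAlgHom F E, pow_orderOf_eq_one]; rfl

lemma homs_fld : Nat.card (E →ₐ[F] AlgebraicClosure F) = Module.finrank F E := by
  have : Module.Finite F E := Module.Finite.of_finite
  rw [Nat.card_eq_fintype_card, AlgHom.card]

lemma exists_j {k : ℕ} (hk : 0 < k) (hd : Module.finrank F E = 2 * k) : ∃ j : E, j ≠ 0 ∧ fb F E k j = - j := by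
  have h1 : fb F E k ≠ 1 := by
    intro h
    have := orderOf_dvd_of_pow_eq_one h
    rw [FiniteField.orderOf_frobeniusAlgHom, hd] at this
    have := Nat.le_of_dvd hk this
    omega
  obtain ⟨x, hx⟩ : ∃ x, fb F E k x ≠ x := by
    by_contra h
    push Not at h
    exact h1 (AlgHom.ext h)
  refine ⟨x - fb F E k x, sub_ne_zero.2 (Ne.symm hx), ?_⟩
  rw [map_sub, fb_add, ← two_mul, ← hd, fb_fin, neg_sub]

lemma unit_gen (b : E →ₐ[F] E) : ∃ xi : E, xi * b xi = 1 ∧ ∀ u, u * b u = 1 → ∃ k : ℕ, xi ^ k = u := by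
  let f : Eˣ →* Eˣ := MonoidHom.id _ * Units.map (b : E →* E)
  obtain ⟨g, hg⟩ := IsCyclic.exists_generator (α := f.ker)
  have hk : ∀ x : Eˣ, x ∈ f.ker ↔ (x : E) * b x = 1 := by
    intro x
    rw [MonoidHom.mem_ker, Units.ext_iff]; rfl
  refine ⟨((g : Eˣ) : E), (hk _).1 g.2, fun u hu => ?_⟩
  have h0 : u ≠ 0 := by rintro rfl; simp at hu
  have := hg ⟨Units.mk0 u h0, (hk _).2 hu⟩
  rw [← mem_powers_iff_mem_zpowers] at this
  obtain ⟨k, hk⟩ := this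
  refine ⟨k, ?_⟩
  have := congrArg (fun x : f.ker => (((x : Eˣ) : E))) hk
  simpa using this

lemma units_gen (E : Type) [Field E] [Finite E] : ∃ g g' : E, g * g' = 1 ∧ ∀ u, u ≠ 0 → ∃ k : ℕ, g ^ k = u := by
  obtain ⟨g, hg⟩ := IsCyclic.exists_generator (α := Eˣ)
  refine ⟨g, (g⁻¹ : Eˣ), by simp, fun u h0 => ?_⟩
  have := hg (Units.mk0 u h0)
  rw [← mem_powers_iff_mem_zpowers] at this
  obtain ⟨k, hk⟩ := this
  exact ⟨k, by simpa using congrArg Units.val hk⟩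

lemma mem_base {a : E} (h : fb F E 1 a = a) : ∃ c : F, a = algebraMap F E c := by
  classical
  rw [fb_apply, pow_one] at h
  have hq : 1 < Fintype.card F := Fintype.one_lt_card
  by_contra hc
  push Not at hc
  set p : Polynomial E := Polynomial.X ^ Fintype.card F - Polynomial.X with hp
  have hp0 : p ≠ 0 := FiniteField.X_pow_card_sub_X_ne_zero E hq
  have hd : p.natDegree = Fintype.card F := FiniteField.X_pow_card_sub_X_natDegree_eq E hq
  have hsub : insert a (Finset.univ.image (algebraMap F E)) ⊆ p.roots.toFinset := by
    intro x hx
    rw [Multiset.mem_toFinset, Polynomial.mem_roots hp0, Polynomial.IsRoot, hp, Polynomial.eval_sub, Polynomial.eval_pow,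
      Polynomial.eval_X, sub_eq_zero]
    rcases Finset.mem_insert.1 hx with rfl | hx
    · exact h
    · obtain ⟨c, -, rfl⟩ := Finset.mem_image.1 hx
      rw [← map_pow, FiniteField.pow_card]
  have h1 := Finset.card_le_card hsub
  rw [Finset.card_insert_of_notMem (by
    intro hx
    obtain ⟨c, -, e⟩ := Finset.mem_image.1 hx
    exact hc c e.symm), Finset.card_image_of_injective _ (algebraMap F E).injective, Finset.card_univ] at h1
  have h2 := Multiset.toFinset_card_le p.roots
  have h3 := Polynomial.card_roots' p
  omega

lemma quad_fb {a : E} {s t : F} (h : a * a + algebraMap F E s * a + algebraMap F E t = 0) : fb F E 2 a = a := by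
  set b := fb F E 1 a with hb
  have h1 : b * b + algebraMap F E s * b + algebraMap F E t = 0 := by
    have := congrArg (fb F E 1) h
    simpa using this
  have h2 : (b - a) * (b + a + algebraMap F E s) = 0 := by linear_combination h1 - h
  have e : fb F E 2 a = fb F E 1 b := by rw [hb, fb_add]
  rw [e]
  rcases mul_eq_zero.1 h2 with h3 | h3
  · rw [sub_eq_zero.1 h3, ← hb, sub_eq_zero.1 h3]
  · have hb2 : b = - a - algebraMap F E s := by linear_combination h3
    rw [hb2, map_sub, map_neg, AlgHom.commutes, ← hb, hb2]; ring

lemma fb_iter {k : ℕ} {a : E} (h : fb F E k a = a) (n : ℕ) : fb F E (n * k) a = a := by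
  induction n with
  | zero => rw [zero_mul, fb]; rfl
  | succ n ih => rw [Nat.succ_mul, ← fb_add, h, ih]

end fieldfacts

lemma homs_prod {F R S K : Type} [Field F] [CommRing R] [Algebra F R] [CommRing S] [Algebra F S] [Field K] [Algebra F K]
    [Module.Finite F R] [Module.Finite F S] :
    Nat.card (R →ₐ[F] K) + Nat.card (S →ₐ[F] K) ≤ Nat.card (R × S →ₐ[F] K) := by
  rw [← Nat.card_sum]
  refine Nat.card_le_card_of_injective (Sum.elim (fun f : R →ₐ[F] K => f.comp (AlgHom.fst F R S))
    (fun f : S →ₐ[F] K => f.comp (AlgHom.snd F R S))) ?_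
  have key : ∀ (f : R →ₐ[F] K) (g : S →ₐ[F] K), f.comp (AlgHom.fst F R S) ≠ g.comp (AlgHom.snd F R S) := by
    intro f g h
    have h1 : f 1 = g 0 := AlgHom.congr_fun h (1, 0)
    rw [map_one, map_zero] at h1
    exact one_ne_zero h1
  rintro (f | f) (g | g) h
  · congr 1; ext x; exact AlgHom.congr_fun h (x, 0)
  · exact absurd h (key f g)
  · exact absurd h.symm (key g f)
  · congr 1; ext x; exact AlgHom.congr_fun h (0, x)

lemma ideal_fld (E : Type) [Field E] : Finite (Ideal E) ∧ Nat.card (Ideal E) = 2 := by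
  have e : Ideal E ≃ Bool := by
    classical
    exact IsSimpleOrder.equivBool
  exact ⟨Finite.of_equiv _ e.symm, by rw [Nat.card_congr e]; simp⟩

lemma ideal_prod {R S : Type} [CommRing R] [CommRing S] (h1 : Finite (Ideal R)) (h2 : Finite (Ideal S)) :
    Finite (Ideal (R × S)) ∧ Nat.card (Ideal (R × S)) = Nat.card (Ideal R) * Nat.card (Ideal S) := by
  have e := (Ideal.idealProdEquiv (R := R) (S := S)).toEquiv
  exact ⟨Finite.of_equiv _ e.symm, by rw [Nat.card_congr e, Nat.card_prod]⟩

lemma pow_congr_mod {M : Type} [Monoid M] {x : M} {N k i : ℕ} (hx : x ^ N = 1) (h : k ≡ i [MOD N]) : x ^ k = x ^ i := by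
  rw [pow_eq_pow_mod k hx, pow_eq_pow_mod i hx, h]

lemma two_ne_E {F E : Type} [Field F] [Field E] [Algebra F E] (h2 : (2 : F) ≠ 0) : (2 : E) ≠ 0 := by
  have : algebraMap F E 2 ≠ 0 := by rwa [Ne, map_eq_zero]
  rwa [map_ofNat] at this

lemma exists_fld {F E : Type} [Field F] [Fintype F] [Field E] [Algebra F E] [Finite E] (h2 : (2 : F) ≠ 0) {k : ℕ}
    (hk : 0 < k) (hd : Module.finrank F E = 2 * k) : ∃ P : PD F E, ∀ r, P.bar r = fb F E k r := by
  obtain ⟨j, hj0, hj⟩ := exists_j (F := F) (E := E) hk hd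
  obtain ⟨f, hf⟩ := exists_fun (F := F) (v := 2 * j) (mul_ne_zero (two_ne_E (F := F) h2) hj0)
  exact ⟨PD.fld (fb F E k) (fun r => by rw [fb_add, ← two_mul, ← hd, fb_fin]) j hj0 hj f hf, fun r => rfl⟩

lemma td1 {m : ℕ} (hm : 0 < m) (F : Type) [Field F] [Fintype F] (h2 : (2 : F) ≠ 0) :
    ∃ (E : Type) (_ : Field E) (_ : Algebra F E), Finite E ∧ ∃ T : TD m F E, ∀ r, T.bar r = fb F E m r := by
  obtain ⟨E, _, _, _, hd⟩ := exists_ext F (2 * m) (by omega)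
  obtain ⟨P, hP⟩ := exists_fld h2 hm hd
  obtain ⟨xi, h1, h3⟩ := unit_gen P.bar
  refine ⟨E, _, _, ‹_›, P.toTD hd (by rw [homs_fld, hd]) xi h1 (fun u hu => ?_), hP⟩
  obtain ⟨k, rfl⟩ := h3 u hu
  exact ⟨k * 2, pow_mul _ _ _⟩

lemma td3 {m : ℕ} (hm : 0 < m) (F : Type) [Field F] [Fintype F] :
    ∃ (E : Type) (_ : Field E) (_ : Algebra F E), Finite E ∧ Module.finrank F E = m ∧
    ∃ T : TD m F (E × E), ∀ r, T.bar r = (r.2, r.1) := by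
  obtain ⟨E, _, _, _, hd⟩ := exists_ext F m hm
  have : Module.Finite F E := Module.Finite.of_finite
  obtain ⟨f, hf⟩ := exists_fun (F := F) (v := (1 : E)) one_ne_zero
  obtain ⟨g, g', hg, hgen⟩ := units_gen E
  refine ⟨E, _, _, ‹_›, hd, (PD.swp f hf).toTD (by rw [Module.finrank_prod, hd, two_mul]) ?_ (g, g') ?_ ?_, fun r => rfl⟩
  · have := homs_prod (F := F) (R := E) (S := E) (K := AlgebraicClosure F)
    rw [homs_fld, hd] at this
    omega
  · exact Prod.ext hg ((mul_comm _ _).trans hg)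
  · intro u hu
    have hu1 : u.1 * u.2 = 1 := congrArg Prod.fst hu
    obtain ⟨k, hk⟩ := hgen u.1 (left_ne_zero_of_mul_eq_one hu1)
    have hk' : g' ^ k = u.2 := by
      have e : u.1 * g' ^ k = 1 := by rw [← hk, ← mul_pow, hg, one_pow]
      exact mul_left_cancel₀ (left_ne_zero_of_mul_eq_one hu1) (e.trans hu1.symm)
    refine ⟨k * 2, ?_⟩
    rw [pow_mul]
    congr 1
    exact Prod.ext hk hk'

lemma gcd_dvd_two {q n : ℕ} (hq : 1 ≤ q) : Nat.gcd (q ^ n + 1) (q - 1) ∣ 2 := by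
  have h1 : q - 1 ∣ q ^ n - 1 := by simpa using Nat.sub_dvd_pow_sub_pow q 1 n
  have h2 := (Nat.gcd_dvd_right (q ^ n + 1) (q - 1)).trans h1
  have h3 := Nat.gcd_dvd_left (q ^ n + 1) (q - 1)
  have h4 : 1 ≤ q ^ n := Nat.one_le_pow _ _ hq
  have := Nat.dvd_sub h3 h2
  rwa [show q ^ n + 1 - (q ^ n - 1) = 2 by omega] at this

lemma td2 {m : ℕ} (hm : 2 ≤ m) (F : Type) [Field F] [Fintype F] (h2 : (2 : F) ≠ 0) :
    ∃ (E : Type) (_ : Field E) (_ : Algebra F E), Finite E ∧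
    ∃ T : TD m F (E × (F × F)), ∃ b : E → E, ∀ r, T.bar r = (b r.1, (r.2.2, r.2.1)) := by
  obtain ⟨E, _, _, _, hd⟩ := exists_ext F (2 * (m - 1)) (by omega)
  have : Module.Finite F E := Module.Finite.of_finite
  obtain ⟨P, hP⟩ := exists_fld h2 (by omega) hd
  obtain ⟨xi, h1, h3⟩ := unit_gen P.bar
  obtain ⟨g, g', hg, hgen⟩ := units_gen F
  refine ⟨E, _, _, ‹_›, (P.prod (PD.swp (F := F) (E := F) LinearMap.id one_ne_zero)).toTD ?_ ?_ (xi, (g, g')) ?_ ?_,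
    P.bar, fun r => rfl⟩
  · rw [Module.finrank_prod, Module.finrank_prod, hd, Module.finrank_self]; omega
  · have e1 := homs_prod (F := F) (R := E) (S := F × F) (K := AlgebraicClosure F)
    have e2 := homs_prod (F := F) (R := F) (S := F) (K := AlgebraicClosure F)
    rw [homs_fld, hd] at e1
    rw [homs_fld, Module.finrank_self] at e2
    omega
  · exact Prod.ext h1 (Prod.ext hg ((mul_comm _ _).trans hg))
  · intro u hu
    have hu0 : u.1 * P.bar u.1 = 1 := congrArg Prod.fst hu
    have hu1 : u.2.1 * u.2.2 = 1 := congrArg (fun x => x.2.1) hu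
    have n1 := left_ne_zero_of_mul_eq_one hu1
    obtain ⟨i, hi⟩ := h3 u.1 hu0
    obtain ⟨l, hl⟩ := hgen u.2.1 n1
    have ox : xi ^ (Fintype.card F ^ (m - 1) + 1) = 1 := by
      rw [hP, fb_apply] at h1
      rw [pow_succ', h1]
    have og : g ^ (Fintype.card F - 1) = 1 := FiniteField.pow_card_sub_one_eq_one g (left_ne_zero_of_mul_eq_one hg)
    have hc : 2 * i ≡ 2 * l [MOD Nat.gcd (Fintype.card F ^ (m - 1) + 1) (Fintype.card F - 1)] := by
      have hd2 := gcd_dvd_two (q := Fintype.card F) (n := m - 1) Fintype.card_pos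
      exact Nat.ModEq.trans ((Nat.modEq_zero_iff_dvd).2 (hd2.mul_right _)) ((Nat.modEq_zero_iff_dvd).2 (hd2.mul_right _)).symm
    obtain ⟨k, hk1, hk2⟩ := Nat.chineseRemainder' hc
    have e1 : xi ^ k = u.1 ^ 2 := by rw [pow_congr_mod ox hk1, ← hi, ← pow_mul, mul_comm]
    have e2 : g ^ k = u.2.1 ^ 2 := by rw [pow_congr_mod og hk2, ← hl, ← pow_mul, mul_comm]
    have e3 : g' ^ k = u.2.2 ^ 2 := by
      have e : u.2.1 ^ 2 * g' ^ k = 1 := by rw [← e2, ← mul_pow, hg, one_pow]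
      have e' : u.2.1 ^ 2 * u.2.2 ^ 2 = 1 := by rw [← mul_pow, hu1, one_pow]
      exact mul_left_cancel₀ (pow_ne_zero 2 n1) (e.trans e'.symm)
    exact ⟨k, Prod.ext e1 (Prod.ext e2 e3)⟩

section types
variable {m : ℕ} {F : Type} [Field F]

/-- has an eigenvector -/
def EV (y : Mt m F) : Prop := ∃ v, v ≠ 0 ∧ ∃ c : F, y *ᵥ v = c • v
/-- has an invariant hyperbolic plane -/
def PL (y : Mt m F) : Prop := ∃ a b, SB a b ≠ 0 ∧ y *ᵥ a ∈ Submodule.span F {a, b} ∧ y *ᵥ b ∈ Submodule.span F {a, b}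

lemma span_pair_stable {y : Mt m F} {a b : Ix m → F} (ha : y *ᵥ a ∈ Submodule.span F {a, b})
    (hb : y *ᵥ b ∈ Submodule.span F {a, b}) : ∀ u ∈ Submodule.span F {a, b}, y *ᵥ u ∈ Submodule.span F {a, b} := by
  intro u hu
  obtain ⟨s, t, rfl⟩ := Submodule.mem_span_pair.1 hu
  rw [mulVec_add, mulVec_smul, mulVec_smul]
  exact Submodule.add_mem _ (Submodule.smul_mem _ _ ha) (Submodule.smul_mem _ _ hb)

lemma dich {y : Mt m F} (he : ¬ EV y) {a b w : Ix m → F} (hw : w ≠ 0) (h1 : w ∈ Submodule.span F {a, b})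
    (h2 : y *ᵥ w ∈ Submodule.span F {a, b}) (U : Submodule F (Ix m → F)) (hwU : w ∈ U) (hyU : y *ᵥ w ∈ U) : a ∈ U ∧ b ∈ U := by
  obtain ⟨α, β, h1⟩ := Submodule.mem_span_pair.1 h1
  obtain ⟨γ, δ, h2⟩ := Submodule.mem_span_pair.1 h2
  by_cases hD : α * δ - β * γ = 0
  · exfalso
    have e1 : α • (y *ᵥ w) = γ • w := by
      rw [← h2, ← h1]; ext i
      simp only [Pi.smul_apply, Pi.add_apply, smul_eq_mul]
      linear_combination hD * b i
    have e2 : β • (y *ᵥ w) = δ • w := by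
      rw [← h2, ← h1]; ext i
      simp only [Pi.smul_apply, Pi.add_apply, smul_eq_mul]
      linear_combination - hD * a i
    by_cases hα : α = 0
    · by_cases hβ : β = 0
      · apply hw; rw [← h1, hα, hβ]; simp
      · exact he ⟨w, hw, β⁻¹ * δ, by rw [mul_smul, ← e2, smul_smul, inv_mul_cancel₀ hβ, one_smul]⟩
    · exact he ⟨w, hw, α⁻¹ * γ, by rw [mul_smul, ← e1, smul_smul, inv_mul_cancel₀ hα, one_smul]⟩
  · have ea : a = (α * δ - β * γ)⁻¹ • (δ • w - β • (y *ᵥ w)) := by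
      rw [← h2, ← h1, eq_inv_smul_iff₀ hD]; ext i
      simp only [Pi.smul_apply, Pi.add_apply, Pi.sub_apply, smul_eq_mul]; ring
    have eb : b = (α * δ - β * γ)⁻¹ • (α • (y *ᵥ w) - γ • w) := by
      rw [← h2, ← h1, eq_inv_smul_iff₀ hD]; ext i
      simp only [Pi.smul_apply, Pi.add_apply, Pi.sub_apply, smul_eq_mul]; ring
    refine ⟨?_, ?_⟩
    · rw [ea]; exact U.smul_mem _ (U.sub_mem (U.smul_mem _ hwU) (U.smul_mem _ hyU))
    · rw [eb]; exact U.smul_mem _ (U.sub_mem (U.smul_mem _ hyU) (U.smul_mem _ hwU))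

lemma plane_line {y : Mt m F} (he : ¬ EV y) (hp : ¬ PL y) {a b : Ix m → F} (hab : SB a b ≠ 0)
    (U : Submodule F (Ix m → F)) (hU : ∀ u ∈ U, y *ᵥ u ∈ U) (hle : ∀ u ∈ U, u ∈ Submodule.span F {a, b}) : ∀ u ∈ U, u = 0 := by
  intro u hu
  by_contra h0
  obtain ⟨ha, hb⟩ := dich he h0 (hle u hu) (hle _ (hU u hu)) U hu (hU u hu)
  exact hp ⟨a, b, hab, hle _ (hU _ ha), hle _ (hU _ hb)⟩

/-- projection -/
noncomputable def prj (a b : Ix m → F) : (Ix m → F) →ₗ[F] (Ix m → F) where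
  toFun v := (SB v b / SB a b) • a - (SB v a / SB a b) • b
  map_add' u v := by rw [SB_add_left, SB_add_left, add_div, add_div]; module
  map_smul' c v := by
    rw [SB_smul_left, SB_smul_left, mul_div_assoc, mul_div_assoc, RingHom.id_apply]; module

lemma prj_comm {y : symplecticGroup (Fin m) F} {a b : Ix m → F} (hab : SB a b ≠ 0)
    (ha : (y : Mt m F) *ᵥ a ∈ Submodule.span F {a, b})
    (hb : (y : Mt m F) *ᵥ b ∈ Submodule.span F {a, b}) :
    LinearMap.toMatrix' (prj a b) * (y : Mt m F) = (y : Mt m F) * LinearMap.toMatrix' (prj a b) := by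
  obtain ⟨s, t, ha⟩ := Submodule.mem_span_pair.1 ha
  obtain ⟨s', t', hb⟩ := Submodule.mem_span_pair.1 hb
  have hdet : s * t' - t * s' = 1 := by
    have := SB_Sp y a b
    rw [← ha, ← hb] at this
    simp only [SB_add_left, SB_add_right, SB_smul_left, SB_smul_right, SB_self] at this
    rw [SB_swap b a] at this
    have h : (s * t' - t * s' - 1) * SB a b = 0 := by linear_combination this
    rcases mul_eq_zero.1 h with h | h
    · linear_combination h
    · exact absurd h hab
  have key : ∀ v, (LinearMap.toMatrix' (prj a b) * (y : Mt m F)) *ᵥ v = ((y : Mt m F) * LinearMap.toMatrix' (prj a b)) *ᵥ v := by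
    intro v
    rw [← mulVec_mulVec, ← mulVec_mulVec, LinearMap.toMatrix'_mulVec, LinearMap.toMatrix'_mulVec]
    change (SB ((y : Mt m F) *ᵥ v) b / SB a b) • a - (SB ((y : Mt m F) *ᵥ v) a / SB a b) • b =
      (y : Mt m F) *ᵥ ((SB v b / SB a b) • a - (SB v a / SB a b) • b)
    rw [mulVec_sub, mulVec_smul, mulVec_smul, ← ha, ← hb, ← SB_Sp y v b, ← SB_Sp y v a, ← ha, ← hb]
    simp only [SB_add_right, SB_smul_right]
    ext i
    simp only [Pi.smul_apply, Pi.add_apply, Pi.sub_apply, smul_eq_mul]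
    field_simp
    linear_combination (- SB ((y : Mt m F) *ᵥ v) b * a i + SB ((y : Mt m F) *ᵥ v) a * b i) * hdet
  exact Matrix.ext_of_mulVec_single fun i => key _

end types

section quads
variable {F R : Type} [Field F] [CommRing R] [Algebra F R]

lemma fz {D : Subalgebra F R} (hD : IsField D) {d w : R} (hd : d ∈ D) (hw : w ≠ 0) (h : d * w = 0) : d = 0 := by
  by_contra h0
  obtain ⟨e, he⟩ := hD.mul_inv_cancel (a := ⟨d, hd⟩) (by intro e; exact h0 (congrArg Subtype.val e))
  have he' : d * (e : R) = 1 := congrArg Subtype.val he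
  apply hw
  linear_combination (e : R) * h - w * he'

lemma quad {D : Subalgebra F R} (hD : IsField D) {r w z : R} {s t s' t' : F} (hr : r ∈ D) (hw : w ≠ 0)
    (h1 : r * w = s • w + t • z) (h2 : r * z = s' • w + t' • z) :
    r * r + algebraMap F R (-(s + t')) * r + algebraMap F R (s * t' - t * s') = 0 := by
  refine fz hD ?_ hw ?_
  · exact D.add_mem (D.add_mem (D.mul_mem hr hr) (D.mul_mem (D.algebraMap_mem _) hr)) (D.algebraMap_mem _)
  · simp only [Algebra.smul_def] at h1 h2
    simp only [map_neg, map_add, map_sub, map_mul]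
    linear_combination (r - algebraMap F R t') * h1 + algebraMap F R t * h2

end quads

section hyps
variable {m : ℕ} {F R : Type} [Field F] [CommRing R] [Algebra F R]

/-- transported plane relations -/
lemma plane_rel (θ : R ≃ₗ[F] (Ix m → F)) {y : Mt m F} {a b : Ix m → F}
    (ha : y *ᵥ a ∈ Submodule.span F {a, b}) (hb : y *ᵥ b ∈ Submodule.span F {a, b}) {r : R}
    (h : ∀ U : Submodule F (Ix m → F), (∀ u ∈ U, y *ᵥ u ∈ U) → ∀ u ∈ U, rho θ r *ᵥ u ∈ U) :
    ∃ s t s' t' : F, r * θ.symm a = s • θ.symm a + t • θ.symm b ∧ r * θ.symm b = s' • θ.symm a + t' • θ.symm b := by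
  have h1 := h _ (span_pair_stable ha hb)
  obtain ⟨s, t, e1⟩ := Submodule.mem_span_pair.1 (h1 a (Submodule.subset_span (by simp)))
  obtain ⟨s', t', e2⟩ := Submodule.mem_span_pair.1 (h1 b (Submodule.subset_span (by simp)))
  refine ⟨s, t, s', t', ?_, ?_⟩
  · apply θ.injective
    rw [← rho_mulVec, map_add, map_smul, map_smul, LinearEquiv.apply_symm_apply, LinearEquiv.apply_symm_apply, e1]
  · apply θ.injective
    rw [← rho_mulVec, map_add, map_smul, map_smul, LinearEquiv.apply_symm_apply, LinearEquiv.apply_symm_apply, e2]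

end hyps

lemma app1 (m : ℕ) (hm : 0 < m) : ∃ q0 : ℕ, ∀ (F : Type) [Field F] [Fintype F], (2 : F) ≠ 0 → q0 ≤ Fintype.card F →
    ∃ x : symplecticGroup (Fin m) F, ∀ y : symplecticGroup (Fin m) F, Gen (y : Mt m F) →
    (EV (y : Mt m F) ∨ (Even m ∧ PL (y : Mt m F))) → Subgroup.closure {x, y} = ⊤ := by
  obtain ⟨q0, H⟩ := crit m hm
  refine ⟨q0, fun F _ _ h2 hq => ?_⟩
  obtain ⟨E, _, _, _, T, hT⟩ := td1 hm F h2
  obtain ⟨θ, hθ⟩ := T.frame hm h2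
  refine ⟨_, fun y hy ht => H F E h2 hq T θ hθ y hy (ideal_fld E).1 (by rw [(ideal_fld E).2]; norm_num)
    (fun I _ => I.eq_bot_or_top) ?_⟩
  intro D hD hD2 r hr
  have fin : ∀ (w : E) (c : F), w ≠ 0 → r * w = c • w → ∃ c : F, r = algebraMap F E c := by
    intro w c hw e
    rw [Algebra.smul_def] at e
    exact ⟨c, mul_right_cancel₀ hw e⟩
  rcases ht with ⟨v, hv, c, hc⟩ | ⟨he, a, b, hab, ha, hb⟩
  · have h1 := hD2 r hr (Submodule.span F {v}) (by
      intro u hu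
      obtain ⟨k, rfl⟩ := Submodule.mem_span_singleton.1 hu
      rw [mulVec_smul, hc]
      exact Submodule.smul_mem _ _ (Submodule.smul_mem _ _ (Submodule.mem_span_singleton_self v))) v
        (Submodule.mem_span_singleton_self v)
    obtain ⟨k, hk⟩ := Submodule.mem_span_singleton.1 h1
    refine fin (θ.symm v) k (by simpa using hv) (θ.injective ?_)
    rw [← rho_mulVec, map_smul, LinearEquiv.apply_symm_apply, hk]
  · obtain ⟨s, t, s', t', e1, e2⟩ := plane_rel θ ha hb (hD2 r hr)
    have ha0 : θ.symm a ≠ 0 := by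
      intro h
      apply hab
      have : a = 0 := by simpa using h
      rw [this]; simp [SB]
    have hq2 := quad_fb (quad hD hr ha0 e1 e2)
    have hbar : T.bar r = r := by
      obtain ⟨k, hk⟩ := he
      rw [hT, hk, ← two_mul, mul_comm]
      exact fb_iter hq2 k
    have h0 : SB (θ (r * θ.symm a)) (θ (θ.symm a)) = 0 := by
      have e : SB (θ (r * θ.symm a)) (θ (θ.symm a)) = SB (θ (θ.symm a)) (θ (r * θ.symm a)) := by
        rw [hθ, hθ, map_mul T.bar, hbar]; congr 1; ring
      have h3 := SB_swap (θ (r * θ.symm a)) (θ (θ.symm a))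
      exact half h2 (by linear_combination h3 + e)
    rw [e1, map_add, map_smul, map_smul, LinearEquiv.apply_symm_apply, LinearEquiv.apply_symm_apply, SB_add_left, SB_smul_left,
      SB_smul_left, SB_self, SB_swap b a, mul_zero, zero_add] at h0
    have ht : t = 0 := (mul_eq_zero.1 h0).resolve_right (neg_ne_zero.2 hab)
    rw [ht, zero_smul, add_zero] at e1
    exact fin _ s ha0 e1

/-- transported ideal -/
def UI {m : ℕ} {F R : Type} [Field F] [CommRing R] [Algebra F R] (θ : R ≃ₗ[F] (Ix m → F)) (I : Ideal R) :
    Submodule F (Ix m → F) := (I.restrictScalars F).comap (θ.symm : (Ix m → F) →ₗ[F] R)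

lemma mem_UI {m : ℕ} {F R : Type} [Field F] [CommRing R] [Algebra F R] (θ : R ≃ₗ[F] (Ix m → F)) (I : Ideal R)
    (u : Ix m → F) : u ∈ UI θ I ↔ θ.symm u ∈ I := Iff.rfl

lemma UI_stable {m : ℕ} {F R : Type} [Field F] [CommRing R] [Algebra F R] (θ : R ≃ₗ[F] (Ix m → F)) (I : Ideal R)
    {y : Mt m F} (h : ∀ u ∈ I, θ.symm (y *ᵥ θ u) ∈ I) : ∀ u ∈ UI θ I, y *ᵥ u ∈ UI θ I := by
  intro u hu
  have := h _ ((mem_UI θ I u).1 hu)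
  rwa [LinearEquiv.apply_symm_apply] at this

lemma app3 (m : ℕ) (hm : 0 < m) : ∃ q0 : ℕ, ∀ (F : Type) [Field F] [Fintype F], (2 : F) ≠ 0 → q0 ≤ Fintype.card F →
    ∃ x : symplecticGroup (Fin m) F, ∀ y : symplecticGroup (Fin m) F, Gen (y : Mt m F) →
    Odd m → ¬ EV (y : Mt m F) → PL (y : Mt m F) → Subgroup.closure {x, y} = ⊤ := by
  obtain ⟨q0, H⟩ := crit m hm
  refine ⟨q0, fun F _ _ h2 hq => ?_⟩
  obtain ⟨E, _, _, _, hdim, T, hT⟩ := td3 hm F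
  obtain ⟨θ, hθ⟩ := T.frame hm h2
  have hI := ideal_prod (ideal_fld E).1 (ideal_fld E).1
  refine ⟨_, fun y hy hodd hev hpl => H F (E × E) h2 hq T θ hθ y hy hI.1
    (by rw [hI.2, (ideal_fld E).2]; norm_num) ?_ ?_⟩
  · intro I hst
    obtain ⟨a, b, hab, ha, hb⟩ := hpl
    by_contra hcon
    push Not at hcon
    obtain ⟨hbot, htop⟩ := hcon
    have l1 : ∀ u ∈ I, u.1 ≠ 0 → ((1, 0) : E × E) ∈ I := by
      intro u hu h0
      have := I.mul_mem_left ((u.1⁻¹, 0) : E × E) hu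
      rwa [show ((u.1⁻¹, 0) : E × E) * u = (1, 0) from Prod.ext (inv_mul_cancel₀ h0) (zero_mul _)] at this
    have l2 : ∀ u ∈ I, u.2 ≠ 0 → ((0, 1) : E × E) ∈ I := by
      intro u hu h0
      have := I.mul_mem_left ((0, u.2⁻¹) : E × E) hu
      rwa [show ((0, u.2⁻¹) : E × E) * u = (0, 1) from Prod.ext (zero_mul _) (inv_mul_cancel₀ h0)] at this
    have l3 : ∀ u ∈ I, ∀ v ∈ I, u.1 = 0 ∨ v.2 = 0 := by
      intro u hu v hv
      by_contra h
      push Not at h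
      have := I.add_mem (l1 u hu h.1) (l2 v hv h.2)
      rw [show ((1, 0) : E × E) + (0, 1) = 1 from Prod.ext (add_zero _) (zero_add _)] at this
      exact htop ((Ideal.eq_top_iff_one I).2 this)
    have iso : ∀ u ∈ I, ∀ v ∈ I, u * T.bar v = 0 := by
      intro u hu v hv
      rw [hT]
      refine Prod.ext ?_ ?_
      · change u.1 * v.2 = 0
        rcases l3 u hu v hv with h | h <;> simp [h]
      · change u.2 * v.1 = 0
        rcases l3 v hv u hu with h | h <;> simp [h]
    have iso' : ∀ u ∈ UI θ I, ∀ v ∈ UI θ I, SB u v = 0 := by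
      intro u hu v hv
      have := hθ (θ.symm u) (θ.symm v)
      rwa [iso _ ((mem_UI θ I u).1 hu) _ ((mem_UI θ I v).1 hv), map_zero, LinearEquiv.apply_symm_apply, LinearEquiv.apply_symm_apply] at this
    have hU := UI_stable θ I hst
    have hC : Commute (LinearMap.toMatrix' (prj a b)) (y : Mt m F) := prj_comm hab ha hb
    have hCU := gen_stable hy (hC.pow_right (expM m)) (UI θ I) (pow_stable hU _)
    have hzero : ∀ u ∈ UI θ I, SB u a = 0 ∧ SB u b = 0 := by
      intro u hu
      have h1 := hCU u hu
      rw [LinearMap.toMatrix'_mulVec] at h1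
      have hw : prj a b u ∈ Submodule.span F {a, b} := by
        change (SB u b / SB a b) • a - (SB u a / SB a b) • b ∈ _
        exact Submodule.sub_mem _ (Submodule.smul_mem _ _ (Submodule.subset_span (by simp)))
          (Submodule.smul_mem _ _ (Submodule.subset_span (by simp)))
      have h0 : prj a b u = 0 := by
        by_contra h0
        obtain ⟨haU, hbU⟩ := dich hev h0 hw (span_pair_stable ha hb _ hw) (UI θ I) h1 (hU _ h1)
        exact hab (iso' _ haU _ hbU)
      have h0' : (SB u b / SB a b) • a - (SB u a / SB a b) • b = 0 := h0
      constructor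
      · have := congrArg (fun v => SB a v) h0'
        simp only [SB_sub_right, SB_smul_right, SB_self] at this
        rw [div_mul_cancel₀ _ hab] at this
        simpa [SB] using this
      · have := congrArg (fun v => SB v b) h0'
        simp only [SB_sub_left, SB_smul_left, SB_self] at this
        rw [div_mul_cancel₀ _ hab] at this
        simpa [SB] using this
    have perp : ∀ c : Ix m → F, (∀ u ∈ UI θ I, SB u c = 0) → ∀ u ∈ I, u * T.bar (θ.symm c) = 0 := by
      intro c hc u hu
      refine T.nd _ fun r => ?_
      have h1 := hc (θ (r * u)) (by rw [mem_UI, LinearEquiv.symm_apply_apply]; exact I.mul_mem_left _ hu)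
      have h3 := hθ (r * u) (θ.symm c)
      rw [LinearEquiv.apply_symm_apply, h1] at h3
      rw [h3]; congr 1; ring
    obtain ⟨u, hu, hu0⟩ := Submodule.exists_mem_ne_zero_of_ne_bot hbot
    have pa := perp a (fun u hu => (hzero u hu).1) u hu
    have pb := perp b (fun u hu => (hzero u hu).2) u hu
    rw [hT] at pa pb
    have pa1 : u.1 * (θ.symm a).2 = 0 := congrArg Prod.fst pa
    have pa2 : u.2 * (θ.symm a).1 = 0 := congrArg Prod.snd pa
    have pb1 : u.1 * (θ.symm b).2 = 0 := congrArg Prod.fst pb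
    have pb2 : u.2 * (θ.symm b).1 = 0 := congrArg Prod.snd pb
    apply hab
    have h3 := hθ (θ.symm a) (θ.symm b)
    rw [LinearEquiv.apply_symm_apply, LinearEquiv.apply_symm_apply, hT] at h3
    rw [h3]
    have : θ.symm a * ((θ.symm b).2, (θ.symm b).1) = 0 := by
      refine Prod.ext ?_ ?_
      · change (θ.symm a).1 * (θ.symm b).2 = 0
        by_cases h1 : u.1 = 0
        · have h4 : u.2 ≠ 0 := fun h => hu0 (Prod.ext h1 h)
          rw [(mul_eq_zero.1 pa2).resolve_left h4, zero_mul]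
        · rw [(mul_eq_zero.1 pb1).resolve_left h1, mul_zero]
      · change (θ.symm a).2 * (θ.symm b).1 = 0
        by_cases h1 : u.1 = 0
        · have h4 : u.2 ≠ 0 := fun h => hu0 (Prod.ext h1 h)
          rw [(mul_eq_zero.1 pb2).resolve_left h4, mul_zero]
        · rw [(mul_eq_zero.1 pa1).resolve_left h1, zero_mul]
    rw [this, map_zero]
  · intro D hD hD2 r hr
    obtain ⟨a, b, hab, ha, hb⟩ := hpl
    obtain ⟨s, t, s', t', e1, e2⟩ := plane_rel θ ha hb (hD2 r hr)
    have ha0 : θ.symm a ≠ 0 := by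
      intro h
      apply hab
      have : a = 0 := by simpa using h
      rw [this]; simp [SB]
    have q1 := congrArg Prod.fst (quad hD hr ha0 e1 e2)
    have hq2 : fb F E 2 r.1 = r.1 := quad_fb q1
    have hqm : fb F E m r.1 = r.1 := by
      have := fb_fin (F := F) r.1
      rwa [hdim] at this
    obtain ⟨k, hk⟩ := hodd
    have h1 : fb F E 1 r.1 = r.1 := by
      have e := fb_iter hq2 k
      rw [← e, fb_add, show 1 + k * 2 = m by omega, hqm, e]
    obtain ⟨c, hc⟩ := mem_base h1
    refine ⟨c, ?_⟩
    have := fz hD (D.sub_mem hr (D.algebraMap_mem c)) (w := ((1, 0) : E × E))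
      (fun h => one_ne_zero (congrArg Prod.fst h)) (by
        refine Prod.ext ?_ (mul_zero _)
        change (r.1 - algebraMap F E c) * 1 = 0
        rw [hc]; simp)
    exact sub_eq_zero.1 this

lemma app2 (m : ℕ) (hm : 2 ≤ m) : ∃ q0 : ℕ, ∀ (F : Type) [Field F] [Fintype F], (2 : F) ≠ 0 → q0 ≤ Fintype.card F →
    ∃ x : symplecticGroup (Fin m) F, ∀ y : symplecticGroup (Fin m) F, Gen (y : Mt m F) →
    ¬ EV (y : Mt m F) → ¬ PL (y : Mt m F) → Subgroup.closure {x, y} = ⊤ := by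
  obtain ⟨q0, H⟩ := crit m (by omega)
  refine ⟨q0, fun F _ _ h2 hq => ?_⟩
  obtain ⟨E, _, _, _, T, bE, hT⟩ := td2 hm F h2
  obtain ⟨θ, hθ⟩ := T.frame (by omega) h2
  have hI2 := ideal_prod (ideal_fld F).1 (ideal_fld F).1
  have hI := ideal_prod (ideal_fld E).1 hI2.1
  have b1 : bE 1 = 1 := by
    have := (hT 1).symm.trans (map_one T.bar)
    exact congrArg Prod.fst this
  have b0 : bE 0 = 0 := by
    have := (hT 0).symm.trans (map_zero T.bar)
    exact congrArg Prod.fst this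
  refine ⟨_, fun y hy hev hpl => H F (E × (F × F)) h2 hq T θ hθ y hy hI.1
    (by rw [hI.2, hI2.2, (ideal_fld E).2, (ideal_fld F).2]) ?_ ?_⟩
  · intro I hst
    have hU := UI_stable θ I hst
    set e0 : E × (F × F) := (1, (0, 0)) with he0
    set e1 : E × (F × F) := (0, (1, 0)) with he1
    set e2 : E × (F × F) := (0, (0, 1)) with he2
    have hbar0 : T.bar e0 = e0 := by rw [hT]; exact Prod.ext b1 rfl
    have hbar1 : T.bar e1 = e2 := by rw [hT]; exact Prod.ext b0 rfl
    have hbar2 : T.bar e2 = e1 := by rw [hT]; exact Prod.ext b0 rfl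
    have hlam : T.lam e1 ≠ 0 := by
      intro h
      have := T.nd e1 (fun u => by
        have : e1 * u = u.2.1 • e1 := by
          refine Prod.ext ?_ (Prod.ext ?_ ?_)
          · change 0 * u.1 = u.2.1 • 0; simp
          · change 1 * u.2.1 = u.2.1 * 1; ring
          · change 0 * u.2.2 = u.2.1 * 0; ring
        rw [this, map_smul, h, smul_zero])
      exact one_ne_zero (congrArg (fun x => x.2.1) this)
    have hS : SB (θ e1) (θ e2) ≠ 0 := by
      rw [hθ, hbar2]
      rwa [show e1 * e1 = e1 from Prod.ext (mul_zero _) (Prod.ext (mul_one _) (mul_zero _))]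
    have hspan : ∀ v : Ix m → F, (θ.symm v).1 = 0 → v ∈ Submodule.span F {θ e1, θ e2} := by
      intro v hv
      rw [Submodule.mem_span_pair]
      refine ⟨(θ.symm v).2.1, (θ.symm v).2.2, ?_⟩
      rw [← map_smul, ← map_smul, ← map_add, ← LinearEquiv.eq_symm_apply]
      refine Prod.ext ?_ (Prod.ext ?_ ?_)
      · change (θ.symm v).2.1 • (0 : E) + (θ.symm v).2.2 • (0 : E) = _
        rw [hv]; simp
      · change (θ.symm v).2.1 * 1 + (θ.symm v).2.2 * 0 = _
        ring
      · change (θ.symm v).2.1 * 0 + (θ.symm v).2.2 * 1 = _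
        ring
    by_cases h0 : e0 ∈ I
    · right
      let V : Submodule F (Ix m → F) :=
        { carrier := {v | ∀ u ∈ UI θ I, SB u v = 0}
          add_mem' := by
            intro a b ha hb u hu
            rw [SB_add_right, ha u hu, hb u hu, add_zero]
          zero_mem' := by intro u hu; simp [SB]
          smul_mem' := by
            intro c x hx u hu
            rw [SB_smul_right, hx u hu, mul_zero] }
      have hV : ∀ v, v ∈ V ↔ ∀ u ∈ UI θ I, SB u v = 0 := fun v => Iff.rfl
      have hVst : ∀ v ∈ V, (y : Mt m F) *ᵥ v ∈ V := by
        intro v hv u hu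
        have hfo : y ^ (orderOf y - 1) * y = 1 := by
          rw [← pow_succ, Nat.sub_add_cancel (orderOf_pos y), pow_orderOf_eq_one]
        have h3 := hv _ (pow_stable hU (orderOf y - 1) u hu)
        rw [← SB_Sp y] at h3
        rwa [mulVec_mulVec, ← pow_succ', Nat.sub_add_cancel (orderOf_pos y), ← SubmonoidClass.coe_pow, pow_orderOf_eq_one,
          OneMemClass.coe_one, one_mulVec] at h3
      have hVle : ∀ v ∈ V, v ∈ Submodule.span F {θ e1, θ e2} := by
        intro v hv
        apply hspan
        have h3 : e0 * T.bar (θ.symm v) = 0 := by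
          refine T.nd _ fun r => ?_
          have h1 := hv (θ (r * e0)) (by rw [mem_UI, LinearEquiv.symm_apply_apply]; exact I.mul_mem_left _ h0)
          have h3 := hθ (r * e0) (θ.symm v)
          rw [LinearEquiv.apply_symm_apply, h1] at h3
          rw [h3]; congr 1; ring
        have h4 := congrArg T.bar h3
        rw [map_mul T.bar, T.bb, hbar0, map_zero] at h4
        have h5 : 1 * (θ.symm v).1 = 0 := congrArg Prod.fst h4
        rwa [one_mul] at h5
      have hV0 := plane_line hev hpl hS V hVst hVle
      have m1 : e1 ∈ I := by
        by_contra hn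
        have : θ e2 ∈ V := by
          intro u hu
          have h3 := hθ (θ.symm u) e2
          rw [LinearEquiv.apply_symm_apply, hbar2] at h3
          rw [h3]
          by_cases hz : (θ.symm u).2.1 = 0
          · rw [show θ.symm u * e1 = 0 from Prod.ext (mul_zero _) (Prod.ext ((mul_one _).trans hz) (mul_zero _)), map_zero]
          · exfalso
            have := I.mul_mem_left ((0, ((θ.symm u).2.1⁻¹, 0)) : E × (F × F)) ((mem_UI θ I u).1 hu)
            rw [show ((0, ((θ.symm u).2.1⁻¹, 0)) : E × (F × F)) * θ.symm u = e1 from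
              Prod.ext (zero_mul _) (Prod.ext (inv_mul_cancel₀ hz) (zero_mul _))] at this
            exact hn this
        have h5 := hV0 _ this
        rw [LinearEquiv.map_eq_zero_iff] at h5
        exact one_ne_zero (congrArg (fun x => x.2.2) h5)
      have m2 : e2 ∈ I := by
        by_contra hn
        have : θ e1 ∈ V := by
          intro u hu
          have h3 := hθ (θ.symm u) e1
          rw [LinearEquiv.apply_symm_apply, hbar1] at h3
          rw [h3]
          by_cases hz : (θ.symm u).2.2 = 0
          · rw [show θ.symm u * e2 = 0 from Prod.ext (mul_zero _) (Prod.ext (mul_zero _) ((mul_one _).trans hz)), map_zero]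
          · exfalso
            have := I.mul_mem_left ((0, (0, (θ.symm u).2.2⁻¹)) : E × (F × F)) ((mem_UI θ I u).1 hu)
            rw [show ((0, (0, (θ.symm u).2.2⁻¹)) : E × (F × F)) * θ.symm u = e2 from
              Prod.ext (zero_mul _) (Prod.ext (zero_mul _) (inv_mul_cancel₀ hz))] at this
            exact hn this
        have h5 := hV0 _ this
        rw [LinearEquiv.map_eq_zero_iff] at h5
        exact one_ne_zero (congrArg (fun x => x.2.1) h5)
      rw [Ideal.eq_top_iff_one]
      have := I.add_mem (I.add_mem h0 m1) m2
      rwa [show e0 + e1 + e2 = 1 from Prod.ext (by simp [he0, he1, he2])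
        (Prod.ext (by simp [he0, he1, he2]) (by simp [he0, he1, he2]))] at this
    · left
      have hle : ∀ v ∈ UI θ I, v ∈ Submodule.span F {θ e1, θ e2} := by
        intro v hv
        apply hspan
        by_contra hz
        have := I.mul_mem_left (((θ.symm v).1⁻¹, (0, 0)) : E × (F × F)) ((mem_UI θ I v).1 hv)
        rw [show (((θ.symm v).1⁻¹, (0, 0)) : E × (F × F)) * θ.symm v = e0 from
          Prod.ext (inv_mul_cancel₀ hz) (Prod.ext (zero_mul _) (zero_mul _))] at this
        exact h0 this
      have hz := plane_line hev hpl hS (UI θ I) hU hle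
      rw [Submodule.eq_bot_iff]
      intro x hx
      have := hz (θ x) (by rwa [mem_UI, LinearEquiv.symm_apply_apply])
      rwa [LinearEquiv.map_eq_zero_iff] at this
  · intro D hD hD2 r hr
    refine ⟨r.2.1, ?_⟩
    have := fz hD (D.sub_mem hr (D.algebraMap_mem r.2.1)) (w := ((0, (1, 0)) : E × (F × F)))
      (fun h => one_ne_zero (congrArg (fun x => x.2.1) h)) (by
        refine Prod.ext (mul_zero _) (Prod.ext ?_ (mul_zero _))
        change (r.2.1 - r.2.1) * 1 = 0
        simp)
    exact sub_eq_zero.1 this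

section final
variable {m : ℕ} {F : Type} [Field F]

lemma cj_mulVec (y k : symplecticGroup (Fin m) F) (v : Ix m → F) :
    ((k * y * k⁻¹ : symplecticGroup (Fin m) F) : Mt m F) *ᵥ ((k : Mt m F) *ᵥ v) = (k : Mt m F) *ᵥ ((y : Mt m F) *ᵥ v) := by
  rw [mulVec_mulVec, mulVec_mulVec, ← Submonoid.coe_mul, inv_mul_cancel_right, Submonoid.coe_mul]

lemma Sp_inj (k : symplecticGroup (Fin m) F) {v : Ix m → F} (h : (k : Mt m F) *ᵥ v = 0) : v = 0 := by
  have h1 : ((k⁻¹ * k : symplecticGroup (Fin m) F) : Mt m F) *ᵥ v = 0 := by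
    rw [Submonoid.coe_mul, ← mulVec_mulVec, h, mulVec_zero]
  rwa [inv_mul_cancel, Submonoid.coe_one, one_mulVec] at h1

lemma EV_cj {y : symplecticGroup (Fin m) F} (h : EV (y : Mt m F)) (k : symplecticGroup (Fin m) F) :
    EV ((k * y * k⁻¹ : symplecticGroup (Fin m) F) : Mt m F) := by
  obtain ⟨v, hv, c, hc⟩ := h
  exact ⟨(k : Mt m F) *ᵥ v, fun h => hv (Sp_inj k h), c, by rw [cj_mulVec, hc, mulVec_smul]⟩

lemma PL_cj {y : symplecticGroup (Fin m) F} (h : PL (y : Mt m F)) (k : symplecticGroup (Fin m) F) :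
    PL ((k * y * k⁻¹ : symplecticGroup (Fin m) F) : Mt m F) := by
  obtain ⟨a, b, hab, ha, hb⟩ := h
  refine ⟨(k : Mt m F) *ᵥ a, (k : Mt m F) *ᵥ b, by rwa [SB_Sp], ?_, ?_⟩
  · obtain ⟨s, t, e⟩ := Submodule.mem_span_pair.1 ha
    rw [cj_mulVec, ← e, Submodule.mem_span_pair]
    exact ⟨s, t, by rw [mulVec_add, mulVec_smul, mulVec_smul]⟩
  · obtain ⟨s, t, e⟩ := Submodule.mem_span_pair.1 hb
    rw [cj_mulVec, ← e, Submodule.mem_span_pair]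
    exact ⟨s, t, by rw [mulVec_add, mulVec_smul, mulVec_smul]⟩

lemma cj_back {G : Type*} [Group G] (y k : G) : k⁻¹ * (k * y * k⁻¹) * k⁻¹⁻¹ = y := by group

lemma EV_cj_iff {y : symplecticGroup (Fin m) F} (k : symplecticGroup (Fin m) F) :
    EV ((k * y * k⁻¹ : symplecticGroup (Fin m) F) : Mt m F) ↔ EV (y : Mt m F) :=
  ⟨fun h => by have := EV_cj h k⁻¹; rwa [cj_back] at this, fun h => EV_cj h k⟩

lemma PL_cj_iff {y : symplecticGroup (Fin m) F} (k : symplecticGroup (Fin m) F) :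
    PL ((k * y * k⁻¹ : symplecticGroup (Fin m) F) : Mt m F) ↔ PL (y : Mt m F) :=
  ⟨fun h => by have := PL_cj h k⁻¹; rwa [cj_back] at this, fun h => PL_cj h k⟩

end final

lemma invGen_of {G : Type*} [Group G] {x y : G} (h : ∀ k : G, Subgroup.closure {x, k * y * k⁻¹} = ⊤) : InvGen x y := by
  intro g k
  have h1 := congrArg (Subgroup.map (MulAut.conj g).toMonoidHom) (h (g⁻¹ * k))
  rw [MonoidHom.map_closure, Subgroup.map_top_of_surjective _ (MulAut.conj g).surjective, Set.image_pair] at h1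
  have e1 : (MulAut.conj g).toMonoidHom x = g * x * g⁻¹ := rfl
  have e2 : (MulAut.conj g).toMonoidHom (g⁻¹ * k * y * (g⁻¹ * k)⁻¹) = k * y * k⁻¹ := by
    change g * (g⁻¹ * k * y * (g⁻¹ * k)⁻¹) * g⁻¹ = _
    group
  rwa [e1, e2] at h1

lemma main_exists (m : ℕ) (hm : 2 ≤ m) : ∃ q0 : ℕ, ∀ (F : Type) [Field F] [Fintype F], (2 : F) ≠ 0 → q0 ≤ Fintype.card F →
    ∃ A : Finset (symplecticGroup (Fin m) F), (Even m → A.card ≤ 2) ∧ (Odd m → A.card ≤ 3) ∧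
    ∀ y : symplecticGroup (Fin m) F, Gen (y : Mt m F) → ∃ x ∈ A, InvGen x y := by
  classical
  obtain ⟨q1, H1⟩ := app1 m (by omega)
  obtain ⟨q2, H2⟩ := app2 m hm
  obtain ⟨q3, H3⟩ := app3 m (by omega)
  refine ⟨max q1 (max q2 q3), fun F _ _ h2 hq => ?_⟩
  obtain ⟨x1, hx1⟩ := H1 F h2 (le_trans (by omega) hq)
  obtain ⟨x2, hx2⟩ := H2 F h2 (le_trans (by omega) hq)
  obtain ⟨x3, hx3⟩ := H3 F h2 (le_trans (by omega) hq)
  have c2 : ∀ y : symplecticGroup (Fin m) F, Gen (y : Mt m F) → ¬ EV (y : Mt m F) → ¬ PL (y : Mt m F) → InvGen x2 y := by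
    intro y hy h1 h3
    exact invGen_of fun k => hx2 _ (gen_cj hy k) (by rwa [EV_cj_iff]) (by rwa [PL_cj_iff])
  have c1 : ∀ y : symplecticGroup (Fin m) F, Gen (y : Mt m F) → (EV (y : Mt m F) ∨ (Even m ∧ PL (y : Mt m F))) → InvGen x1 y := by
    intro y hy h1
    exact invGen_of fun k => hx1 _ (gen_cj hy k) (by rwa [EV_cj_iff, PL_cj_iff])
  rcases Nat.even_or_odd m with he | ho
  · refine ⟨{x1, x2}, fun _ => Finset.card_le_two, fun h => absurd he (Nat.not_even_iff_odd.2 h), fun y hy => ?_⟩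
    by_cases t1 : EV (y : Mt m F) ∨ PL (y : Mt m F)
    · exact ⟨x1, by simp, c1 y hy (t1.imp_right fun h => ⟨he, h⟩)⟩
    · push Not at t1
      exact ⟨x2, by simp, c2 y hy t1.1 t1.2⟩
  · refine ⟨{x1, x2, x3}, fun h => absurd h (Nat.not_even_iff_odd.2 ho), fun _ => Finset.card_le_three, fun y hy => ?_⟩
    by_cases t1 : EV (y : Mt m F)
    · exact ⟨x1, by simp, c1 y hy (Or.inl t1)⟩
    by_cases t2 : PL (y : Mt m F)
    · exact ⟨x3, by simp, invGen_of fun k => hx3 _ (gen_cj hy k) ho (by rwa [EV_cj_iff]) (by rwa [PL_cj_iff])⟩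
    · exact ⟨x2, by simp, c2 y hy t1 t2⟩

theorem stmt_6 :
    ∀ m : ℕ, 2 ≤ m →
      ∃ C : ℝ, 0 < C ∧
        ∀ (F : Type) [Field F] [Fintype F], Odd (Fintype.card F) →
          ∃ A : Finset (Matrix.symplecticGroup (Fin m) F),
            (Even m → A.card ≤ 2) ∧ (Odd m → A.card ≤ 3) ∧
            (Nat.card {y : Matrix.symplecticGroup (Fin m) F //
                ∃ x ∈ A, InvGen x y} : ℝ) ≥
              (1 - C / Fintype.card F) *
                Nat.card (Matrix.symplecticGroup (Fin m) F) := by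
  intro m hm
  obtain ⟨q1, H⟩ := main_exists m hm
  obtain ⟨D, q2, hD⟩ := gen_count m
  refine ⟨(D : ℝ) + q1 + q2 + 1, by positivity, fun F _ _ hodd => ?_⟩
  have hqpos : (0 : ℝ) < Fintype.card F := by exact_mod_cast Fintype.card_pos
  have h2 : (2 : F) ≠ 0 := by
    intro h
    have hc : ringChar F = 2 := by
      have : ringChar F ∣ 2 := (ringChar.spec F 2).1 (by exact_mod_cast h)
      rcases (Nat.dvd_prime Nat.prime_two).1 this with h1 | h1
      · exact absurd h1 (CharP.ringChar_ne_one)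
      · exact h1
    have := (FiniteField.even_card_iff_char_two (F := F)).1 hc
    rw [Nat.odd_iff] at hodd
    omega
  by_cases hq : q1 ≤ Fintype.card F ∧ q2 ≤ Fintype.card F
  · obtain ⟨A, hA1, hA2, hA3⟩ := H F h2 hq.1
    refine ⟨A, hA1, hA2, ?_⟩
    classical
    have hcnt := hD F hq.2
    set N := Nat.card (symplecticGroup (Fin m) F) with hN
    set B := Nat.card {g : symplecticGroup (Fin m) F // ¬ Gen (g : Mt m F)} with hB
    set Gd := Nat.card {y : symplecticGroup (Fin m) F // ∃ x ∈ A, InvGen x y} with hGd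
    have hle : N ≤ Gd + B := by
      rw [hN, hGd, hB, ← Nat.card_congr (Equiv.sumCompl (fun y : symplecticGroup (Fin m) F => ∃ x ∈ A, InvGen x y)),
        Nat.card_sum]
      refine Nat.add_le_add_left ?_ _
      refine Nat.card_le_card_of_injective (fun y => ⟨y.1, fun hy => y.2 (hA3 y.1 hy)⟩) ?_
      intro a b hab
      exact Subtype.ext (Subtype.mk.inj hab)
    have h3 : (N : ℝ) ≤ Gd + B := by exact_mod_cast hle
    have h4 : (Fintype.card F : ℝ) * B ≤ D * N := by exact_mod_cast hcnt
    have h5 : (B : ℝ) ≤ D / Fintype.card F * N := by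
      rw [div_mul_eq_mul_div, le_div_iff₀ hqpos]; linarith
    have h6 : (D : ℝ) / Fintype.card F * N ≤ ((D : ℝ) + q1 + q2 + 1) / Fintype.card F * N := by
      gcongr
      have : (0 : ℝ) ≤ (q1 : ℝ) + q2 + 1 := by positivity
      linarith
    rw [ge_iff_le, sub_mul, one_mul]
    linarith
  · refine ⟨∅, by simp, by simp, ?_⟩
    have h3 : (1 : ℝ) - ((D : ℝ) + q1 + q2 + 1) / Fintype.card F ≤ 0 := by
      rw [sub_nonpos, one_le_div hqpos]
      have : Fintype.card F ≤ D + q1 + q2 + 1 := by omega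
      exact_mod_cast this
    exact le_trans (mul_nonpos_of_nonpos_of_nonneg h3 (Nat.cast_nonneg _)) (Nat.cast_nonneg _)
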